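/- For every f ∈ 𝒮 with logarithmic coefficients γ_n, the sharp inequality ∑_{n=1}^∞ (n/(2n−1)) |γ_n|² ≤ 2 log 2 holds; the inequality is strict unless f(z) = z/(1−e^{iθ}z)² for some θ ∈ ℝ. -/

import Mathlib

/-!
The weight splits as `n / (2n - 1) = 1/2 + (1/2) / (2n - 1)`, and `1 / (2n - 1)` is the integral of
`R ^ (2n - 2)` over `0 ≤ R ≤ 1`. Hence the inequality follows from the comparison
`∑ |γ_n|² R ^ (2n) ≤ ∑ R ^ (2n) / n²` with the Koebe function on every circle of radius `R < 1`
(`coeff_sum_le`), through `weighted_sum` and `∑ 1 / (n (2n - 1)) = 2 log 2` (`hasSum_log_two`).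

The comparison on circles is Baernstein's theorem on integral means (`mean_max_le`): for every real
`x` the mean of `max 0 (log |f| - x)` over `|z| = R` is at most that of the Koebe function. Convex
functions are superpositions of the functions `max 0 (s - x)` and affine ones (`mean_convex`), and
for the square function Parseval's identity, applied to `log |f| = log R + Re log (f z / z)`, turns
the comparison of means into one of coefficients.

For Baernstein's theorem, Cartan's identity (`circleAverage_grn`) expresses the mean of
`max 0 (log |f| - x)` as the mean over `|w| = e ^ x` of the truncated Green function
`max 0 (log R - log |f⁻¹ w|)` of the image domain. In the coordinate `s = log w` this Green
function is a nonnegative subharmonic function `U`, periodic on vertical lines. Its star function,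
at `(x, y)` the largest integral of `U` over a subset of measure `2y` of the line `Re s = x` modulo
the period, is compared with that of the Koebe function by a maximum principle on the strip
`0 ≤ y ≤ π` (`star_ineq`, from `no_interior_max` and `no_boundary_max`). Subharmonicity of the star
function is used in an approximate form: translating an extremal set by `±α` and replacing the two
translates by their union and intersection moves mass at least `(1 - η) α` (`shift_estimate`,
`shifted_le_star`).

In the case of equality the integrals over `R` agree as well, so the continuous integrands agree,
and at `R = 0` this gives `|γ_1| = 1`. The mean of `1 / |f|` over `|z| = R` is nonincreasing in
`R`, again by Cartan's identity (`mean_neg_log_anti`). For the coefficients `c_n` of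
`(f z / z) ^ (-1/2)` this says `|c_1|² + |c_n|² ≤ 1` for `n ≥ 2` (`area_coeff`). As `c_1 = -γ_1`,
all `c_n` with `n ≥ 2` vanish and `f` is a rotation of the Koebe function (`eqOn_koebe_of_norm`).
-/

open Complex Metric Real

/-- The class `𝒮` of normalized univalent (analytic and injective) functions
on the unit disk. -/
def InClassS (f : ℂ → ℂ) : Prop :=
  AnalyticOnNhd ℂ f (ball (0 : ℂ) 1) ∧ Set.InjOn f (ball (0 : ℂ) 1) ∧
    f 0 = 0 ∧ deriv f 0 = 1

/-- `γ` are the logarithmic coefficients of `f`: there is an analytic branch `g`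
of `log (f z / z)` on the unit disk with `g 0 = 0` whose Taylor coefficients at `0`
are `2 * γ n` for `n ≥ 1`. -/
def IsLogCoeffs (f : ℂ → ℂ) (γ : ℕ → ℂ) : Prop :=
  ∃ g : ℂ → ℂ, AnalyticOnNhd ℂ g (ball (0 : ℂ) 1) ∧ g 0 = 0 ∧
    (∀ z ∈ ball (0 : ℂ) 1, z ≠ 0 → Complex.exp (g z) = f z / z) ∧
    ∀ n : ℕ, 1 ≤ n → iteratedDeriv n g 0 = (n.factorial : ℂ) * (2 * γ n)

/-- `f` coincides on the unit disk with a rotation `z / (1 - e^{iθ} z)^2`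
of the Koebe function. -/
def IsKoebeRotation (f : ℂ → ℂ) : Prop :=
  ∃ θ : ℝ, Set.EqOn f
    (fun z => z / (1 - Complex.exp (θ * Complex.I) * z) ^ 2) (ball (0 : ℂ) 1)

/-! ### Jensen's formula for injective functions -/

lemma deriv_ne_zero_of_injOn {f : ℂ → ℂ} {s : Set ℂ} (hs : IsOpen s)
    (hf : AnalyticOnNhd ℂ f s) (hinj : Set.InjOn f s) {a : ℂ} (ha : a ∈ s) :
    deriv f a ≠ 0 := by
  intro hd
  have hfa := hf a ha
  have hh : AnalyticAt ℂ (fun z => f z - f a) a := hfa.sub analyticAt_const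
  have hsn : s ∈ nhds a := hs.mem_nhds ha
  have hne : ¬ ∀ᶠ z in nhds a, f z - f a = 0 := by
    intro hev
    have h1 : ∀ᶠ z in nhds a, z = a := by
      filter_upwards [hev, hsn] with z hz hzs
      exact hinj hzs ha (sub_eq_zero.mp hz)
    have := (Filter.eventually_of_mem (self_mem_nhdsWithin (a := a) (s := {a}ᶜ)) fun x hx => hx).and
      (h1.filter_mono nhdsWithin_le_nhds)
    obtain ⟨z, hz1, hz2⟩ := this.exists
    exact hz1 hz2
  obtain ⟨m, g, hg, hg0, hev⟩ := (hh.exists_eventuallyEq_pow_smul_nonzero_iff).2 hne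
  have hm0 : m ≠ 0 := by
    rintro rfl
    have := hev.self_of_nhds
    simp at this
    exact hg0 this.symm
  have hm1 : m ≠ 1 := by
    rintro rfl
    have h1 : HasDerivAt (fun z => (z - a) ^ 1 • g z) (g a) a := by
      have h0 : HasDerivAt (fun z => (z - a) * g z) (1 * g a + (a - a) * deriv g a) a :=
        ((hasDerivAt_id a).sub_const a).mul hg.differentiableAt.hasDerivAt
      simpa using h0
    have h2 : HasDerivAt (fun z => f z - f a) (deriv f a) a :=
      hfa.differentiableAt.hasDerivAt.sub_const _
    have h3 := h2.congr_of_eventuallyEq (Filter.EventuallyEq.symm hev)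
    exact hg0 ((h1.unique h3).trans hd)
  -- an `m`-th root of the unit factor turns `f - f a` into an `m`-th power of a local coordinate
  let r : ℂ → ℂ := fun z => Complex.exp (Complex.log (g z / g a) / m)
  have hr : AnalyticAt ℂ r a := by
    have h1 : AnalyticAt ℂ (fun z => g z / g a) a := hg.div analyticAt_const hg0
    have h2 : AnalyticAt ℂ (fun z => Complex.log (g z / g a)) a := by
      apply h1.clog
      simp [div_self hg0]
    exact (h2.div_const).cexp
  let φ : ℂ → ℂ := fun z => (z - a) * r z
  have hφ : AnalyticAt ℂ φ a := (analyticAt_id.sub analyticAt_const).mul hr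
  have hφd : deriv φ a = 1 := by
    have := ((hasDerivAt_id a).sub_const a).mul hr.differentiableAt.hasDerivAt
    have h2 : HasDerivAt φ (1 * r a + (a - a) * deriv r a) a := this
    rw [h2.deriv]
    simp [r, div_self hg0]
  have hmap : Filter.map φ (nhds a) = nhds (φ a) := by
    apply HasStrictDerivAt.map_nhds_eq (f' := 1) _ one_ne_zero
    rw [← hφd]; exact hφ.hasStrictDerivAt
  have hφa : φ a = 0 := by simp [φ]
  have hgne : ∀ᶠ z in nhds a, g z ≠ 0 := hg.continuousAt.eventually_ne hg0
  have hN : ∀ᶠ z in nhds a, z ∈ s ∧ f z - f a = g a * φ z ^ m := by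
    filter_upwards [hev, hgne, hsn] with z h1 h2 h3
    refine ⟨h3, ?_⟩
    have hq : g z / g a ≠ 0 := div_ne_zero h2 hg0
    have : r z ^ m = g z / g a := by
      simp only [r]
      rw [← Complex.exp_nat_mul, mul_div_cancel₀ _ (by exact_mod_cast hm0), Complex.exp_log hq]
    rw [h1, smul_eq_mul]
    simp only [φ, mul_pow, this]
    field_simp
  have him : φ '' {z | z ∈ s ∧ f z - f a = g a * φ z ^ m} ∈ nhds (0 : ℂ) := by
    rw [← hφa, ← hmap]; exact Filter.image_mem_map hN
  obtain ⟨ε, hε, hball⟩ := Metric.mem_nhds_iff.mp him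
  let ω := Complex.exp (2 * π * I / m)
  have hω := Complex.isPrimitiveRoot_exp m hm0
  have hωn : ‖ω‖ = 1 := hω.norm'_eq_one hm0
  have e1 : ((ε / 2 : ℝ) : ℂ) ∈ ball (0 : ℂ) ε := by
    rw [mem_ball_zero_iff, Complex.norm_real, Real.norm_eq_abs, abs_of_pos (by positivity)]; linarith
  have e2 : ((ε / 2 : ℝ) : ℂ) * ω ∈ ball (0 : ℂ) ε := by
    rw [mem_ball_zero_iff, norm_mul, hωn, mul_one, ← mem_ball_zero_iff]; exact e1
  obtain ⟨z1, ⟨hz1, hz1'⟩, h1⟩ := hball e1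
  obtain ⟨z2, ⟨hz2, hz2'⟩, h2⟩ := hball e2
  have : f z1 = f z2 := by
    have : f z1 - f a = f z2 - f a := by
      rw [hz1', hz2', h1, h2, mul_pow, hω.pow_eq_one, mul_one]
    exact sub_left_injective this
  have hz := hinj hz1 hz2 this
  rw [hz, h2] at h1
  have hε0 : ((ε / 2 : ℝ) : ℂ) ≠ 0 := by
    have : ε / 2 ≠ 0 := by positivity
    exact_mod_cast this
  have : ω = 1 := mul_left_cancel₀ hε0 (by simpa using h1)
  exact hω.ne_one (by omega) this

/-- Jensen's formula when `w` is omitted on the closed disc: `log ‖f - w‖` is harmonic there. -/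
lemma jensen_omitted {f : ℂ → ℂ} {c : ℂ} {ρ R : ℝ} (hR : 0 < R) (hRρ : R < ρ)
    (hf : AnalyticOnNhd ℂ f (ball c ρ)) {w : ℂ} (hw : ∀ z ∈ closedBall c R, f z ≠ w) :
    circleAverage (fun ζ => Real.log ‖f ζ - w‖) c R = Real.log ‖f c - w‖ := by
  apply AnalyticOnNhd.circleAverage_log_norm_of_ne_zero (g := fun ζ => f ζ - w)
  · intro z hz
    rw [abs_of_pos hR] at hz
    exact (hf z (closedBall_subset_ball hRρ hz)).sub analyticAt_const
  · intro z hz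
    rw [abs_of_pos hR] at hz
    exact sub_ne_zero.mpr (hw z hz)

/-- Jensen's formula for the value attained only at `a`, a simple zero of `f - f a`. -/
lemma jensen_attained {f : ℂ → ℂ} {c : ℂ} {ρ R : ℝ} (hR : 0 < R) (hRρ : R < ρ)
    (hf : AnalyticOnNhd ℂ f (ball c ρ)) (hinj : Set.InjOn f (ball c ρ))
    {a : ℂ} (ha : a ∈ closedBall c R) (hac : a ≠ c) :
    circleAverage (fun ζ => Real.log ‖f ζ - f a‖) c R
      = Real.log ‖f c - f a‖ + (Real.log R - Real.log ‖a - c‖) := by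
  have hab : a ∈ ball c ρ := closedBall_subset_ball hRρ ha
  have hsub : closedBall c R ⊆ ball c ρ := closedBall_subset_ball hRρ
  have hcb : c ∈ ball c ρ := by simp; linarith
  let d := dslope f a
  have hd : DifferentiableOn ℂ d (ball c ρ) :=
    (Complex.differentiableOn_dslope (isOpen_ball.mem_nhds hab)).2 hf.differentiableOn
  have hda : AnalyticOnNhd ℂ d (ball c ρ) := hd.analyticOnNhd isOpen_ball
  have hfac : ∀ z, f z - f a = (z - a) * d z := fun z => by
    have := sub_smul_dslope f a z
    simpa [d, smul_eq_mul] using this.symm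
  have hdne : ∀ z ∈ ball c ρ, d z ≠ 0 := by
    intro z hz h0
    by_cases hza : z = a
    · subst hza
      simp only [d, dslope_same] at h0
      exact deriv_ne_zero_of_injOn isOpen_ball hf hinj hz h0
    · have := hfac z
      rw [h0, mul_zero, sub_eq_zero] at this
      exact hza (hinj hz hab this)
  have habs : closedBall c |R| = closedBall c R := by rw [abs_of_pos hR]
  have e1 : circleAverage (fun ζ => Real.log ‖d ζ‖) c R = Real.log ‖d c‖ := by
    apply AnalyticOnNhd.circleAverage_log_norm_of_ne_zero
    · rw [habs]; exact hda.mono hsub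
    · rw [habs]; exact fun u hu => hdne u (hsub hu)
  have e2 : circleAverage (fun ζ => Real.log ‖ζ - a‖) c R = Real.log R :=
    circleAverage_log_norm_sub_const_of_mem_closedBall (by rw [habs]; exact ha)
  have i1 : CircleIntegrable (fun ζ => Real.log ‖d ζ‖) c R := by
    apply MeromorphicOn.circleIntegrable_log_norm
    intro z hz
    rw [abs_of_pos hR] at hz
    exact (hda z (hsub (sphere_subset_closedBall hz))).meromorphicAt
  have i2 : CircleIntegrable (fun ζ => Real.log ‖ζ - a‖) c R := by
    apply MeromorphicOn.circleIntegrable_log_norm (f := fun ζ => ζ - a)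
    intro z hz
    exact (analyticAt_id.sub analyticAt_const).meromorphicAt
  have key : circleAverage (fun ζ => Real.log ‖f ζ - f a‖) c R
      = circleAverage (fun ζ => Real.log ‖ζ - a‖ + Real.log ‖d ζ‖) c R := by
    apply circleAverage_congr_codiscreteWithin _ hR.ne'
    have : {a}ᶜ ∈ Filter.codiscreteWithin (sphere c |R|) := by
      apply Filter.codiscreteWithin_mono (Set.subset_univ _)
      exact Set.Finite.compl_mem_codiscrete (Set.finite_singleton a)
    have h2 : sphere c |R| ∈ Filter.codiscreteWithin (sphere c |R|) := by
      exact Filter.self_mem_codiscreteWithin _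
    filter_upwards [this, h2] with z hz hzs
    rw [abs_of_pos hR] at hzs
    rw [hfac z, norm_mul, Real.log_mul]
    · exact norm_ne_zero_iff.mpr (sub_ne_zero.mpr hz)
    · exact norm_ne_zero_iff.mpr (hdne z (hsub (sphere_subset_closedBall hzs)))
  rw [key, circleAverage_fun_add i2 i1, e1, e2, hfac c, norm_mul, Real.log_mul, norm_sub_rev c a]
  · ring
  · exact norm_ne_zero_iff.mpr (sub_ne_zero.mpr hac.symm)
  · exact norm_ne_zero_iff.mpr (hdne c hcb)

/-! ### The Green-type function and Cartan's identity -/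

open Classical in
/-- For `f` injective on `ball 0 ρ`, this is the Green-type function
`w ↦ max 0 (log R - log ‖f⁻¹ w‖)`, extended by `0` off the image of the ball. -/
noncomputable def grn (f : ℂ → ℂ) (ρ R : ℝ) (w : ℂ) : ℝ :=
  if h : ∃ z ∈ ball (0 : ℂ) ρ, f z = w then max 0 (Real.log R - Real.log ‖h.choose‖) else 0

section
variable {f : ℂ → ℂ} {ρ R : ℝ}

lemma grn_apply (hinj : Set.InjOn f (ball 0 ρ)) {z : ℂ} (hz : z ∈ ball (0 : ℂ) ρ) :
    grn f ρ R (f z) = max 0 (Real.log R - Real.log ‖z‖) := by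
  have h : ∃ z' ∈ ball (0 : ℂ) ρ, f z' = f z := ⟨z, hz, rfl⟩
  rw [grn, dif_pos h, hinj h.choose_spec.1 hz h.choose_spec.2]

lemma grn_eq_zero {w : ℂ} (h : ¬ ∃ z ∈ ball (0 : ℂ) ρ, f z = w) : grn f ρ R w = 0 := by
  rw [grn, dif_neg h]

lemma grn_nonneg (w : ℂ) : 0 ≤ grn f ρ R w := by
  rw [grn]; split_ifs
  · exact le_max_left _ _
  · exact le_rfl

/-- The function of radius `R` arises from that of radius `1` by adding `log R ≤ 0` and truncating
at `0`. -/
lemma grn_shift (hinj : Set.InjOn f (ball 0 ρ)) (hR1 : R ≤ 1) (hR : 0 < R) (w : ℂ) :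
    grn f ρ R w = max 0 (grn f ρ 1 w + Real.log R) := by
  have hl : Real.log R ≤ 0 := Real.log_nonpos hR.le hR1
  by_cases h : ∃ z ∈ ball (0 : ℂ) ρ, f z = w
  · obtain ⟨z, hz, rfl⟩ := h
    rw [grn_apply hinj hz, grn_apply hinj hz, Real.log_one]
    rcases le_total 0 (0 - Real.log ‖z‖) with h1 | h1
    · rw [max_eq_right h1]; congr 1; ring
    · rw [max_eq_left h1, max_eq_left, max_eq_left] <;> linarith
  · rw [grn_eq_zero h, grn_eq_zero h, max_eq_left]; linarith

lemma grn_sub_log_anti (hinj : Set.InjOn f (ball 0 ρ)) {R₀ : ℝ} (hR₀ : 0 < R₀) (hR : R₀ ≤ R)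
    (w : ℂ) : grn f ρ R w - Real.log R ≤ grn f ρ R₀ w - Real.log R₀ := by
  have hl : Real.log R₀ ≤ Real.log R := Real.log_le_log hR₀ hR
  by_cases h : ∃ z ∈ ball (0 : ℂ) ρ, f z = w
  · obtain ⟨z, hz, rfl⟩ := h
    rw [grn_apply hinj hz, grn_apply hinj hz]
    rcases le_total 0 (Real.log R - Real.log ‖z‖) with h1 | h1
    · rw [max_eq_right h1]
      have := le_max_right 0 (Real.log R₀ - Real.log ‖z‖)
      linarith
    · rw [max_eq_left h1]
      have := le_max_left 0 (Real.log R₀ - Real.log ‖z‖)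
      linarith
  · rw [grn_eq_zero h, grn_eq_zero h]; linarith

/-- Jensen's formula: `grn` is the logarithmic potential of the image of `|ζ| = R`, minus `log ‖w‖`. -/
lemma circleAverage_log_sub (hf : AnalyticOnNhd ℂ f (ball 0 ρ)) (hinj : Set.InjOn f (ball 0 ρ))
    (h0 : f 0 = 0) (hR : 0 < R) (hRρ : R < ρ) {w : ℂ} (hw : w ≠ 0) :
    circleAverage (fun ζ => Real.log ‖f ζ - w‖) 0 R = Real.log ‖w‖ + grn f ρ R w := by
  by_cases h : ∃ z ∈ ball (0 : ℂ) ρ, f z = w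
  · obtain ⟨z, hz, rfl⟩ := h
    have hz0 : z ≠ 0 := by rintro rfl; exact hw h0
    rw [grn_apply hinj hz]
    by_cases hzR : ‖z‖ ≤ R
    · rw [jensen_attained hR hRρ hf hinj (by simpa using hzR) hz0, h0, max_eq_right]
      · simp
      · have := Real.log_le_log (norm_pos_iff.mpr hz0) hzR
        linarith
    · rw [jensen_omitted hR hRρ hf, h0, max_eq_left]
      · simp
      · have := Real.log_le_log hR (le_of_not_ge hzR)
        linarith
      · intro z' hz' he
        have := hinj (closedBall_subset_ball hRρ hz') hz he
        subst this
        exact hzR (by simpa using hz')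
  · rw [grn_eq_zero h, jensen_omitted hR hRρ hf, h0]
    · simp
    · intro z hz he
      exact h ⟨z, closedBall_subset_ball hRρ hz, he⟩

lemma continuousOn_grn (hf : AnalyticOnNhd ℂ f (ball 0 ρ)) (hinj : Set.InjOn f (ball 0 ρ))
    (h0 : f 0 = 0) (hR : 0 < R) (hRρ : R < ρ) : ContinuousOn (grn f ρ R) {0}ᶜ := by
  intro w hw
  apply ContinuousAt.continuousWithinAt
  by_cases h : ∃ z ∈ ball (0 : ℂ) ρ, f z = w
  · obtain ⟨z, hz, rfl⟩ := h
    have hz0 : z ≠ 0 := by rintro rfl; exact hw h0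
    have hs : HasStrictDerivAt f (deriv f z) z := (hf z hz).hasStrictDerivAt
    have hmap := hs.map_nhds_eq (deriv_ne_zero_of_injOn isOpen_ball hf hinj hz)
    rw [ContinuousAt, ← hmap, Filter.tendsto_map'_iff]
    have hc : ContinuousAt (fun z : ℂ => max 0 (Real.log R - Real.log ‖z‖)) z := by
      have : ContinuousAt (fun z : ℂ => Real.log ‖z‖) z :=
        continuous_norm.continuousAt.log (norm_ne_zero_iff.mpr hz0)
      exact continuousAt_const.max (continuousAt_const.sub this)
    rw [grn_apply hinj hz]
    refine hc.tendsto.congr' ?_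
    filter_upwards [isOpen_ball.mem_nhds hz] with y hy
    exact (grn_apply hinj hy).symm
  · rw [ContinuousAt, grn_eq_zero h]
    have hcl : IsClosed (f '' closedBall 0 R) :=
      ((isCompact_closedBall 0 R).image_of_continuousOn
        (hf.continuousOn.mono (closedBall_subset_ball hRρ))).isClosed
    have hmem : (f '' closedBall 0 R)ᶜ ∈ nhds w := by
      apply hcl.isOpen_compl.mem_nhds
      rintro ⟨z, hz, rfl⟩
      exact h ⟨z, closedBall_subset_ball hRρ hz, rfl⟩
    refine tendsto_const_nhds.congr' ?_
    filter_upwards [hmem] with y hy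
    by_cases hy' : ∃ z ∈ ball (0 : ℂ) ρ, f z = y
    · obtain ⟨z, hz, rfl⟩ := hy'
      rw [grn_apply hinj hz, max_eq_left]
      have hzR : R ≤ ‖z‖ := by
        by_contra hlt
        exact hy ⟨z, by simpa using (not_le.mp hlt).le, rfl⟩
      have := Real.log_le_log hR hzR
      linarith
    · rw [grn_eq_zero hy']

open MeasureTheory in
/-- Fubini for the kernel `log ‖f ζ - w‖` on a circle times a curve avoiding the origin. -/
lemma swap_log (hf : AnalyticOnNhd ℂ f (ball 0 ρ)) (hinj : Set.InjOn f (ball 0 ρ))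
    (h0 : f 0 = 0) (hR : 0 < R) (hRρ : R < ρ) {b : ℝ → ℂ} (hb : Continuous b)
    (hb0 : ∀ ψ, b ψ ≠ 0) :
    IntervalIntegrable (fun θ => ∫ ψ in (0 : ℝ)..2 * π, Real.log ‖f (circleMap 0 R θ) - b ψ‖)
      volume 0 (2 * π) ∧
    ∫ ψ in (0 : ℝ)..2 * π, circleAverage (fun ζ => Real.log ‖f ζ - b ψ‖) 0 R
      = circleAverage (fun ζ => ∫ ψ in (0 : ℝ)..2 * π, Real.log ‖f ζ - b ψ‖) 0 R := by
  have hpi : (0 : ℝ) ≤ 2 * π := by positivity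
  have hcm : ∀ θ, circleMap 0 R θ ∈ ball (0 : ℂ) ρ := fun θ =>
    closedBall_subset_ball hRρ (circleMap_mem_closedBall 0 hR.le θ)
  have hfc : Continuous (fun θ => f (circleMap 0 R θ)) :=
    hf.continuousOn.comp_continuous (continuous_circleMap 0 R) hcm
  let K : ℝ × ℝ → ℝ := fun p => Real.log ‖f (circleMap 0 R p.2) - b p.1‖
  let μ : Measure ℝ := volume.restrict (Set.Ioc 0 (2 * π))
  have hKm : StronglyMeasurable K := by
    have : Continuous (fun p : ℝ × ℝ => ‖f (circleMap 0 R p.2) - b p.1‖) :=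
      ((hfc.comp continuous_snd).sub (hb.comp continuous_fst)).norm
    exact (Real.measurable_log.comp this.measurable).stronglyMeasurable
  have hslice : ∀ ψ, IntervalIntegrable (fun θ => K (ψ, θ)) volume 0 (2 * π) := by
    intro ψ
    have : CircleIntegrable (fun ζ => Real.log ‖f ζ - b ψ‖) 0 R := by
      apply MeromorphicOn.circleIntegrable_log_norm (f := fun ζ => f ζ - b ψ)
      intro z hz
      rw [abs_of_pos hR] at hz
      exact ((hf z (closedBall_subset_ball hRρ (sphere_subset_closedBall hz))).sub
        analyticAt_const).meromorphicAt
    exact this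
  have hsliceI : ∀ ψ, Integrable (fun θ => K (ψ, θ)) μ := fun ψ =>
    (intervalIntegrable_iff_integrableOn_Ioc_of_le hpi).mp (hslice ψ)
  have hval : ∀ ψ, ∫ θ, K (ψ, θ) ∂μ = 2 * π * (Real.log ‖b ψ‖ + grn f ρ R (b ψ)) := by
    intro ψ
    rw [← circleAverage_log_sub hf hinj h0 hR hRρ (hb0 ψ), circleAverage_def,
      intervalIntegral.integral_of_le hpi, smul_eq_mul, ← mul_assoc,
      mul_inv_cancel₀ (by positivity), one_mul]
  -- upper bound for the kernel, lower bound for the slices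
  obtain ⟨Cf, hCf⟩ := (isCompact_Icc (a := (0 : ℝ)) (b := 2 * π)).exists_bound_of_continuousOn
    hfc.continuousOn
  obtain ⟨Cb, hCb⟩ := (isCompact_Icc (a := (0 : ℝ)) (b := 2 * π)).exists_bound_of_continuousOn
    hb.continuousOn
  have hlb : Continuous (fun ψ => Real.log ‖b ψ‖) :=
    (continuous_norm.comp hb).log (fun ψ => norm_ne_zero_iff.mpr (hb0 ψ))
  obtain ⟨Cl, hCl⟩ := (isCompact_Icc (a := (0 : ℝ)) (b := 2 * π)).exists_bound_of_continuousOn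
    hlb.continuousOn
  have hmemIcc : ∀ᵐ θ ∂μ, θ ∈ Set.Icc (0 : ℝ) (2 * π) := by
    filter_upwards [ae_restrict_mem measurableSet_Ioc] with θ hθ
    exact Set.Ioc_subset_Icc_self hθ
  have hint : Integrable K (μ.prod μ) := by
    rw [integrable_prod_iff hKm.aestronglyMeasurable]
    refine ⟨Filter.Eventually.of_forall hsliceI, ?_⟩
    refine Integrable.mono' (g := fun _ => 2 * π * (2 * (Cf + Cb) + Cl)) (integrable_const _)
      (hKm.norm.integral_prod_right').aestronglyMeasurable ?_
    filter_upwards [hmemIcc] with ψ hψ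
    rw [Real.norm_of_nonneg (integral_nonneg fun _ => norm_nonneg _)]
    have hle : ∫ θ, ‖K (ψ, θ)‖ ∂μ ≤ ∫ θ, (2 * (Cf + Cb) - K (ψ, θ)) ∂μ := by
      apply integral_mono_ae (hsliceI ψ).norm ((integrable_const _).sub (hsliceI ψ))
      filter_upwards [hmemIcc] with θ hθ
      have h1 : K (ψ, θ) ≤ Cf + Cb := by
        refine (Real.log_le_self (norm_nonneg _)).trans ((norm_sub_le _ _).trans ?_)
        exact add_le_add (hCf θ hθ) (hCb ψ hψ)
      have h2 : 0 ≤ Cf + Cb :=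
        add_nonneg ((norm_nonneg _).trans (hCf θ hθ)) ((norm_nonneg _).trans (hCb ψ hψ))
      change |K (ψ, θ)| ≤ 2 * (Cf + Cb) - K (ψ, θ)
      rw [abs_le]
      constructor <;> linarith
    refine hle.trans ?_
    rw [integral_sub (integrable_const _) (hsliceI ψ), hval]
    have h3 : ∫ _θ : ℝ, 2 * (Cf + Cb) ∂μ = 2 * π * (2 * (Cf + Cb)) := by
      simp [μ, hpi]
    rw [h3]
    have h4 := hCl ψ hψ
    rw [Real.norm_eq_abs, abs_le] at h4
    have h5 := grn_nonneg (f := f) (ρ := ρ) (R := R) (b ψ)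
    have h6 : 0 ≤ 2 * π * (Cl + Real.log ‖b ψ‖ + grn f ρ R (b ψ)) := by
      apply mul_nonneg hpi; linarith
    nlinarith
  constructor
  · rw [intervalIntegrable_iff_integrableOn_Ioc_of_le hpi]
    have := hint.integral_prod_right
    refine this.congr (Filter.Eventually.of_forall fun θ => ?_)
    simp only [intervalIntegral.integral_of_le hpi]
    rfl
  · simp only [circleAverage_def, intervalIntegral.integral_of_le hpi, smul_eq_mul]
    rw [integral_const_mul]
    congr 1
    exact integral_integral_swap (f := fun ψ θ => K (ψ, θ)) hint

/-- Cartan's identity for injective functions: integrate Jensen's formula over `‖w‖ = e ^ x` and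
interchange the two integrations. -/
lemma circleAverage_grn (hf : AnalyticOnNhd ℂ f (ball 0 ρ)) (hinj : Set.InjOn f (ball 0 ρ))
    (h0 : f 0 = 0) (hR : 0 < R) (hRρ : R < ρ) (x : ℝ) :
    circleAverage (grn f ρ R) 0 (Real.exp x)
      = circleAverage (fun ζ => max 0 (Real.log ‖f ζ‖ - x)) 0 R := by
  have hne : ∀ ψ, circleMap 0 (Real.exp x) ψ ≠ 0 := fun ψ =>
    circleMap_ne_center (Real.exp_pos x).ne'
  have hsw := (swap_log hf hinj h0 hR hRρ (continuous_circleMap 0 (Real.exp x)) hne).2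
  have hpi : (2 * π) ≠ 0 := by positivity
  have hl : ∀ ψ, circleAverage (fun ζ => Real.log ‖f ζ - circleMap 0 (Real.exp x) ψ‖) 0 R
      = x + grn f ρ R (circleMap 0 (Real.exp x) ψ) := fun ψ => by
    rw [circleAverage_log_sub hf hinj h0 hR hRρ (hne ψ)]
    simp
  have hr : ∀ ζ ∈ sphere (0 : ℂ) |R|,
      ∫ ψ in (0 : ℝ)..2 * π, Real.log ‖f ζ - circleMap 0 (Real.exp x) ψ‖
      = 2 * π * (x + max 0 (Real.log ‖f ζ‖ - x)) := by
    intro ζ hζ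
    rw [abs_of_pos hR] at hζ
    have hζ' : ζ ∈ ball (0 : ℂ) ρ := closedBall_subset_ball hRρ (sphere_subset_closedBall hζ)
    have hζ0 : ζ ≠ 0 := by rintro rfl; simp at hζ; exact hR.ne hζ
    have hfζ : f ζ ≠ 0 := by
      intro h
      exact hζ0 (hinj hζ' (by simp; linarith) (h.trans h0.symm))
    have := circleAverage_log_norm_sub_const_eq_log_radius_add_posLog (a := f ζ) (c := 0)
      (Real.exp_pos x).ne'
    rw [circleAverage_def, smul_eq_mul, inv_mul_eq_iff_eq_mul₀ hpi] at this
    simp_rw [norm_sub_rev (f ζ)]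
    rw [this, Real.posLog, zero_sub, norm_neg, Real.log_exp, Real.log_mul (by positivity)
      (norm_ne_zero_iff.mpr hfζ), Real.log_inv, Real.log_exp]
    congr 3; ring
  simp_rw [hl] at hsw
  rw [circleAverage_congr_sphere hr] at hsw
  have hcg : Continuous fun ψ => grn f ρ R (circleMap 0 (Real.exp x) ψ) :=
    (continuousOn_grn hf hinj h0 hR hRρ).comp_continuous (continuous_circleMap _ _) hne
  have hfc : Continuous (fun θ => f (circleMap 0 R θ)) :=
    hf.continuousOn.comp_continuous (continuous_circleMap 0 R)
      fun θ => closedBall_subset_ball hRρ (circleMap_mem_closedBall 0 hR.le θ)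
  have hfne : ∀ θ, f (circleMap 0 R θ) ≠ 0 := by
    intro θ h
    exact circleMap_ne_center (c := 0) hR.ne' (hinj (closedBall_subset_ball hRρ
      (circleMap_mem_closedBall 0 hR.le θ)) (by simp; linarith) (h.trans h0.symm))
  have hcl : Continuous fun θ => max 0 (Real.log ‖f (circleMap 0 R θ)‖ - x) :=
    continuous_const.max
      (((continuous_norm.comp hfc).log (fun θ => norm_ne_zero_iff.mpr (hfne θ))).sub
        continuous_const)
  rw [intervalIntegral.integral_add (by simp) (hcg.intervalIntegrable _ _)] at hsw
  simp only [circleAverage_def, smul_eq_mul] at hsw ⊢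
  rw [intervalIntegral.integral_const_mul, intervalIntegral.integral_add (by simp)
    (hcl.intervalIntegrable _ _)] at hsw
  simp only [intervalIntegral.integral_const, smul_eq_mul, sub_zero] at hsw
  rw [← mul_assoc, inv_mul_cancel₀ hpi, one_mul] at hsw
  congr 1
  linarith
end

/-! ### The Green function in logarithmic coordinates -/

lemma circleAverage_exp_eq (g : ℂ → ℝ) (x : ℝ) :
    circleAverage g 0 (Real.exp x)
      = (2 * π)⁻¹ * ∫ t in (-π)..π, g (Complex.exp (x + t * I)) := by
  rw [circleAverage_eq_integral_add (-π), smul_eq_mul,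
    intervalIntegral.integral_comp_add_right (fun t => g (circleMap 0 (Real.exp x) t))]
  congr 1
  have : ∀ t : ℝ, circleMap 0 (Real.exp x) t = Complex.exp (x + t * I) := by
    intro t; rw [circleMap, Complex.exp_add]; simp
  simp_rw [this]
  congr 1 <;> ring

/-- The mean of `log ‖exp ζ - a‖` over a small circle dominates the value at the centre. -/
lemma exp_submean {s a : ℂ} {ε : ℝ} (hε : 0 < ε) (hεπ : ε < π) (ha : a ≠ Complex.exp s) :
    Real.log ‖Complex.exp s - a‖ ≤ circleAverage (fun ζ => Real.log ‖Complex.exp ζ - a‖) s ε := by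
  have han : AnalyticOnNhd ℂ Complex.exp (ball s π) := fun z _ => analyticAt_cexp
  have hinj : Set.InjOn Complex.exp (ball s π) := by
    intro z hz w hw h
    obtain ⟨n, hn⟩ := Complex.exp_eq_exp_iff_exists_int.mp h
    have h1 : ‖z - w‖ < 2 * π := by
      have h2 : dist z w < π + π := (dist_triangle_right z w s).trans_lt
        (add_lt_add (mem_ball.mp hz) (mem_ball.mp hw))
      rw [dist_eq_norm] at h2; linarith
    have h2 : ‖z - w‖ = |(n : ℝ)| * (2 * π) := by
      rw [hn]; simp [abs_of_pos Real.pi_pos]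
    have h3 : |(n : ℝ)| < 1 := by
      have : (0 : ℝ) < 2 * π := by positivity
      by_contra hcon
      push Not at hcon
      nlinarith
    have h4 : n = 0 := by
      rw [← Int.abs_lt_one_iff]; exact_mod_cast h3
    rw [hn, h4]; simp
  by_cases h : ∃ z ∈ closedBall s ε, Complex.exp z = a
  · obtain ⟨z, hz, rfl⟩ := h
    have hzs : z ≠ s := by rintro rfl; exact ha rfl
    rw [jensen_attained hε hεπ han hinj hz hzs]
    have := Real.log_le_log (norm_pos_iff.mpr (sub_ne_zero.mpr hzs)) (mem_closedBall_iff_norm.mp hz)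
    linarith
  · push Not at h
    rw [jensen_omitted hε hεπ han h]

section
variable {f : ℂ → ℂ} {ρ R : ℝ}

lemma ne_zero_of_mem (hinj : Set.InjOn f (ball 0 ρ)) (h0 : f 0 = 0) {z : ℂ}
    (hz : z ∈ ball (0 : ℂ) ρ) (hz0 : z ≠ 0) : f z ≠ 0 := by
  intro h
  have hρ : 0 < ρ := (norm_nonneg z).trans_lt (by simpa using hz)
  exact hz0 (hinj hz (by simpa using hρ) (h.trans h0.symm))

/-- The mean value property of the harmonic function `log ‖f z / z‖`, which is `0` at the origin
by the normalization of `f`. -/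
lemma circleAverage_log_eq (hf : AnalyticOnNhd ℂ f (ball 0 ρ)) (hinj : Set.InjOn f (ball 0 ρ))
    (h0 : f 0 = 0) (h1 : deriv f 0 = 1) (hR : 0 < R) (hRρ : R < ρ) :
    circleAverage (fun ζ => Real.log ‖f ζ‖) 0 R = Real.log R := by
  have hsub : closedBall (0 : ℂ) R ⊆ ball 0 ρ := closedBall_subset_ball hRρ
  have h0b : (0 : ℂ) ∈ ball (0 : ℂ) ρ := by simp; linarith
  let d := dslope f 0
  have hda : AnalyticOnNhd ℂ d (ball 0 ρ) :=
    ((Complex.differentiableOn_dslope (isOpen_ball.mem_nhds h0b)).2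
      hf.differentiableOn).analyticOnNhd isOpen_ball
  have hfac : ∀ z, f z = z * d z := fun z => by
    have := sub_smul_dslope f 0 z
    simpa [d, h0, smul_eq_mul] using this.symm
  have hd0 : d 0 = 1 := by simp [d, h1]
  have hdne : ∀ z ∈ ball (0 : ℂ) ρ, d z ≠ 0 := by
    intro z hz hz0
    by_cases h : z = 0
    · rw [h, hd0] at hz0; exact one_ne_zero hz0
    · exact ne_zero_of_mem hinj h0 hz h (by rw [hfac, hz0, mul_zero])
  have habs : closedBall (0 : ℂ) |R| = closedBall 0 R := by rw [abs_of_pos hR]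
  have e1 : circleAverage (fun ζ => Real.log ‖d ζ‖) 0 R = Real.log ‖d 0‖ := by
    apply AnalyticOnNhd.circleAverage_log_norm_of_ne_zero
    · rw [habs]; exact hda.mono hsub
    · rw [habs]; exact fun u hu => hdne u (hsub hu)
  have i1 : CircleIntegrable (fun ζ => Real.log ‖d ζ‖) 0 R := by
    apply MeromorphicOn.circleIntegrable_log_norm
    intro z hz
    rw [abs_of_pos hR] at hz
    exact (hda z (hsub (sphere_subset_closedBall hz))).meromorphicAt
  have e2 : circleAverage (fun ζ => Real.log ‖f ζ‖) 0 R
      = circleAverage (fun ζ => Real.log R + Real.log ‖d ζ‖) 0 R := by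
    apply circleAverage_congr_sphere
    intro z hz
    rw [abs_of_pos hR] at hz
    have hzn : ‖z‖ = R := by simpa using hz
    simp only
    rw [hfac z, norm_mul, hzn, Real.log_mul hR.ne'
      (norm_ne_zero_iff.mpr (hdne z (hsub (sphere_subset_closedBall hz))))]
  rw [e2, circleAverage_fun_add (circleIntegrable_const _ _ _) i1, e1, circleAverage_const, hd0]
  simp

/-- `grn` at radius one in the logarithmic coordinate `w = exp s`. -/
noncomputable def logGrn (f : ℂ → ℂ) (ρ : ℝ) (s : ℂ) : ℝ := grn f ρ 1 (Complex.exp s)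

lemma logGrn_nonneg (s : ℂ) : 0 ≤ logGrn f ρ s := grn_nonneg _

lemma continuous_logGrn (hf : AnalyticOnNhd ℂ f (ball 0 ρ)) (hinj : Set.InjOn f (ball 0 ρ))
    (h0 : f 0 = 0) (hρ : 1 < ρ) : Continuous (logGrn f ρ) :=
  (continuousOn_grn hf hinj h0 one_pos hρ).comp_continuous Complex.continuous_exp
    (fun s => Complex.exp_ne_zero s)

lemma logGrn_periodic (s : ℂ) : logGrn f ρ (s + 2 * π * I) = logGrn f ρ s := by
  rw [logGrn, logGrn, Complex.exp_periodic s]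

open MeasureTheory in
/-- Subharmonicity of `logGrn`: it is an average of the functions `s ↦ log ‖exp s - f ζ‖` minus the
harmonic function `Re s`. -/
lemma logGrn_submean (hf : AnalyticOnNhd ℂ f (ball 0 ρ)) (hinj : Set.InjOn f (ball 0 ρ))
    (h0 : f 0 = 0) (hρ : 1 < ρ) (s : ℂ) {ε : ℝ} (hε : 0 < ε) (hεπ : ε < π) :
    logGrn f ρ s ≤ circleAverage (logGrn f ρ) s ε := by
  have hpi : (0 : ℝ) ≤ 2 * π := by positivity
  have hb : Continuous fun ψ => Complex.exp (circleMap s ε ψ) :=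
    Complex.continuous_exp.comp (continuous_circleMap s ε)
  obtain ⟨hint, hsw⟩ := swap_log hf hinj h0 one_pos hρ hb (fun ψ => Complex.exp_ne_zero _)
  have hl : ∀ ψ, circleAverage (fun ζ => Real.log ‖f ζ - Complex.exp (circleMap s ε ψ)‖) 0 1
      = Real.log ‖Complex.exp (circleMap s ε ψ)‖ + logGrn f ρ (circleMap s ε ψ) := fun ψ =>
    circleAverage_log_sub hf hinj h0 one_pos hρ (Complex.exp_ne_zero _)
  simp_rw [hl] at hsw
  have hc1 : Continuous fun ψ => Real.log ‖Complex.exp (circleMap s ε ψ)‖ :=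
    hb.norm.log (fun ψ => norm_ne_zero_iff.mpr (Complex.exp_ne_zero _))
  have hc2 : Continuous fun ψ => logGrn f ρ (circleMap s ε ψ) :=
    (continuous_logGrn hf hinj h0 hρ).comp (continuous_circleMap s ε)
  rw [intervalIntegral.integral_add (hc1.intervalIntegrable _ _) (hc2.intervalIntegrable _ _)]
    at hsw
  have hre : circleAverage (fun ζ => Real.log ‖Complex.exp ζ‖) s ε = Real.log ‖Complex.exp s‖ :=
    AnalyticOnNhd.circleAverage_log_norm_of_ne_zero (fun z _ => analyticAt_cexp)
      (fun z _ => Complex.exp_ne_zero z)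
  have hlow : circleAverage (fun ζ => Real.log ‖f ζ - Complex.exp s‖) 0 1
      = Real.log ‖Complex.exp s‖ + logGrn f ρ s :=
    circleAverage_log_sub hf hinj h0 one_pos hρ (Complex.exp_ne_zero _)
  have hle : 2 * π * circleAverage (fun ζ => Real.log ‖f ζ - Complex.exp s‖) 0 1
      ≤ circleAverage (fun ζ => ∫ ψ in (0 : ℝ)..2 * π,
          Real.log ‖f ζ - Complex.exp (circleMap s ε ψ)‖) 0 1 := by
    rw [circleAverage_def, circleAverage_def, smul_eq_mul, smul_eq_mul, mul_left_comm]
    apply mul_le_mul_of_nonneg_left _ (by positivity)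
    rw [← intervalIntegral.integral_const_mul]
    have hci : CircleIntegrable (fun ζ => Real.log ‖f ζ - Complex.exp s‖) 0 1 := by
      apply MeromorphicOn.circleIntegrable_log_norm (f := fun ζ => f ζ - Complex.exp s)
      intro z hz
      rw [abs_one] at hz
      exact ((hf z (closedBall_subset_ball hρ (sphere_subset_closedBall hz))).sub
        analyticAt_const).meromorphicAt
    have hci' : IntervalIntegrable (fun θ => 2 * π * Real.log ‖f (circleMap 0 1 θ) - Complex.exp s‖)
        volume 0 (2 * π) := IntervalIntegrable.const_mul hci _
    apply intervalIntegral.integral_mono_ae_restrict hpi hci' hint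
    -- the exceptional set `f ζ = exp s` is at most one point of the circle
    have hsub : (Set.Ioc 0 (2 * π) ∩ {θ | f (circleMap 0 1 θ) = Complex.exp s}).Subsingleton := by
      rintro θ ⟨h1, h2⟩ θ' ⟨h1', h2'⟩
      have hz : circleMap 0 1 θ = circleMap 0 1 θ' :=
        hinj (closedBall_subset_ball hρ (circleMap_mem_closedBall 0 zero_le_one θ))
          (closedBall_subset_ball hρ (circleMap_mem_closedBall 0 zero_le_one θ'))
          (h2.trans h2'.symm)
      exact injOn_circleMap_of_abs_sub_le one_ne_zero (a := 0) (b := 2 * π) (by simp [abs_of_pos Real.pi_pos])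
        (by rwa [Set.uIoc_of_le hpi]) (by rwa [Set.uIoc_of_le hpi]) hz
    have hnull : ∀ᵐ θ ∂(volume : Measure ℝ),
        θ ∉ Set.Ioc 0 (2 * π) ∩ {θ | f (circleMap 0 1 θ) = Complex.exp s} :=
      measure_eq_zero_iff_ae_notMem.mp (hsub.measure_zero volume)
    rw [Filter.EventuallyLE, ae_restrict_iff' measurableSet_Icc]
    have h00 : ∀ᵐ θ ∂(volume : Measure ℝ), θ ≠ 0 := by
      simp [ae_iff]
    filter_upwards [hnull, h00] with θ hθ hθ0 hθ'
    have hne : f (circleMap 0 1 θ) ≠ Complex.exp s := fun h =>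
      hθ ⟨⟨lt_of_le_of_ne hθ'.1 (Ne.symm hθ0), hθ'.2⟩, h⟩
    have := exp_submean hε hεπ hne
    rw [circleAverage_def, smul_eq_mul, inv_mul_eq_div, le_div_iff₀ (by positivity)] at this
    simp_rw [norm_sub_rev (f (circleMap 0 1 θ))]
    linarith
  rw [← hsw, hlow] at hle
  rw [circleAverage_def, smul_eq_mul, inv_mul_eq_iff_eq_mul₀ (by positivity)] at hre
  rw [hre] at hle
  rw [circleAverage_def, smul_eq_mul, inv_mul_eq_div, le_div_iff₀ (by positivity)]
  linarith

/-- The image of the closed unit disc is bounded. -/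
lemma logGrn_large (hf : AnalyticOnNhd ℂ f (ball 0 ρ)) (hinj : Set.InjOn f (ball 0 ρ))
    (hρ : 1 < ρ) : ∃ X : ℝ, ∀ s : ℂ, X ≤ s.re → logGrn f ρ s = 0 := by
  obtain ⟨C, hC⟩ := (isCompact_closedBall (0 : ℂ) 1).exists_bound_of_continuousOn
    (hf.continuousOn.mono (closedBall_subset_ball hρ))
  have hC0 : 0 ≤ C := (norm_nonneg _).trans (hC 0 (by simp))
  refine ⟨Real.log (C + 1), fun s hs => ?_⟩
  by_cases h : ∃ z ∈ ball (0 : ℂ) ρ, f z = Complex.exp s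
  · obtain ⟨z, hz, he⟩ := h
    rw [logGrn, ← he, grn_apply hinj hz, max_eq_left]
    have h1 : 1 ≤ ‖z‖ := by
      by_contra hlt
      have h2 := hC z (by simpa using (not_le.mp hlt).le)
      rw [he, Complex.norm_exp] at h2
      have h3 := Real.exp_le_exp.mpr hs
      rw [Real.exp_log (by linarith)] at h3
      linarith
    have := Real.log_nonneg h1
    simp; linarith
  · rw [logGrn, grn_eq_zero h]

/-- As `f z ~ z` at the origin, `logGrn` behaves like `-Re s` for `Re s → -∞`; this is the upper bound. -/
lemma logGrn_small (hf : AnalyticOnNhd ℂ f (ball 0 ρ)) (hinj : Set.InjOn f (ball 0 ρ))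
    (h0 : f 0 = 0) (h1 : deriv f 0 = 1) (hρ : 1 < ρ) {ε : ℝ} (hε : 0 < ε) :
    ∃ X : ℝ, ∀ s : ℂ, s.re ≤ X → logGrn f ρ s ≤ -s.re + ε := by
  have h0b : (0 : ℂ) ∈ ball (0 : ℂ) ρ := by simp; linarith
  have hcd : ContinuousAt (dslope f 0) 0 :=
    continuousAt_dslope_same.mpr (hf 0 h0b).differentiableAt
  have hlog : ContinuousAt (fun z => Real.log ‖dslope f 0 z‖) 0 :=
    hcd.norm.log (by simp [h1])
  have hev : ∀ᶠ z in nhds (0 : ℂ), Real.log ‖dslope f 0 z‖ < ε := by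
    apply hlog.eventually_lt continuousAt_const
    simpa [h1] using hε
  have him : f '' {z | z ∈ ball (0 : ℂ) ρ ∧ Real.log ‖dslope f 0 z‖ < ε} ∈ nhds (0 : ℂ) := by
    have hs : HasStrictDerivAt f (deriv f 0) 0 := (hf 0 h0b).hasStrictDerivAt
    have hmap := hs.map_nhds_eq (by simp [h1])
    rw [h0] at hmap
    rw [← hmap]
    exact Filter.image_mem_map (Filter.inter_mem (isOpen_ball.mem_nhds h0b) hev)
  obtain ⟨r, hr, hball⟩ := Metric.mem_nhds_iff.mp him
  refine ⟨min 0 (Real.log (r / 2)), fun s hs => ?_⟩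
  have hs0 : s.re ≤ 0 := hs.trans (min_le_left _ _)
  have hes : Complex.exp s ∈ ball (0 : ℂ) r := by
    rw [mem_ball_zero_iff, Complex.norm_exp]
    have := Real.exp_le_exp.mpr (hs.trans (min_le_right _ _))
    rw [Real.exp_log (by positivity)] at this
    linarith
  obtain ⟨z, ⟨hz, hzε⟩, he⟩ := hball hes
  have hz0 : z ≠ 0 := by
    rintro rfl; rw [h0] at he; exact Complex.exp_ne_zero s he.symm
  have hd : dslope f 0 z = Complex.exp s / z := by
    rw [dslope_of_ne _ hz0, slope_def_field, h0, he]; simp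
  rw [hd, norm_div, Real.log_div (norm_ne_zero_iff.mpr (Complex.exp_ne_zero s))
    (norm_ne_zero_iff.mpr hz0), Complex.norm_exp, Real.log_exp] at hzε
  rw [logGrn, ← he, grn_apply hinj hz, Real.log_one]
  apply max_le <;> linarith

/-- The lower bound matching `logGrn_small`. -/
lemma logGrn_small_lower (hf : AnalyticOnNhd ℂ f (ball 0 ρ)) (hinj : Set.InjOn f (ball 0 ρ))
    (h0 : f 0 = 0) (h1 : deriv f 0 = 1) (hρ : 0 < ρ) {ε : ℝ} (hε : 0 < ε) :
    ∃ X : ℝ, ∀ s : ℂ, s.re ≤ X → -s.re - ε ≤ logGrn f ρ s := by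
  have h0b : (0 : ℂ) ∈ ball (0 : ℂ) ρ := by simpa using hρ
  have hcd : ContinuousAt (dslope f 0) 0 :=
    continuousAt_dslope_same.mpr (hf 0 h0b).differentiableAt
  have hlog : ContinuousAt (fun z => Real.log ‖dslope f 0 z‖) 0 :=
    hcd.norm.log (by simp [h1])
  have hev : ∀ᶠ z in nhds (0 : ℂ), -ε < Real.log ‖dslope f 0 z‖ := by
    apply continuousAt_const.eventually_lt hlog
    simpa [h1] using hε
  have him : f '' {z | z ∈ ball (0 : ℂ) ρ ∧ -ε < Real.log ‖dslope f 0 z‖} ∈ nhds (0 : ℂ) := by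
    have hs : HasStrictDerivAt f (deriv f 0) 0 := (hf 0 h0b).hasStrictDerivAt
    have hmap := hs.map_nhds_eq (by simp [h1])
    rw [h0] at hmap
    rw [← hmap]
    exact Filter.image_mem_map (Filter.inter_mem (isOpen_ball.mem_nhds h0b) hev)
  obtain ⟨r, hr, hball⟩ := Metric.mem_nhds_iff.mp him
  refine ⟨Real.log (r / 2), fun s hs => ?_⟩
  have hes : Complex.exp s ∈ ball (0 : ℂ) r := by
    rw [mem_ball_zero_iff, Complex.norm_exp]
    have := Real.exp_le_exp.mpr hs
    rw [Real.exp_log (by positivity)] at this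
    linarith
  obtain ⟨z, ⟨hz, hzε⟩, he⟩ := hball hes
  have hz0 : z ≠ 0 := by
    rintro rfl; rw [h0] at he; exact Complex.exp_ne_zero s he.symm
  have hd : dslope f 0 z = Complex.exp s / z := by
    rw [dslope_of_ne _ hz0, slope_def_field, h0, he]; simp
  rw [hd, norm_div, Real.log_div (norm_ne_zero_iff.mpr (Complex.exp_ne_zero s))
    (norm_ne_zero_iff.mpr hz0), Complex.norm_exp, Real.log_exp] at hzε
  rw [logGrn, ← he, grn_apply hinj hz, Real.log_one]
  exact le_max_of_le_right (by linarith)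

/-- If `logGrn` has no zero on the line `Re s = x`, the circle `‖w‖ = e ^ x` lies in the image of the
open unit disc. Then `‖f‖ ≥ e ^ x` on the unit circle, so that the truncation in Cartan's identity
is vacuous and `circleAverage_log_eq` evaluates the mean. -/
lemma logGrn_line (hf : AnalyticOnNhd ℂ f (ball 0 ρ)) (hinj : Set.InjOn f (ball 0 ρ))
    (h0 : f 0 = 0) (h1 : deriv f 0 = 1) (hρ : 1 < ρ) {x : ℝ}
    (hpos : ∀ t : ℝ, logGrn f ρ (x + t * I) ≠ 0) :
    ∫ t in (-π)..π, logGrn f ρ (x + t * I) = - (2 * π * x) := by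
  have hcirc : ∀ w : ℂ, ‖w‖ = Real.exp x → ∃ z, ‖z‖ < 1 ∧ f z = w := by
    intro w hw
    have hw0 : w ≠ 0 := by rintro rfl; simp at hw; exact (Real.exp_pos x).ne hw
    have hwe : Complex.exp (x + (Complex.arg w) * I) = w := by
      have := Complex.norm_mul_exp_arg_mul_I w
      rw [hw] at this
      rw [Complex.exp_add, ← Complex.ofReal_exp]; exact this
    have h2 := hpos (Complex.arg w)
    rw [logGrn, hwe] at h2
    by_cases h : ∃ z ∈ ball (0 : ℂ) ρ, f z = w
    · obtain ⟨z, hz, rfl⟩ := h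
      refine ⟨z, ?_, rfl⟩
      rw [grn_apply hinj hz] at h2
      by_contra hlt
      apply h2
      have := Real.log_nonneg (not_lt.mp hlt)
      rw [max_eq_left]; simp; linarith
    · exact absurd (grn_eq_zero h) h2
  have hsub : closedBall (0 : ℂ) 1 ⊆ ball 0 ρ := closedBall_subset_ball hρ
  have hne : ∀ z ∈ sphere (0 : ℂ) 1, ‖f z‖ ≠ Real.exp x := by
    intro z hz h
    obtain ⟨z', hz', he⟩ := hcirc (f z) h
    have := hinj (hsub (by simpa using hz'.le)) (hsub (sphere_subset_closedBall hz)) he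
    rw [this] at hz'
    simp at hz; linarith
  have hconn : IsPreconnected (sphere (0 : ℂ) 1) :=
    isPreconnected_sphere (by rw [Complex.rank_real_complex]; norm_num) 0 1
  have hcont : ContinuousOn (fun z => ‖f z‖) (sphere (0 : ℂ) 1) :=
    (hf.continuousOn.mono (sphere_subset_closedBall.trans hsub)).norm
  have hgt : ∀ z ∈ sphere (0 : ℂ) 1, Real.exp x ≤ ‖f z‖ := by
    intro z hz
    by_contra hlt
    push Not at hlt
    have hall : ∀ y ∈ sphere (0 : ℂ) 1, ‖f y‖ ≤ Real.exp x := by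
      intro y hy
      by_contra hgt
      push Not at hgt
      obtain ⟨v, hv, hve⟩ := hconn.intermediate_value hz hy hcont ⟨hlt.le, hgt.le⟩
      exact hne v hv hve
    obtain ⟨y, hy, hyM⟩ := (isCompact_sphere (0 : ℂ) 1).exists_isMaxOn ⟨z, hz⟩ hcont
    have hylt : ‖f y‖ < Real.exp x := lt_of_le_of_ne (hall y hy) (hne y hy)
    obtain ⟨z', hz', he⟩ := hcirc (Real.exp x : ℂ) (by simp)
    have hmax : ‖f z'‖ ≤ ‖f y‖ := by
      apply Complex.norm_le_of_forall_mem_frontier_norm_le (U := ball 0 1) isBounded_ball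
      · apply DifferentiableOn.diffContOnCl
        rw [closure_ball _ one_ne_zero]
        exact hf.differentiableOn.mono hsub
      · intro v hv
        rw [frontier_ball _ one_ne_zero] at hv
        exact hyM hv
      · rw [closure_ball _ one_ne_zero]; simpa using hz'.le
    rw [he] at hmax
    simp at hmax
    linarith
  have key := circleAverage_grn hf hinj h0 one_pos hρ x
  have e1 : circleAverage (fun ζ => max 0 (Real.log ‖f ζ‖ - x)) 0 1
      = circleAverage (fun ζ => Real.log ‖f ζ‖ - x) 0 1 := by
    apply circleAverage_congr_sphere
    intro z hz
    rw [abs_one] at hz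
    have := Real.log_le_log (Real.exp_pos x) (hgt z hz)
    rw [Real.log_exp] at this
    simp only
    rw [max_eq_right]; linarith
  have hci : CircleIntegrable (fun ζ => Real.log ‖f ζ‖) 0 1 := by
    apply MeromorphicOn.circleIntegrable_log_norm
    intro z hz
    rw [abs_one] at hz
    exact (hf z (hsub (sphere_subset_closedBall hz))).meromorphicAt
  rw [e1, circleAverage_fun_sub hci (circleIntegrable_const _ _ _), circleAverage_const,
    circleAverage_log_eq hf hinj h0 h1 one_pos hρ, circleAverage_exp_eq,
    inv_mul_eq_iff_eq_mul₀ (by positivity)] at key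
  simp only [logGrn]
  rw [key]; simp
end

/-! ### The Koebe function -/

/-- The Koebe function. -/
noncomputable def koebe (z : ℂ) : ℂ := z / (1 - z) ^ 2

lemma one_sub_ne_zero {z : ℂ} (hz : z ∈ ball (0 : ℂ) 1) : 1 - z ≠ 0 := by
  intro h
  have : z = 1 := (sub_eq_zero.mp h).symm
  simp [this] at hz

lemma koebe_zero : koebe 0 = 0 := by simp [koebe]

lemma koebe_analytic : AnalyticOnNhd ℂ koebe (ball 0 1) := fun _ hz =>
  analyticAt_id.div ((analyticAt_const.sub analyticAt_id).pow 2) (pow_ne_zero 2 (one_sub_ne_zero hz))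

lemma koebe_injOn : Set.InjOn koebe (ball 0 1) := by
  intro z hz w hw h
  have hz1 := one_sub_ne_zero hz
  have hw1 := one_sub_ne_zero hw
  rw [koebe, koebe, div_eq_div_iff (pow_ne_zero 2 hz1) (pow_ne_zero 2 hw1)] at h
  have h2 : (z - w) * (1 - z * w) = 0 := by linear_combination h
  rcases mul_eq_zero.mp h2 with h3 | h3
  · exact sub_eq_zero.mp h3
  · exfalso
    have h4 : ‖z * w‖ = 1 := by rw [← sub_eq_zero.mp h3]; simp
    rw [norm_mul] at h4
    rw [mem_ball_zero_iff] at hz hw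
    nlinarith [norm_nonneg z, norm_nonneg w]

lemma koebe_deriv : deriv koebe 0 = 1 := by
  have h : HasDerivAt koebe ((1 * (1 - 0) ^ 2 - 0 * ((2 : ℕ) * (1 - 0) ^ (2 - 1) * (0 - 1)))
      / ((1 - 0) ^ 2) ^ 2) (0 : ℂ) := by
    apply HasDerivAt.div (hasDerivAt_id (0 : ℂ))
    · have : HasDerivAt (fun z : ℂ => 1 - z) (0 - 1) 0 := (hasDerivAt_const _ _).sub (hasDerivAt_id _)
      exact this.pow 2
    · simp
  rw [h.deriv]; simp

/-- The square root `√(1 + 4w)`; it equals `(1 + z) / (1 - z)` when `w = koebe z`. -/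
noncomputable def ksqrt (w : ℂ) : ℂ := (1 + 4 * w) ^ (2⁻¹ : ℂ)

lemma ksqrt_sq (w : ℂ) : ksqrt w ^ 2 = 1 + 4 * w := by
  simp [ksqrt]

lemma ksqrt_re (w : ℂ) : (ksqrt w).re = √((‖1 + 4 * w‖ + (1 + 4 * w).re) / 2) :=
  Complex.cpow_inv_two_re _

lemma ksqrt_re_nonneg (w : ℂ) : 0 ≤ (ksqrt w).re := by
  rw [ksqrt_re]; exact Real.sqrt_nonneg _

lemma ksqrt_norm_sq (w : ℂ) : ‖ksqrt w‖ ^ 2 = ‖1 + 4 * w‖ := by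
  rw [← norm_pow, ksqrt_sq]

lemma normSq_add_one (c : ℂ) : ‖c + 1‖ ^ 2 = ‖c‖ ^ 2 + 1 + 2 * c.re := by
  rw [Complex.sq_norm, Complex.sq_norm, Complex.normSq_apply, Complex.normSq_apply]; simp; ring

lemma normSq_sub_one (c : ℂ) : ‖c - 1‖ ^ 2 = ‖c‖ ^ 2 + 1 - 2 * c.re := by
  rw [Complex.sq_norm, Complex.sq_norm, Complex.normSq_apply, Complex.normSq_apply]; simp; ring

lemma ksqrt_add_one_ne (w : ℂ) : ksqrt w + 1 ≠ 0 := by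
  intro h
  have := congrArg Complex.re h
  simp at this
  linarith [ksqrt_re_nonneg w]

lemma ksqrt_sub_one_ne {w : ℂ} (hw : w ≠ 0) : ksqrt w - 1 ≠ 0 := by
  intro h
  have h1 := ksqrt_sq w
  rw [sub_eq_zero.mp h] at h1
  apply hw
  linear_combination (-1 / 4 : ℂ) * h1

/-- On the image of the disc this is the inverse of the Koebe function. -/
noncomputable def kinv (w : ℂ) : ℂ := (ksqrt w - 1) / (ksqrt w + 1)

/-- The Green function of the Koebe domain is `-log` of the modulus of the inverse function. The
formula holds on the omitted slit too: there `ksqrt w` is imaginary and `‖kinv w‖ = 1`. -/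
lemma grn_koebe {w : ℂ} (hw : w ≠ 0) : grn koebe 1 1 w = -Real.log ‖kinv w‖ := by
  have hp := ksqrt_add_one_ne w
  have hm := ksqrt_sub_one_ne hw
  rcases (ksqrt_re_nonneg w).eq_or_lt with h | h
  · have hn : ‖kinv w‖ = 1 := by
      have h1 := normSq_add_one (ksqrt w)
      have h2 := normSq_sub_one (ksqrt w)
      rw [← h] at h1 h2
      have h3 : ‖ksqrt w - 1‖ = ‖ksqrt w + 1‖ := by
        rw [← sq_eq_sq₀ (norm_nonneg _) (norm_nonneg _), h1, h2]; ring
      rw [kinv, norm_div, h3, div_self (norm_ne_zero_iff.mpr hp)]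
    rw [hn, Real.log_one, neg_zero]
    apply grn_eq_zero
    rintro ⟨z, hz, rfl⟩
    -- `(1 + z) / (1 - z)` has positive real part and squares to `1 + 4 koebe z`
    have hz1 := one_sub_ne_zero hz
    have h1 : ((1 + z) / (1 - z)) ^ 2 = ksqrt (koebe z) ^ 2 := by
      rw [ksqrt_sq, koebe]; field_simp; ring
    have h2 : ((1 + z) / (1 - z)).re = 0 := by
      rcases sq_eq_sq_iff_eq_or_eq_neg.mp h1 with h3 | h3
      · rw [h3, ← h]
      · rw [h3, Complex.neg_re, ← h, neg_zero]
    have h4 : ((1 + z) / (1 - z)).re * Complex.normSq (1 - z) = 1 - ‖z‖ ^ 2 := by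
      have : Complex.normSq (1 - z) ≠ 0 := by simpa using hz1
      rw [Complex.div_re, Complex.sq_norm, Complex.normSq_apply z]
      field_simp
      simp; ring
    rw [h2, zero_mul] at h4
    rw [mem_ball_zero_iff] at hz
    nlinarith [norm_nonneg z]
  · have hlt : ‖kinv w‖ < 1 := by
      rw [kinv, norm_div, div_lt_one (norm_pos_iff.mpr hp), ← sq_lt_sq₀ (norm_nonneg _)
        (norm_nonneg _), normSq_add_one, normSq_sub_one]
      linarith
    have hk : koebe (kinv w) = w := by
      have h1 : 1 - kinv w = 2 / (ksqrt w + 1) := by rw [kinv]; field_simp; ring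
      rw [koebe, h1, kinv]
      field_simp
      linear_combination ksqrt_sq w
    have hmem : kinv w ∈ ball (0 : ℂ) 1 := by simpa using hlt
    have := grn_apply (R := 1) koebe_injOn hmem
    rw [hk] at this
    rw [this, Real.log_one, zero_sub, max_eq_right]
    have h0 := Real.log_nonpos (norm_nonneg _) hlt.le
    linarith

lemma kinv_ne_zero {w : ℂ} (hw : w ≠ 0) : kinv w ≠ 0 :=
  div_ne_zero (ksqrt_sub_one_ne hw) (ksqrt_add_one_ne w)

lemma norm_kinv (w : ℂ) : ‖kinv w‖ =
    √((‖1 + 4 * w‖ + 1 - 2 * √((‖1 + 4 * w‖ + (1 + 4 * w).re) / 2)) /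
      (‖1 + 4 * w‖ + 1 + 2 * √((‖1 + 4 * w‖ + (1 + 4 * w).re) / 2))) := by
  rw [← ksqrt_re, ← ksqrt_norm_sq, ← normSq_add_one, ← normSq_sub_one, ← div_pow,
    Real.sqrt_sq (by positivity), kinv, norm_div]

/-- The logarithmic Green function of the Koebe domain. -/
noncomputable def kV (s : ℂ) : ℝ := logGrn koebe 1 s

lemma kV_eq (s : ℂ) : kV s = -Real.log ‖kinv (Complex.exp s)‖ := grn_koebe (Complex.exp_ne_zero s)

lemma kV_nonneg (s : ℂ) : 0 ≤ kV s := logGrn_nonneg s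

lemma continuous_kV : Continuous kV := by
  have h1 : kV = fun s => -Real.log ‖kinv (Complex.exp s)‖ := funext kV_eq
  rw [h1]
  refine (Continuous.log ?_ fun s => norm_ne_zero_iff.mpr (kinv_ne_zero (Complex.exp_ne_zero s))).neg
  simp_rw [norm_kinv]
  refine Continuous.sqrt (Continuous.div (by fun_prop) (by fun_prop) fun s => ?_)
  positivity

lemma kV_conj (x t : ℝ) : kV (x + ((-t : ℝ) : ℂ) * I) = kV (x + t * I) := by
  have h : Complex.exp (x + ((-t : ℝ) : ℂ) * I) = (starRingEnd ℂ) (Complex.exp (x + t * I)) := by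
    rw [← Complex.exp_conj]; simp
  have h2 : (1 + 4 * (starRingEnd ℂ) (Complex.exp (x + t * I)))
      = (starRingEnd ℂ) (1 + 4 * Complex.exp (x + t * I)) := by
    simp [Complex.conj_ofNat]
  rw [kV_eq, kV_eq, norm_kinv, norm_kinv, h, h2, Complex.norm_conj, Complex.conj_re]

lemma analyticAt_kinv_exp {s : ℂ} (hs : |s.im| < π) :
    AnalyticAt ℂ (fun s => kinv (Complex.exp s)) s := by
  have hsl : 1 + 4 * Complex.exp s ∈ slitPlane := by
    by_cases h : (Complex.exp s).im = 0
    · left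
      have hsin : Real.sin s.im = 0 := by
        rw [Complex.exp_im] at h
        exact (mul_eq_zero.mp h).resolve_left (Real.exp_pos _).ne'
      have h0 : s.im = 0 := by
        rw [abs_lt] at hs
        exact (Real.sin_eq_zero_iff_of_lt_of_lt hs.1 hs.2).mp hsin
      have : 0 < (Complex.exp s).re := by
        rw [Complex.exp_re, h0, Real.cos_zero, mul_one]; exact Real.exp_pos _
      simp; linarith
    · right; simpa using h
  have h1 : AnalyticAt ℂ (fun s => 1 + 4 * Complex.exp s) s :=
    analyticAt_const.add (analyticAt_const.mul analyticAt_cexp)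
  have h2 : AnalyticAt ℂ (fun s => ksqrt (Complex.exp s)) s := h1.cpow analyticAt_const hsl
  exact (h2.sub analyticAt_const).div (h2.add analyticAt_const) (ksqrt_add_one_ne _)

/-- `kV` is harmonic off the lines `Im s ∈ π + 2πℤ`, the preimage of the negative axis. -/
lemma kV_mean {s : ℂ} {ε : ℝ} (hε : 0 < ε) (hs : |s.im| + ε < π) :
    circleAverage kV s ε = kV s := by
  have h1 : kV = fun s => -Real.log ‖kinv (Complex.exp s)‖ := funext kV_eq
  have h2 := AnalyticOnNhd.circleAverage_log_norm_of_ne_zero (R := ε) (c := s)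
    (g := fun s => kinv (Complex.exp s)) (fun z hz => by
      apply analyticAt_kinv_exp
      rw [abs_of_pos hε, mem_closedBall_iff_norm] at hz
      have h3 := (Complex.abs_im_le_norm (z - s)).trans hz
      rw [Complex.sub_im] at h3
      have h4 := abs_sub_abs_le_abs_sub z.im s.im
      linarith) (fun z _ => kinv_ne_zero (Complex.exp_ne_zero z))
  rw [h1]
  have h3 := circleAverage_fun_smul (a := (-1 : ℝ)) (c := s) (R := ε)
    (f := fun z => Real.log ‖kinv (Complex.exp z)‖)
  simp only [smul_eq_mul, neg_mul, one_mul] at h3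
  rw [h3, h2]

lemma kV_lipschitz {s : ℂ} (hs : |s.im| < π) :
    ∃ L : ℝ, 0 ≤ L ∧ ∃ r > 0, ∀ a ∈ ball s r, ∀ b ∈ ball s r, |kV a - kV b| ≤ L * ‖a - b‖ := by
  have h1 : kV = fun s => -Real.log ‖kinv (Complex.exp s)‖ := funext kV_eq
  have h2 : ContDiffAt ℝ 1 kV s := by
    rw [h1]
    have h3 : ContDiffAt ℝ 1 (fun s => kinv (Complex.exp s)) s :=
      ((analyticAt_kinv_exp hs).contDiffAt (n := 1)).restrict_scalars ℝ
    have hne := kinv_ne_zero (Complex.exp_ne_zero s)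
    exact ((h3.norm ℝ hne).log (norm_ne_zero_iff.mpr hne)).neg
  obtain ⟨K, t, ht, hK⟩ := h2.exists_lipschitzOnWith
  obtain ⟨r, hr, hb⟩ := Metric.mem_nhds_iff.mp ht
  refine ⟨K, K.2, r, hr, fun a ha b hb' => ?_⟩
  have := hK.dist_le_mul a (hb ha) b (hb hb')
  rwa [Real.dist_eq, dist_eq_norm] at this

lemma circleAverage_koebe (x : ℝ) {R : ℝ} (hR : 0 < R) (hR1 : R < 1) :
    circleAverage (fun ζ => max 0 (Real.log ‖koebe ζ‖ - x)) 0 R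
      = (2 * π)⁻¹ * ∫ t in (-π)..π, max 0 (kV (x + t * I) + Real.log R) := by
  rw [← circleAverage_grn koebe_analytic koebe_injOn koebe_zero hR hR1, circleAverage_exp_eq]
  simp_rw [grn_shift koebe_injOn hR1.le hR]
  rfl

/-- Dropping the truncation in Cartan's identity can only decrease the mean. -/
lemma kV_line (x : ℝ) : - (2 * π * x) ≤ ∫ t in (-π)..π, kV (x + t * I) := by
  have hcV : Continuous fun t : ℝ => kV (x + t * I) := continuous_kV.comp (by fun_prop)
  have hR : ∀ R : ℝ, 0 < R → R < 1 → 2 * π * (Real.log R - x) ≤ ∫ t in (-π)..π, kV (x + t * I) := by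
    intro R hR hR1
    have hsub : closedBall (0 : ℂ) R ⊆ ball 0 1 := closedBall_subset_ball hR1
    have e1 : circleAverage (fun ζ => Real.log ‖koebe ζ‖ - x) 0 R = Real.log R - x := by
      have hci : CircleIntegrable (fun ζ => Real.log ‖koebe ζ‖) 0 R := by
        apply MeromorphicOn.circleIntegrable_log_norm
        intro z hz
        rw [abs_of_pos hR] at hz
        exact (koebe_analytic z (hsub (sphere_subset_closedBall hz))).meromorphicAt
      rw [circleAverage_fun_sub hci (circleIntegrable_const _ _ _), circleAverage_const,
        circleAverage_log_eq koebe_analytic koebe_injOn koebe_zero koebe_deriv hR hR1]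
    have hcl : ContinuousOn (fun ζ => Real.log ‖koebe ζ‖ - x) (sphere 0 R) := by
      refine (ContinuousOn.log ((koebe_analytic.continuousOn.mono
        (sphere_subset_closedBall.trans hsub)).norm) fun z hz => ?_).sub continuousOn_const
      have hz0 : z ≠ 0 := by rintro rfl; simp at hz; exact hR.ne hz
      exact norm_ne_zero_iff.mpr (ne_zero_of_mem koebe_injOn koebe_zero
        (hsub (sphere_subset_closedBall hz)) hz0)
    have e2 : Real.log R - x ≤ circleAverage (fun ζ => max 0 (Real.log ‖koebe ζ‖ - x)) 0 R := by
      rw [← e1]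
      apply circleAverage_mono
      · exact hcl.circleIntegrable hR.le
      · exact (ContinuousOn.sup continuousOn_const hcl).circleIntegrable hR.le
      · exact fun z _ => le_max_right _ _
    rw [circleAverage_koebe x hR hR1, inv_mul_eq_div, le_div_iff₀ (by positivity)] at e2
    have e3 : ∫ t in (-π)..π, max 0 (kV (x + t * I) + Real.log R)
        ≤ ∫ t in (-π)..π, kV (x + t * I) := by
      apply intervalIntegral.integral_mono_on (by linarith [Real.pi_pos])
      · exact (continuous_const.max (hcV.add continuous_const)).intervalIntegrable _ _
      · exact hcV.intervalIntegrable _ _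
      · intro t _
        have := Real.log_nonpos hR.le hR1.le
        exact max_le (kV_nonneg _) (by linarith)
    linarith
  have hlim : Filter.Tendsto (fun R : ℝ => 2 * π * (Real.log R - x)) (nhdsWithin 1 (Set.Iio 1))
      (nhds (2 * π * (Real.log 1 - x))) := by
    have : ContinuousAt (fun R : ℝ => 2 * π * (Real.log R - x)) 1 :=
      continuousAt_const.mul ((Real.continuousAt_log one_ne_zero).sub continuousAt_const)
    exact this.tendsto.mono_left nhdsWithin_le_nhds
  have := le_of_tendsto hlim (b := ∫ t in (-π)..π, kV (x + t * I)) (by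
    filter_upwards [Ioo_mem_nhdsLT (show (0 : ℝ) < 1 by norm_num)] with R h
    exact hR R h.1 h.2)
  simpa using this

/-! ### Baernstein's star function -/

section
open MeasureTheory

/-- The functional whose infimum over `c ≥ 0` is the star function. -/
noncomputable def starD (φ : ℝ → ℝ) (y c : ℝ) : ℝ :=
  2 * y * c + ∫ t in (-π)..π, max 0 (φ t - c)

/-- Baernstein's star function of `φ` at `y`, i.e. the largest integral of `φ` over a set of
measure `2 * y` in a period, written in its dual form. -/
noncomputable def starFn (φ : ℝ → ℝ) (y : ℝ) : ℝ := ⨅ c : NNReal, starD φ y c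

section
variable {φ : ℝ → ℝ}

lemma starD_nonneg {y c : ℝ} (hy : 0 ≤ y) (hc : 0 ≤ c) : 0 ≤ starD φ y c :=
  add_nonneg (by positivity) (intervalIntegral.integral_nonneg (by linarith [Real.pi_pos])
    fun _ _ => le_max_left _ _)

lemma star_bdd {y : ℝ} (hy : 0 ≤ y) : BddBelow (Set.range fun c : NNReal => starD φ y c) :=
  ⟨0, by rintro _ ⟨c, rfl⟩; exact starD_nonneg hy c.2⟩

lemma star_le {y c : ℝ} (hy : 0 ≤ y) (hc : 0 ≤ c) : starFn φ y ≤ starD φ y c :=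
  ciInf_le (star_bdd hy) (⟨c, hc⟩ : NNReal)

lemma le_star {y a : ℝ} (h : ∀ c, 0 ≤ c → a ≤ starD φ y c) : a ≤ starFn φ y :=
  le_ciInf fun c => h c c.2

/-- Easy half of duality: `e φ ≤ c e + max 0 (φ - c)` for `0 ≤ e ≤ 1`. -/
lemma integral_le_star (hφ : Continuous φ) (hper : Function.Periodic φ (2 * π)) {e : ℝ → ℝ}
    (he : Measurable e) (he0 : ∀ t, 0 ≤ e t) (he1 : ∀ t, e t ≤ 1) (a : ℝ) :
    ∫ t in a..a + 2 * π, e t * φ t ≤ starFn φ ((∫ t in a..a + 2 * π, e t) / 2) := by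
  apply le_star
  intro c hc
  have hle : a ≤ a + 2 * π := by linarith [Real.pi_pos]
  have hb : ∀ ψ : ℝ → ℝ, Continuous ψ →
      IntervalIntegrable (fun t => e t * ψ t) volume a (a + 2 * π) := by
    intro ψ hψ
    refine (hψ.abs.intervalIntegrable a (a + 2 * π)).mono_fun'
      (he.aestronglyMeasurable.mul hψ.aestronglyMeasurable) ?_
    filter_upwards with t
    rw [norm_mul, Real.norm_of_nonneg (he0 t)]
    exact mul_le_of_le_one_left (norm_nonneg _) (he1 t)
  have hi1 : IntervalIntegrable e volume a (a + 2 * π) := by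
    simpa using hb (fun _ => 1) continuous_const
  have hmx : Continuous fun t => max 0 (φ t - c) := continuous_const.max (hφ.sub continuous_const)
  have hwin : ∫ t in a..a + 2 * π, max 0 (φ t - c) = ∫ t in (-π)..π, max 0 (φ t - c) := by
    have hp : Function.Periodic (fun t => max 0 (φ t - c)) (2 * π) := fun t => by
      simp only [hper t]
    rw [hp.intervalIntegral_add_eq a (-π)]
    congr 1; ring
  have hcalc : ∫ t in a..a + 2 * π, e t * φ t
      ≤ ∫ t in a..a + 2 * π, (e t * c + max 0 (φ t - c)) := by
    refine intervalIntegral.integral_mono_on hle (hb φ hφ)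
      ((hi1.mul_const c).add (hmx.intervalIntegrable _ _)) ?_
    intro t _
    have h1 := le_max_left 0 (φ t - c)
    have h2 := le_max_right 0 (φ t - c)
    nlinarith [he0 t, he1 t, mul_le_mul_of_nonneg_left h2 (he0 t),
      mul_le_of_le_one_left h1 (he1 t)]
  rw [intervalIntegral.integral_add (hi1.mul_const c) (hmx.intervalIntegrable _ _),
    intervalIntegral.integral_mul_const, hwin] at hcalc
  rw [starD]
  linarith

/-- `starFn φ` is an infimum of affine functions of `y`, hence concave. -/
lemma star_concave {y a A : ℝ} (ha : 0 ≤ a) (haA : a ≤ A) (hA : A ≤ y) :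
    starFn φ (y + A) + starFn φ (y - A) ≤ starFn φ (y + a) + starFn φ (y - a) := by
  apply le_of_forall_pos_le_add
  intro ε hε
  obtain ⟨c₁, h₁⟩ := exists_lt_of_ciInf_lt (show starFn φ (y + a) < starFn φ (y + a) + ε / 2 by linarith)
  obtain ⟨c₂, h₂⟩ := exists_lt_of_ciInf_lt (show starFn φ (y - a) < starFn φ (y - a) + ε / 2 by linarith)
  simp only [starD] at h₁ h₂
  have hc₁ : 0 ≤ (c₁ : ℝ) := c₁.2
  have hc₂ : 0 ≤ (c₂ : ℝ) := c₂.2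
  rcases le_total (c₁ : ℝ) c₂ with h | h
  · have k1 := star_le (φ := φ) (y := y + A) (by linarith) hc₁
    have k2 := star_le (φ := φ) (y := y - A) (by linarith) hc₂
    simp only [starD] at k1 k2
    nlinarith
  · have k1 := star_le (φ := φ) (y := y + A) (by linarith) hc₂
    have k2 := star_le (φ := φ) (y := y - A) (by linarith) hc₁
    simp only [starD] at k1 k2
    nlinarith

/-- Difference quotient estimate for translates of a `0-1`-valued periodic function that is not
almost everywhere constant. Going round a period from a density point `p` of `{e = 1}` to a density
point `q` of `{e = 0}` and back, translation by `s` changes the mass on either arc by almost `s`. -/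
lemma shift_estimate {e : ℝ → ℝ} (he : Measurable e) (he01 : ∀ t, e t = 0 ∨ e t = 1)
    (hper : Function.Periodic e (2 * π)) (h0 : 0 < ∫ t in (-π)..π, e t)
    (h1 : ∫ t in (-π)..π, e t < 2 * π) {η : ℝ} (hη : 0 < η) :
    ∃ s₀ > 0, ∀ s, 0 ≤ s → s < s₀ → 2 * (1 - η) * s ≤ ∫ t in (-π)..π, |e (t + s) - e t| := by
  have he0 : ∀ t, 0 ≤ e t := fun t => by rcases he01 t with h | h <;> simp [h]
  have he1 : ∀ t, e t ≤ 1 := fun t => by rcases he01 t with h | h <;> simp [h]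
  have hii : ∀ a b, IntervalIntegrable e volume a b := by
    intro a b
    refine (intervalIntegrable_const (c := (1 : ℝ))).mono_fun he.aestronglyMeasurable ?_
    filter_upwards with t
    rw [Real.norm_of_nonneg (he0 t)]; simpa using he1 t
  have hloc : LocallyIntegrable e volume := by
    refine (locallyIntegrable_const (1 : ℝ)).mono he.aestronglyMeasurable ?_
    filter_upwards with t
    rw [Real.norm_of_nonneg (he0 t)]; simpa using he1 t
  have hae := LocallyIntegrable.ae_hasDerivAt_integral hloc
  have hwin : ∀ a, ∫ t in a..a + 2 * π, e t = ∫ t in (-π)..π, e t := by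
    intro a
    rw [hper.intervalIntegral_add_eq a (-π)]
    congr 1; ring
  -- density points of `{e = 1}` and of `{e = 0}`
  obtain ⟨p, hp1, hpd⟩ : ∃ p, e p = 1 ∧ ∀ c, HasDerivAt (fun x => ∫ t in c..x, e t) (e p) p := by
    by_contra hcon
    push Not at hcon
    have : ∀ᵐ t, e t = 0 := by
      filter_upwards [hae] with t ht
      rcases he01 t with h | h
      · exact h
      · obtain ⟨c, hc⟩ := hcon t h
        exact absurd (ht c) hc
    have h2 : ∫ t in (-π)..π, e t = 0 := by
      rw [intervalIntegral.integral_congr_ae (g := fun _ => (0 : ℝ))]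
      · simp
      · filter_upwards [this] with t ht _ using ht
    linarith
  obtain ⟨q, ⟨hpq, hqp⟩, hq0, hqd⟩ : ∃ q ∈ Set.Ioo p (p + 2 * π), e q = 0 ∧
      ∀ c, HasDerivAt (fun x => ∫ t in c..x, e t) (e q) q := by
    by_contra hcon
    push Not at hcon
    have : ∀ᵐ t, t ∈ Set.uIoc p (p + 2 * π) → e t = 1 := by
      have hne : ∀ᵐ t : ℝ, t ≠ p + 2 * π := by simp [ae_iff]
      filter_upwards [hae, hne] with t ht htn htm
      rw [Set.uIoc_of_le (by linarith [Real.pi_pos])] at htm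
      rcases he01 t with h | h
      · obtain ⟨c, hc⟩ := hcon t ⟨htm.1, lt_of_le_of_ne htm.2 htn⟩ h
        exact absurd (ht c) hc
      · exact h
    have h2 : ∫ t in p..p + 2 * π, e t = 2 * π := by
      rw [intervalIntegral.integral_congr_ae (g := fun _ => (1 : ℝ)) this]
      simp
    rw [hwin] at h2
    linarith
  have hd1 : HasDerivAt (fun x => ∫ t in p..x, e t) 1 p := hp1 ▸ hpd p
  have hd0 : HasDerivAt (fun x => ∫ t in q..x, e t) 0 q := hq0 ▸ hqd q
  obtain ⟨s₁, hs₁, hs₁'⟩ : ∃ s₁ > 0, ∀ s, 0 ≤ s → s < s₁ →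
      (1 - η / 2) * s ≤ ∫ t in p..p + s, e t := by
    have h := (hasDerivAt_iff_isLittleO.1 hd1).def (half_pos hη)
    obtain ⟨r, hr, hr'⟩ := Metric.eventually_nhds_iff.1 h
    refine ⟨r, hr, fun s hs hsr => ?_⟩
    have := hr' (y := p + s) (by simpa [Real.dist_eq, abs_of_nonneg hs] using hsr)
    simp only [intervalIntegral.integral_same, sub_zero, add_sub_cancel_left, smul_eq_mul, mul_one,
      Real.norm_eq_abs, abs_of_nonneg hs] at this
    linarith [(abs_le.1 this).1]
  obtain ⟨s₂, hs₂, hs₂'⟩ : ∃ s₂ > 0, ∀ s, 0 ≤ s → s < s₂ →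
      ∫ t in q..q + s, e t ≤ η / 2 * s := by
    have h := (hasDerivAt_iff_isLittleO.1 hd0).def (half_pos hη)
    obtain ⟨r, hr, hr'⟩ := Metric.eventually_nhds_iff.1 h
    refine ⟨r, hr, fun s hs hsr => ?_⟩
    have := hr' (y := q + s) (by simpa [Real.dist_eq, abs_of_nonneg hs] using hsr)
    simp only [intervalIntegral.integral_same, sub_zero, add_sub_cancel_left, smul_eq_mul, mul_zero,
      Real.norm_eq_abs, abs_of_nonneg hs] at this
    linarith [(abs_le.1 this).2]
  refine ⟨min s₁ s₂, lt_min hs₁ hs₂, fun s hs hss => ?_⟩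
  have k1 := hs₁' s hs (hss.trans_le (min_le_left _ _))
  have k2 := hs₂' s hs (hss.trans_le (min_le_right _ _))
  have his : ∀ a b, IntervalIntegrable (fun t => e (t + s)) volume a b := fun a b => by
    simpa using (hii (a + s) (b + s)).comp_add_right s
  have hdiff : ∀ a b, ∫ t in a..b, (e (t + s) - e t)
      = (∫ t in b..b + s, e t) - ∫ t in a..a + s, e t := by
    intro a b
    rw [intervalIntegral.integral_sub (his a b) (hii a b),
      intervalIntegral.integral_comp_add_right]
    have e1 := intervalIntegral.integral_add_adjacent_intervals (hii a (a + s)) (hii (a + s) (b + s))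
    have e2 := intervalIntegral.integral_add_adjacent_intervals (hii a b) (hii b (b + s))
    linarith
  have hP : ∫ t in p + 2 * π..p + 2 * π + s, e t = ∫ t in p..p + s, e t := by
    have := intervalIntegral.integral_comp_add_right (a := p) (b := p + s) e (2 * π)
    rw [show p + s + 2 * π = p + 2 * π + s by ring] at this
    rw [← this]
    exact intervalIntegral.integral_congr fun t _ => hper t
  have hia : ∀ a b, IntervalIntegrable (fun t => |e (t + s) - e t|) volume a b :=
    fun a b => ((his a b).sub (hii a b)).abs
  have hw : ∫ t in (-π)..π, |e (t + s) - e t| = ∫ t in p..p + 2 * π, |e (t + s) - e t| := by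
    have hp : Function.Periodic (fun t => |e (t + s) - e t|) (2 * π) := fun t => by
      simp only [hper t, show t + 2 * π + s = (t + s) + 2 * π by ring, hper (t + s)]
    rw [hp.intervalIntegral_add_eq p (-π)]
    congr 1; ring
  rw [hw, ← intervalIntegral.integral_add_adjacent_intervals (hia p q) (hia q (p + 2 * π))]
  have l1 : -(∫ t in p..q, (e (t + s) - e t)) ≤ ∫ t in p..q, |e (t + s) - e t| :=
    (neg_le_abs _).trans (intervalIntegral.abs_integral_le_integral_abs hpq.le)
  have l2 : ∫ t in q..p + 2 * π, (e (t + s) - e t) ≤ ∫ t in q..p + 2 * π, |e (t + s) - e t| :=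
    (le_abs_self _).trans (intervalIntegral.abs_integral_le_integral_abs hqp.le)
  rw [hdiff] at l1 l2
  rw [hP] at l2
  linarith

/-- The bathtub principle: the star function is attained by the characteristic function of a
superlevel set, corrected on the critical level. -/
lemma exists_bathtub (hφ : Continuous φ) (hφ0 : ∀ t, 0 ≤ φ t) (hper : Function.Periodic φ (2 * π))
    {y : ℝ} (hy : 0 < y) (hyπ : y < π) :
    ∃ e : ℝ → ℝ, Measurable e ∧ (∀ t, e t = 0 ∨ e t = 1) ∧ Function.Periodic e (2 * π) ∧
      (∫ t in (-π)..π, e t = 2 * y) ∧ starFn φ y ≤ ∫ t in (-π)..π, e t * φ t := by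
  have hππ : -π ≤ π := by linarith [Real.pi_pos]
  set μ : Measure ℝ := volume.restrict (Set.Ioc (-π) π) with hμ
  have hμu : μ Set.univ = ENNReal.ofReal (2 * π) := by
    rw [hμ, Measure.restrict_apply_univ, Real.volume_Ioc]; congr 1; ring
  have : IsFiniteMeasure μ := ⟨by rw [hμu]; exact ENNReal.ofReal_lt_top⟩
  have hmeas : ∀ c, MeasurableSet {t | c < φ t} := fun c => measurableSet_lt measurable_const hφ.measurable
  obtain ⟨B, hB⟩ : ∃ B, ∀ t, φ t ≤ B := by
    obtain ⟨B, hB⟩ := (isCompact_Icc (a := (0:ℝ)) (b := 2 * π)).exists_bound_of_continuousOn hφ.continuousOn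
    refine ⟨B, fun t => ?_⟩
    obtain ⟨s, hs, hst⟩ := hper.exists_mem_Ico₀ (by positivity) t
    rw [hst]
    exact (le_abs_self _).trans (hB s ⟨hs.1, hs.2.le⟩)
  -- the infimum `c₀` of `A` is the critical level
  set A : Set ℝ := {c | 0 ≤ c ∧ μ {t | c < φ t} ≤ ENNReal.ofReal (2 * y)} with hA
  have hAne : A.Nonempty := ⟨max 0 B, le_max_left _ _, by
    have : {t | max 0 B < φ t} = ∅ := by
      ext t; simpa using fun _ => hB t
    rw [this, measure_empty]; exact zero_le⟩
  have hAb : BddBelow A := ⟨0, fun c hc => hc.1⟩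
  set c₀ := sInf A with hc₀
  have hc0 : 0 ≤ c₀ := le_csInf hAne fun c hc => hc.1
  have hanti : ∀ c d, c ≤ d → μ {t | d < φ t} ≤ μ {t | c < φ t} := fun c d h =>
    measure_mono fun t (ht : d < φ t) => lt_of_le_of_lt h ht
  have hup : μ {t | c₀ < φ t} ≤ ENNReal.ofReal (2 * y) := by
    have : {t | c₀ < φ t} = ⋃ n : ℕ, {t | c₀ + 1 / ((n : ℝ) + 1) < φ t} := by
      ext t
      simp only [Set.mem_ofPred_eq, Set.mem_iUnion]
      constructor
      · intro h
        obtain ⟨n, hn⟩ := exists_nat_one_div_lt (sub_pos.2 h)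
        exact ⟨n, by linarith⟩
      · rintro ⟨n, hn⟩
        have : 0 < 1 / ((n : ℝ) + 1) := by positivity
        linarith
    rw [this, Monotone.measure_iUnion]
    · refine iSup_le fun n => ?_
      obtain ⟨c, hc, hcl⟩ := exists_lt_of_csInf_lt hAne
        (show sInf A < c₀ + 1 / ((n : ℝ) + 1) by
          have : 0 < 1 / ((n : ℝ) + 1) := by positivity
          linarith)
      exact (hanti _ _ hcl.le).trans hc.2
    · intro m n hmn t ht
      have ht' : c₀ + 1 / ((m : ℝ) + 1) < φ t := ht
      have := Nat.one_div_le_one_div (α := ℝ) hmn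
      show c₀ + 1 / ((n : ℝ) + 1) < φ t
      linarith
  have hlo : ENNReal.ofReal (2 * y) ≤ μ {t | c₀ ≤ φ t} := by
    have : {t | c₀ ≤ φ t} = ⋂ n : ℕ, {t | c₀ - 1 / ((n : ℝ) + 1) < φ t} := by
      ext t
      simp only [Set.mem_ofPred_eq, Set.mem_iInter]
      constructor
      · intro h n
        have : 0 < 1 / ((n : ℝ) + 1) := by positivity
        linarith
      · intro h
        by_contra hlt
        obtain ⟨n, hn⟩ := exists_nat_one_div_lt (sub_pos.2 (not_le.1 hlt))
        linarith [h n]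
    rw [this, Antitone.measure_iInter]
    · refine le_iInf fun n => ?_
      have hn : 0 < 1 / ((n : ℝ) + 1) := by positivity
      rcases lt_or_ge (c₀ - 1 / ((n : ℝ) + 1)) 0 with h | h
      · have : {t | c₀ - 1 / ((n : ℝ) + 1) < φ t} = Set.univ := by
          ext t; simpa using lt_of_lt_of_le h (hφ0 t)
        rw [this, hμu]
        exact ENNReal.ofReal_le_ofReal (by linarith)
      · by_contra hcon
        have : c₀ ≤ _ := csInf_le hAb ⟨h, (not_le.1 hcon).le⟩
        linarith
    · intro m n hmn t ht
      have ht' : c₀ - 1 / ((n : ℝ) + 1) < φ t := ht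
      have := Nat.one_div_le_one_div (α := ℝ) hmn
      show c₀ - 1 / ((m : ℝ) + 1) < φ t
      linarith
    · exact fun n => (hmeas _).nullMeasurableSet
    · exact ⟨0, measure_ne_top _ _⟩
  -- split the critical level
  set L : Set ℝ := {t | φ t = c₀} with hL
  have hLm : MeasurableSet L := measurableSet_eq_fun hφ.measurable measurable_const
  have hind : ∀ S : Set ℝ, MeasurableSet S → ∫ t in (-π)..π, S.indicator 1 t = μ.real S := by
    intro S hS
    rw [intervalIntegral.integral_of_le hππ, integral_indicator_one hS]
  have hii : ∀ S : Set ℝ, MeasurableSet S → ∀ a b,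
      IntervalIntegrable (S.indicator (1 : ℝ → ℝ)) volume a b := by
    intro S hS a b
    refine (intervalIntegrable_const (c := (1 : ℝ))).mono_fun
      (measurable_one.indicator hS).aestronglyMeasurable ?_
    filter_upwards with t
    by_cases h : t ∈ S <;> simp [h]
  obtain ⟨τ, hτ, hτe⟩ : ∃ τ ∈ Set.Icc (-π) π,
      μ.real {t | c₀ < φ t} + ∫ t in (-π)..τ, L.indicator 1 t = 2 * y := by
    have hcont : Continuous fun τ => μ.real {t | c₀ < φ t} + ∫ t in (-π)..τ, L.indicator (1 : ℝ → ℝ) t :=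
      continuous_const.add (intervalIntegral.continuous_primitive (hii L hLm) _)
    have := intermediate_value_Icc hππ hcont.continuousOn
    refine this ⟨?_, ?_⟩
    · simp only [intervalIntegral.integral_same, add_zero]
      exact ENNReal.toReal_le_of_le_ofReal (by positivity) hup
    · rw [hind L hLm, ← measureReal_union _ hLm]
      · rw [← ENNReal.ofReal_le_ofReal_iff measureReal_nonneg, ofReal_measureReal]
        refine hlo.trans (measure_mono fun t (ht : c₀ ≤ φ t) => ?_)
        rcases ht.lt_or_eq with h | h
        · exact Or.inl h
        · exact Or.inr h.symm
      · exact Set.disjoint_left.2 fun t (h1 : c₀ < φ t) (h2 : φ t = c₀) => absurd h2.symm (ne_of_lt h1)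
  -- the critical level set `L` is cut at the angle `τ`; the use of `arg (exp (t I))` keeps the set
  -- periodic
  set E : Set ℝ := {t | c₀ < φ t} ∪ (L ∩ {t | Complex.arg (Complex.exp (t * I)) ≤ τ}) with hE
  have hEm : MeasurableSet E := by
    refine (hmeas _).union (hLm.inter (measurableSet_le ?_ measurable_const))
    exact Complex.measurable_arg.comp (by fun_prop)
  have hmemE : ∀ t, t ∈ E ↔ c₀ < φ t ∨ (φ t = c₀ ∧ Complex.arg (Complex.exp (t * I)) ≤ τ) :=
    fun t => Iff.rfl
  have hEint : ∫ t in (-π)..π, E.indicator (1 : ℝ → ℝ) t = 2 * y := by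
    have hQm : MeasurableSet (L ∩ Set.Iic τ) := hLm.inter measurableSet_Iic
    have hpt : ∀ t ∈ Set.uIoc (-π) π, E.indicator (1 : ℝ → ℝ) t
        = {t | c₀ < φ t}.indicator 1 t + (L ∩ Set.Iic τ).indicator 1 t := by
      intro t ht
      rw [Set.uIoc_of_le hππ] at ht
      have harg : Complex.arg (Complex.exp (t * I)) = t := by
        rw [Complex.arg_exp_mul_I, toIocMod_eq_self]
        exact ⟨ht.1, by linarith [ht.2]⟩
      simp only [Set.indicator_apply, hmemE, harg, Set.mem_ofPred_eq, Set.mem_inter_iff, hL,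
        Set.mem_Iic, Pi.one_apply]
      rcases lt_trichotomy c₀ (φ t) with h | h | h
      · simp [h, h.ne']
      · simp [h]
      · simp [h.not_gt, h.ne]
    rw [intervalIntegral.integral_congr_ae (Filter.Eventually.of_forall hpt),
      intervalIntegral.integral_add (hii _ (hmeas _) _ _) (hii _ hQm _ _), hind _ (hmeas _), ← hτe,
      ← intervalIntegral.integral_add_adjacent_intervals (hii _ hQm (-π) τ) (hii _ hQm τ π)]
    congr 1
    have i1 : ∫ t in (-π)..τ, (L ∩ Set.Iic τ).indicator (1 : ℝ → ℝ) t
        = ∫ t in (-π)..τ, L.indicator 1 t := by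
      refine intervalIntegral.integral_congr_ae (Filter.Eventually.of_forall fun t ht => ?_)
      rw [Set.uIoc_of_le hτ.1] at ht
      simp [Set.indicator_apply, ht.2]
    have i2 : ∫ t in τ..π, (L ∩ Set.Iic τ).indicator (1 : ℝ → ℝ) t = 0 := by
      rw [intervalIntegral.integral_congr_ae (g := fun _ => (0 : ℝ))
        (Filter.Eventually.of_forall fun t ht => ?_)]
      · simp
      · rw [Set.uIoc_of_le hτ.2] at ht
        simp [ht.1]
    rw [i1, i2, add_zero]
  refine ⟨E.indicator 1, measurable_one.indicator hEm, fun t => ?_, fun t => ?_, hEint, ?_⟩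
  · by_cases h : t ∈ E <;> simp [h]
  · have : t + 2 * π ∈ E ↔ t ∈ E := by
      rw [hmemE, hmemE, hper t]
      have : Complex.exp (((t + 2 * π : ℝ) : ℂ) * I) = Complex.exp (t * I) := by
        push_cast
        rw [add_mul, Complex.exp_periodic]
      rw [this]
    by_cases h : t ∈ E
    · simp [h, this.2 h]
    · simp [h, mt this.1 h]
  · have hpt : ∀ t, E.indicator 1 t * φ t = E.indicator 1 t * c₀ + max 0 (φ t - c₀) := by
      intro t
      by_cases h : t ∈ E
      · have : c₀ ≤ φ t := by
          rcases (hmemE t).1 h with h | h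
          · exact h.le
          · exact h.1.ge
        simp [h, this]
      · have : φ t ≤ c₀ := by
          by_contra hc
          exact h ((hmemE t).2 (Or.inl (not_le.1 hc)))
        simp [h, this]
    have hi := hii E hEm (-π) π
    have hmx : Continuous fun t => max 0 (φ t - c₀) :=
      continuous_const.max (hφ.sub continuous_const)
    simp only [hpt]
    rw [intervalIntegral.integral_add (hi.mul_const c₀) (hmx.intervalIntegrable _ _),
      intervalIntegral.integral_mul_const, hEint]
    exact star_le hy.le hc0
end

/-! ### Rearranging translates -/

/-- The sum of the translates of `e` by `±α` is also the sum of their maximum and minimum, the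
indicators of the union and the intersection of the translated sets. These have half-measures
`y₁` and `y₂` with `y₁ + y₂ = 2y` and, by `shift_estimate`, `y₁ - y₂ ≥ 2(1 - η)α`. Concavity of
the star function concludes. -/
lemma shifted_le_star {e : ℝ → ℝ} (he : Measurable e) (he01 : ∀ t, e t = 0 ∨ e t = 1)
    (hper : Function.Periodic e (2 * π)) {y : ℝ} (hy : 0 < y) (hyπ : y < π)
    (hint : ∫ t in (-π)..π, e t = 2 * y) {η : ℝ} (hη : 0 < η) (hη1 : η < 1) :
    ∃ s₀ > 0, ∀ α, 0 ≤ α → α < s₀ → (1 - η) * α ≤ y ∧ y + (1 - η) * α ≤ π ∧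
      ∀ φ : ℝ → ℝ, Continuous φ →
      Function.Periodic φ (2 * π) → ∫ t in (-π)..π, e t * (φ (t + α) + φ (t - α))
        ≤ starFn φ (y + (1 - η) * α) + starFn φ (y - (1 - η) * α) := by
  obtain ⟨s₀, hs₀, hs⟩ := shift_estimate he he01 hper (by linarith) (by linarith) hη
  refine ⟨min (s₀ / 2) (π - y), lt_min (half_pos hs₀) (by linarith), fun α hα hαs => ?_⟩
  have hαs' := hαs.trans_le (min_le_right _ _)
  have hS := hs (2 * α) (by linarith) (by linarith [hαs.trans_le (min_le_left _ _)])
  have he0 : ∀ t, 0 ≤ e t := fun t => by rcases he01 t with h | h <;> simp [h]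
  have he1 : ∀ t, e t ≤ 1 := fun t => by rcases he01 t with h | h <;> simp [h]
  -- the indicators of the union and of the intersection of the two translated sets
  set M : ℝ → ℝ := fun t => max (e (t + α)) (e (t - α)) with hM
  set m : ℝ → ℝ := fun t => min (e (t + α)) (e (t - α)) with hm
  have hep : Measurable fun t => e (t + α) := he.comp (measurable_id.add_const α)
  have hem : Measurable fun t => e (t - α) := he.comp (measurable_id.sub_const α)
  have hMm : Measurable M := hep.max hem
  have hmm : Measurable m := hep.min hem
  have hM0 : ∀ t, 0 ≤ M t := fun t => le_max_of_le_left (he0 _)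
  have hM1 : ∀ t, M t ≤ 1 := fun t => max_le (he1 _) (he1 _)
  have hm0 : ∀ t, 0 ≤ m t := fun t => le_min (he0 _) (he0 _)
  have hm1 : ∀ t, m t ≤ 1 := fun t => min_le_of_left_le (he1 _)
  have hii : ∀ g : ℝ → ℝ, Measurable g → (∀ t, 0 ≤ g t) → (∀ t, g t ≤ 1) → ∀ ψ : ℝ → ℝ,
      Continuous ψ → ∀ a b, IntervalIntegrable (fun t => g t * ψ t) volume a b := by
    intro g hg h0 h1 ψ hψ a b
    refine (hψ.abs.intervalIntegrable a b).mono_fun'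
      (hg.aestronglyMeasurable.mul hψ.aestronglyMeasurable) ?_
    filter_upwards with t
    rw [norm_mul, Real.norm_of_nonneg (h0 t)]
    exact mul_le_of_le_one_left (norm_nonneg _) (h1 t)
  have hii1 : ∀ g : ℝ → ℝ, Measurable g → (∀ t, 0 ≤ g t) → (∀ t, g t ≤ 1) →
      ∀ a b, IntervalIntegrable g volume a b := fun g hg h0 h1 a b => by
    simpa using hii g hg h0 h1 (fun _ => 1) continuous_const a b
  have hsh : ∀ g : ℝ → ℝ, Function.Periodic g (2 * π) → ∀ s,
      ∫ t in (-π)..π, g (t + s) = ∫ t in (-π)..π, g t := by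
    intro g hg s
    rw [intervalIntegral.integral_comp_add_right]
    have := hg.intervalIntegral_add_eq (-π + s) (-π)
    rw [show -π + s + 2 * π = π + s by ring, show -π + 2 * π = π by ring] at this
    exact this
  have hw : ∀ t : ℝ, -π + 2 * π = π := fun _ => by ring
  set y₁ := (∫ t in (-π)..π, M t) / 2 with hy₁
  set y₂ := (∫ t in (-π)..π, m t) / 2 with hy₂
  have iM := hii1 M hMm hM0 hM1 (-π) π
  have im := hii1 m hmm hm0 hm1 (-π) π
  have hsum : y₁ + y₂ = 2 * y := by
    have h1 : (∫ t in (-π)..π, M t) + ∫ t in (-π)..π, m t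
        = (∫ t in (-π)..π, e (t + α)) + ∫ t in (-π)..π, e (t + -α) := by
      rw [← intervalIntegral.integral_add iM im, ← intervalIntegral.integral_add
        (hii1 _ hep (fun t => he0 _) (fun t => he1 _) _ _)
        (hii1 (fun t => e (t + -α)) (by simpa [sub_eq_add_neg] using hem) (fun t => he0 _)
          (fun t => he1 _) _ _)]
      refine intervalIntegral.integral_congr fun t _ => ?_
      simp only [hM, hm]
      rw [max_add_min, ← sub_eq_add_neg]
    rw [hsh e hper, hsh e hper] at h1
    linarith
  have hdif : 2 * (1 - η) * (2 * α) ≤ 2 * (y₁ - y₂) := by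
    have h1 : 2 * (y₁ - y₂) = ∫ t in (-π)..π, |e (t + 2 * α) - e t| := by
      have h2 := hsh (fun t => |e (t + 2 * α) - e t|) (fun t => by
        simp only [hper t, show t + 2 * π + 2 * α = (t + 2 * α) + 2 * π by ring,
          hper (t + 2 * α)]) (-α)
      rw [← h2]
      have h3 : 2 * (y₁ - y₂) = (∫ t in (-π)..π, M t) - ∫ t in (-π)..π, m t := by
        rw [hy₁, hy₂]; ring
      rw [h3, ← intervalIntegral.integral_sub iM im]
      refine intervalIntegral.integral_congr fun t _ => ?_
      simp only [hM, hm]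
      rw [max_sub_min_eq_abs]
      rw [show t + -α + 2 * α = t + α by ring, ← sub_eq_add_neg, abs_sub_comm]
    rw [h1]; exact hS
  have hy20 : 0 ≤ y₂ := div_nonneg (intervalIntegral.integral_nonneg
    (by linarith [Real.pi_pos]) fun t _ => hm0 t) zero_le_two
  refine ⟨by linarith, by nlinarith, fun φ hφ hφp => ?_⟩
  have k1 := integral_le_star hφ hφp hMm hM0 hM1 (-π)
  have k2 := integral_le_star hφ hφp hmm hm0 hm1 (-π)
  rw [hw 0, ← hy₁] at k1
  rw [hw 0, ← hy₂] at k2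
  have hcc := star_concave (φ := φ) (y := y) (a := (1 - η) * α) (A := y₁ - y)
    (mul_nonneg (by linarith) hα) (by linarith) (by linarith)
  rw [show y + (y₁ - y) = y₁ by ring, show y - (y₁ - y) = y₂ by linarith] at hcc
  refine le_trans (le_of_eq ?_) ((add_le_add k1 k2).trans hcc)
  have hφa : ∀ s, Continuous fun t => φ (t + s) := fun s => hφ.comp (by fun_prop)
  have e1 : ∫ t in (-π)..π, e t * φ (t + α) = ∫ t in (-π)..π, e (t + -α) * φ t := by
    have := hsh (fun t => e t * φ (t + α)) (fun t => by
      simp only [hper t, show t + 2 * π + α = (t + α) + 2 * π by ring, hφp (t + α)]) (-α)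
    simpa using this.symm
  have e2 : ∫ t in (-π)..π, e t * φ (t - α) = ∫ t in (-π)..π, e (t + α) * φ t := by
    have := hsh (fun t => e t * φ (t - α)) (fun t => by
      simp only [hper t, show t + 2 * π - α = (t - α) + 2 * π by ring, hφp (t - α)]) α
    simpa using this.symm
  simp only [mul_add]
  rw [intervalIntegral.integral_add (hii e he he0 he1 _ (hφa α) _ _)
    (hii e he he0 he1 (fun t => φ (t - α)) (by simpa [sub_eq_add_neg] using hφa (-α)) _ _), e1, e2,
    ← intervalIntegral.integral_add (hii _ (by simpa [sub_eq_add_neg] using hem) (fun t => he0 _) (fun t => he1 _) φ hφ _ _)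
      (hii _ hep (fun t => he0 _) (fun t => he1 _) φ hφ _ _),
    ← intervalIntegral.integral_add (hii M hMm hM0 hM1 φ hφ _ _) (hii m hmm hm0 hm1 φ hφ _ _)]
  refine intervalIntegral.integral_congr fun t _ => ?_
  simp only [hM, hm]
  rw [← add_mul, ← add_mul, max_add_min, ← sub_eq_add_neg, add_comm]

/-- Fubini's theorem for circle means centred at the points of a vertical segment, weighted by `e`. -/
lemma swap_mean {K : ℂ → ℝ} (hK : Continuous K) {e : ℝ → ℝ} (he : Measurable e)
    (he0 : ∀ t, 0 ≤ e t) (he1 : ∀ t, e t ≤ 1) {a b : ℝ} (hab : a ≤ b) (x ε : ℝ) :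
    IntervalIntegrable (fun ψ : ℝ => ∫ t in a..b, e t *
      K (((x + ε * Real.cos ψ : ℝ) : ℂ) + ((t + ε * Real.sin ψ : ℝ) : ℂ) * I)) volume 0 (2 * π) ∧
    ∫ ψ in (0 : ℝ)..2 * π, ∫ t in a..b, e t *
      K (((x + ε * Real.cos ψ : ℝ) : ℂ) + ((t + ε * Real.sin ψ : ℝ) : ℂ) * I)
      = ∫ t in a..b, e t * (2 * π * circleAverage K (x + t * I) ε) := by
  have hpi : (0 : ℝ) ≤ 2 * π := by positivity
  let F : ℝ → ℝ → ℝ := fun ψ t => e t *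
      K (((x + ε * Real.cos ψ : ℝ) : ℂ) + ((t + ε * Real.sin ψ : ℝ) : ℂ) * I)
  have hc : Continuous fun p : ℝ × ℝ =>
      K (((x + ε * Real.cos p.1 : ℝ) : ℂ) + ((p.2 + ε * Real.sin p.1 : ℝ) : ℂ) * I) :=
    hK.comp (by fun_prop)
  obtain ⟨C, hC⟩ := ((isCompact_Icc (a := (0 : ℝ)) (b := 2 * π)).prod
    (isCompact_Icc (a := a) (b := b))).exists_bound_of_continuousOn hc.continuousOn
  have hint : Integrable (Function.uncurry F)
      ((volume.restrict (Set.Ioc 0 (2 * π))).prod (volume.restrict (Set.Ioc a b))) := by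
    rw [Measure.prod_restrict]
    refine IntegrableOn.of_bound ?_ ?_ C ?_
    · rw [Measure.prod_prod]; simp [ENNReal.mul_lt_top]
    · exact ((he.comp measurable_snd).mul hc.measurable).aestronglyMeasurable
    · filter_upwards [ae_restrict_mem (measurableSet_Ioc.prod measurableSet_Ioc)] with p hp
      have := hC p ⟨Set.Ioc_subset_Icc_self hp.1, Set.Ioc_subset_Icc_self hp.2⟩
      simp only [Function.uncurry, F, norm_mul, Real.norm_of_nonneg (he0 _)]
      exact (mul_le_of_le_one_left (norm_nonneg _) (he1 _)).trans this
  have hI : ∀ ψ, ∫ t in a..b, F ψ t = ∫ t in Set.Ioc a b, F ψ t := fun ψ =>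
    intervalIntegral.integral_of_le hab
  constructor
  · rw [intervalIntegrable_iff_integrableOn_Ioc_of_le hpi]
    simp only [intervalIntegral.integral_of_le hab]
    exact hint.integral_prod_left
  · simp only [intervalIntegral.integral_of_le hab, intervalIntegral.integral_of_le hpi]
    rw [integral_integral_swap hint]
    congr 1
    ext t
    simp only [F]
    rw [integral_const_mul, circleAverage_def, intervalIntegral.integral_of_le hpi, smul_eq_mul,
      ← mul_assoc (2 * π), mul_inv_cancel₀ (by positivity), one_mul]
    congr 2
    ext ψ
    congr 1
    rw [circleMap, Complex.exp_mul_I]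
    push_cast
    ring

/-! ### Subharmonicity of the star function -/

/-- The star function of the Koebe function: `kV` is symmetric decreasing on vertical lines, so
the extremal sets are centred intervals. -/
noncomputable def vS (x y : ℝ) : ℝ := ∫ t in (-y)..y, kV (x + t * I)

lemma continuous_kV_line (x : ℝ) : Continuous fun t : ℝ => kV (x + t * I) :=
  continuous_kV.comp (by fun_prop)

lemma kV_line_ii (x a b : ℝ) : IntervalIntegrable (fun t : ℝ => kV (x + t * I)) volume a b :=
  (continuous_kV_line x).intervalIntegrable _ _

lemma kV_neg_half (x y : ℝ) : ∫ t in (0 : ℝ)..(-y), kV (x + t * I)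
    = - ∫ t in (0 : ℝ)..y, kV (x + t * I) := by
  have h := intervalIntegral.integral_comp_neg (a := 0) (b := y) (fun t : ℝ => kV (x + t * I))
  simp only [kV_conj, neg_zero] at h
  rw [h, intervalIntegral.integral_symm]

lemma vS_eq (x y : ℝ) : vS x y = 2 * ∫ t in (0 : ℝ)..y, kV (x + t * I) := by
  rw [vS, ← intervalIntegral.integral_interval_sub_left (kV_line_ii x 0 y) (kV_line_ii x 0 (-y)),
    kV_neg_half]
  ring

lemma vS_sub (x y y' : ℝ) : vS x y - vS x y' = 2 * ∫ t in y'..y, kV (x + t * I) := by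
  rw [vS_eq, vS_eq, ← mul_sub,
    intervalIntegral.integral_interval_sub_left (kV_line_ii x _ _) (kV_line_ii x _ _)]

lemma continuous_vS : Continuous fun p : ℝ × ℝ => vS p.1 p.2 := by
  simp only [vS_eq]
  refine continuous_const.mul ?_
  refine intervalIntegral.continuous_parametric_intervalIntegral_of_continuous
    (f := fun (p : ℝ × ℝ) (t : ℝ) => kV (p.1 + t * I)) ?_ continuous_snd
  exact continuous_kV.comp (by fun_prop)

lemma vS_mono {x y y' : ℝ} (h : y' ≤ y) : vS x y' ≤ vS x y := by
  have := vS_sub x y y'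
  have h2 : 0 ≤ ∫ t in y'..y, kV (x + t * I) :=
    intervalIntegral.integral_nonneg h fun t _ => kV_nonneg _
  linarith

lemma vS_nonneg {x y : ℝ} (h : 0 ≤ y) : 0 ≤ vS x y :=
  intervalIntegral.integral_nonneg (by linarith) fun t _ => kV_nonneg _

/-- By the symmetry of `kV`, the integral over the segment translated by `α` equals that over the
segment translated by `-α`. -/
lemma vS_shift (x y α : ℝ) :
    vS x (y + α) + vS x (y - α) = 2 * ∫ t in (-y)..y, kV (x + ((t + α : ℝ) : ℂ) * I) := by
  have h := intervalIntegral.integral_comp_add_right (a := -y) (b := y)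
    (fun t : ℝ => kV (x + t * I)) α
  rw [h, vS_eq, vS_eq,
    ← intervalIntegral.integral_interval_sub_left (kV_line_ii x 0 (y + α)) (kV_line_ii x 0 (-y + α)),
    show -y + α = -(y - α) by ring, kV_neg_half]
  ring

/-- The mean value property of `vS`, symmetrized in the vertical direction. -/
lemma vS_mean {x y ε : ℝ} (hε : 0 < ε) (hy : 0 ≤ y) (hyε : y + ε < π) :
    ∫ ψ in (0 : ℝ)..2 * π, (vS (x + ε * Real.cos ψ) (y + ε * Real.sin ψ)
      + vS (x + ε * Real.cos ψ) (y - ε * Real.sin ψ)) = 4 * π * vS x y := by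
  have h := (swap_mean continuous_kV (e := fun _ => 1) measurable_const (fun _ => zero_le_one)
    (fun _ => le_rfl) (show -y ≤ y by linarith) x ε).2
  simp only [one_mul] at h
  simp only [vS_shift]
  rw [intervalIntegral.integral_const_mul, h, intervalIntegral.integral_const_mul, vS]
  have : ∫ t in (-y)..y, circleAverage kV (x + t * I) ε = ∫ t in (-y)..y, kV (x + t * I) := by
    refine intervalIntegral.integral_congr fun t ht => ?_
    rw [Set.uIcc_of_le (by linarith)] at ht
    refine kV_mean hε ?_
    have : |t| ≤ y := abs_le.2 ht
    simpa using by linarith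
  rw [this]; ring

/-- Moving the shift from `α` to `a` costs `O((α - a) α)`: the derivative of the left side in the
shift is a difference of values of `kV` at points at most `2α` apart, and `kV` is locally
Lipschitz. -/
lemma vS_est {x₀ y₀ : ℝ} (hy : |y₀| < π) : ∃ L, 0 ≤ L ∧ ∃ r > 0, ∀ x a α, |x - x₀| < r → 0 ≤ a →
    a ≤ α → α < r →
    vS x (y₀ + a) + vS x (y₀ - a) ≤ vS x (y₀ + α) + vS x (y₀ - α) + 4 * L * (α - a) * α := by
  obtain ⟨L, hL, r, hr, h⟩ := kV_lipschitz (s := x₀ + y₀ * I) (by simpa using hy)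
  refine ⟨L, hL, r / 2, half_pos hr, fun x a α hx ha haα hα => ?_⟩
  have h1 := vS_sub x (y₀ + α) (y₀ + a)
  have h2 := vS_sub x (y₀ - a) (y₀ - α)
  have e1 := intervalIntegral.integral_comp_add_left (a := a) (b := α)
    (fun t : ℝ => kV (x + t * I)) y₀
  have e2 := intervalIntegral.integral_comp_sub_left (a := a) (b := α)
    (fun t : ℝ => kV (x + t * I)) y₀
  rw [← e1] at h1
  rw [← e2] at h2
  have c1 : Continuous fun t : ℝ => kV (x + ((y₀ - t : ℝ) : ℂ) * I) :=
    continuous_kV.comp (by fun_prop)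
  have c2 : Continuous fun t : ℝ => kV (x + ((y₀ + t : ℝ) : ℂ) * I) :=
    continuous_kV.comp (by fun_prop)
  have key : ∫ t in a..α, (kV (x + ((y₀ - t : ℝ) : ℂ) * I) - kV (x + ((y₀ + t : ℝ) : ℂ) * I))
      ≤ ∫ t in a..α, 2 * L * α := by
    refine intervalIntegral.integral_mono_on haα ((c1.sub c2).intervalIntegrable _ _)
      (by simp) fun t ht => ?_
    have hm : ∀ s : ℝ, |s| ≤ α → ((x : ℂ) + ((y₀ + s : ℝ) : ℂ) * I) ∈ ball ((x₀ : ℂ) + y₀ * I) r := by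
      intro s hs
      rw [mem_ball, dist_eq_norm]
      have : ((x : ℂ) + ((y₀ + s : ℝ) : ℂ) * I) - ((x₀ : ℂ) + y₀ * I)
          = ((x - x₀ : ℝ) : ℂ) + ((s : ℝ) : ℂ) * I := by push_cast; ring
      rw [this]
      refine (norm_add_le _ _).trans_lt ?_
      simp only [norm_mul, Complex.norm_real, Complex.norm_I, mul_one, Real.norm_eq_abs]
      linarith
    have ht0 : 0 ≤ t := ha.trans ht.1
    have m1 := hm t (by rw [abs_of_nonneg ht0]; exact ht.2)
    have m2 := hm (-t) (by rw [abs_neg, abs_of_nonneg ht0]; exact ht.2)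
    rw [← sub_eq_add_neg] at m2
    have := (le_abs_self _).trans (h _ m2 _ m1)
    refine this.trans ?_
    have : ((x : ℂ) + ((y₀ - t : ℝ) : ℂ) * I) - ((x : ℂ) + ((y₀ + t : ℝ) : ℂ) * I)
        = ((-(2 * t) : ℝ) : ℂ) * I := by push_cast; ring
    rw [this]
    simp only [norm_mul, Complex.norm_real, Complex.norm_I, mul_one, Real.norm_eq_abs, abs_neg,
      abs_of_nonneg (show 0 ≤ 2 * t by linarith)]
    nlinarith [mul_le_mul_of_nonneg_left ht.2 hL]
  rw [intervalIntegral.integral_sub (c1.intervalIntegrable _ _) (c2.intervalIntegrable _ _),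
    intervalIntegral.integral_const, smul_eq_mul] at key
  nlinarith

section
variable {U : ℂ → ℝ}

/-- The star function of `U` on the vertical line through `x`. -/
noncomputable def uS (U : ℂ → ℝ) (x y : ℝ) : ℝ := starFn (fun t => U (x + t * I)) y

lemma slice_cont (hU : Continuous U) (x : ℝ) : Continuous fun t : ℝ => U (x + t * I) :=
  hU.comp (by fun_prop)

lemma slice_per (hUp : ∀ s, U (s + 2 * π * I) = U s) (x : ℝ) :
    Function.Periodic (fun t : ℝ => U (x + t * I)) (2 * π) := fun t => by
  simp only
  rw [← hUp (x + t * I)]; congr 1; push_cast; ring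

/-- `uS U - vS - δ y (3π - y)` has no maximum at an interior point of the strip. Averaging the sub-mean
value inequality of `U` over an extremal set and rearranging its translates makes `uS U`
subharmonic up to an error governed by `η`, while `vS` is harmonic and `-δ y (3π - y)` is strictly
subharmonic. -/
lemma no_interior_max (hU : Continuous U) (hU0 : ∀ s, 0 ≤ U s)
    (hUp : ∀ s, U (s + 2 * π * I) = U s)
    (hUs : ∀ s ε, 0 < ε → ε < π → U s ≤ circleAverage U s ε)
    {x₀ y₀ δ : ℝ} (hδ : 0 < δ) (hy : 0 < y₀) (hyπ : y₀ < π)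
    (hmax : ∀ x y, 0 ≤ y → y ≤ π → uS U x y - vS x y - δ * (y * (3 * π - y))
      ≤ uS U x₀ y₀ - vS x₀ y₀ - δ * (y₀ * (3 * π - y₀))) : False := by
  obtain ⟨e, he, he01, heper, heint, hest⟩ := exists_bathtub (slice_cont hU x₀) (fun t => hU0 _)
    (slice_per hUp x₀) hy hyπ
  obtain ⟨L, hL, r, hr, hvest⟩ := vS_est (x₀ := x₀) (y₀ := y₀) (by rwa [abs_of_pos hy])
  have he0 : ∀ t, 0 ≤ e t := fun t => by rcases he01 t with h | h <;> simp [h]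
  have he1 : ∀ t, e t ≤ 1 := fun t => by rcases he01 t with h | h <;> simp [h]
  -- this makes the loss from `vS_est` smaller than the gain from the term `-δ y (3π - y)`
  obtain ⟨η, hη, hη1, hηL⟩ : ∃ η : ℝ, 0 < η ∧ η < 1 ∧ 4 * L * η < 2 * δ * (1 - η) ^ 2 := by
    refine ⟨min (1 / 2) (δ / (8 * L + 8)), by positivity, ?_, ?_⟩
    · exact (min_le_left _ _).trans_lt (by norm_num)
    · have h1 := min_le_left (1 / 2 : ℝ) (δ / (8 * L + 8))
      have h2 := min_le_right (1 / 2 : ℝ) (δ / (8 * L + 8))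
      set η := min (1 / 2 : ℝ) (δ / (8 * L + 8))
      rw [le_div_iff₀ (by linarith)] at h2
      have h0 : 0 < η := by positivity
      nlinarith [mul_pos hδ h0, mul_nonneg hδ.le (sq_nonneg (1/2 - η)), mul_nonneg hδ.le (sub_nonneg.2 h1)]
  obtain ⟨s₀, hs₀, hsh⟩ := shifted_le_star he he01 heper hy hyπ heint hη hη1
  obtain ⟨ε, hε, hεs, hεr, hεπ⟩ : ∃ ε : ℝ, 0 < ε ∧ ε < s₀ ∧ ε < r ∧ y₀ + ε < π := by
    refine ⟨min (min s₀ r) (π - y₀) / 2, ?_, ?_, ?_, ?_⟩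
    · have : 0 < π - y₀ := by linarith
      positivity
    all_goals
      have h1 := min_le_left (min s₀ r) (π - y₀)
      have h2 := min_le_right (min s₀ r) (π - y₀)
      have h3 := min_le_left s₀ r
      have h4 := min_le_right s₀ r
      linarith
  set W₀ := uS U x₀ y₀ - vS x₀ y₀ - δ * (y₀ * (3 * π - y₀)) with hW₀
  set J : ℝ → ℝ := fun ψ => ∫ t in (-π)..π, e t *
      U (((x₀ + ε * Real.cos ψ : ℝ) : ℂ) + ((t + ε * Real.sin ψ : ℝ) : ℂ) * I) with hJ
  have hππ : -π ≤ π := by linarith [Real.pi_pos]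
  obtain ⟨hJi, hJe⟩ := swap_mean hU he he0 he1 hππ x₀ ε
  have hii : ∀ φ : ℝ → ℝ, Continuous φ → IntervalIntegrable (fun t => e t * φ t) volume (-π) π := by
    intro φ hφ
    refine (hφ.abs.intervalIntegrable (-π) π).mono_fun'
      (he.aestronglyMeasurable.mul hφ.aestronglyMeasurable) ?_
    filter_upwards with t
    rw [norm_mul, Real.norm_of_nonneg (he0 t)]
    exact mul_le_of_le_one_left (norm_nonneg _) (he1 t)
  have hav : Continuous fun t : ℝ => circleAverage U (x₀ + t * I) ε := by
    simp only [circleAverage_def]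
    refine (intervalIntegral.continuous_parametric_intervalIntegral_of_continuous' (μ := volume)
      (f := fun (t : ℝ) (θ : ℝ) => U (circleMap (x₀ + t * I) ε θ)) ?_ 0 (2 * π)).const_smul ((2 * π)⁻¹ : ℝ)
    refine hU.comp ?_
    simp only [circleMap]
    fun_prop
  have hlow : 2 * π * uS U x₀ y₀ ≤ ∫ ψ in (0 : ℝ)..2 * π, J ψ := by
    rw [hJ, hJe]
    have h1 : ∫ t in (-π)..π, e t * U (x₀ + t * I)
        ≤ ∫ t in (-π)..π, e t * circleAverage U (x₀ + t * I) ε :=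
      intervalIntegral.integral_mono_on hππ (hii _ (slice_cont hU x₀)) (hii _ hav)
        fun t _ => mul_le_mul_of_nonneg_left (hUs _ _ hε (by linarith)) (he0 t)
    have h2 : ∫ t in (-π)..π, e t * (2 * π * circleAverage U (x₀ + t * I) ε)
        = 2 * π * ∫ t in (-π)..π, e t * circleAverage U (x₀ + t * I) ε := by
      rw [← intervalIntegral.integral_const_mul]
      congr 1; ext t; ring
    rw [h2]
    exact mul_le_mul_of_nonneg_left (hest.trans h1) (by positivity)
  have hrefl : ∫ ψ in (0 : ℝ)..2 * π, J (2 * π - ψ) = ∫ ψ in (0 : ℝ)..2 * π, J ψ := by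
    rw [intervalIntegral.integral_comp_sub_left]; simp
  have hJi' : IntervalIntegrable (fun ψ => J (2 * π - ψ)) volume 0 (2 * π) := by
    have := hJi.comp_sub_left (2 * π)
    rw [sub_zero, sub_self] at this
    exact this.symm
  have hpt : ∀ ψ, J ψ + J (2 * π - ψ) ≤ 2 * W₀ + 2 * δ * (y₀ * (3 * π - y₀))
      + (vS (x₀ + ε * Real.cos ψ) (y₀ + ε * Real.sin ψ)
        + vS (x₀ + ε * Real.cos ψ) (y₀ - ε * Real.sin ψ))
      + (4 * L * η - 2 * δ * (1 - η) ^ 2) * ε ^ 2 * Real.sin ψ ^ 2 := by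
    intro ψ
    set x := x₀ + ε * Real.cos ψ with hx
    set β := |ε * Real.sin ψ| with hβ
    have hβ0 : 0 ≤ β := abs_nonneg _
    have hβε : β ≤ ε := by
      rw [hβ, abs_mul, abs_of_pos hε]
      exact mul_le_of_le_one_right hε.le (Real.abs_sin_le_one ψ)
    have hβ2 : β ^ 2 = ε ^ 2 * Real.sin ψ ^ 2 := by rw [hβ, sq_abs]; ring
    have hsum : J ψ + J (2 * π - ψ)
        = ∫ t in (-π)..π, e t * (U (x + ((t + β : ℝ) : ℂ) * I) + U (x + ((t - β : ℝ) : ℂ) * I)) := by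
      simp only [hJ, Real.cos_two_pi_sub, Real.sin_two_pi_sub, ← hx]
      rw [← intervalIntegral.integral_add
        (hii (fun t => U (x + ((t + ε * Real.sin ψ : ℝ) : ℂ) * I)) (hU.comp (by fun_prop)))
        (hii (fun t => U (x + ((t + ε * -Real.sin ψ : ℝ) : ℂ) * I)) (hU.comp (by fun_prop)))]
      refine intervalIntegral.integral_congr fun t _ => ?_
      simp only [← mul_add]
      congr 1
      rcases abs_choice (ε * Real.sin ψ) with h | h
      · rw [hβ, h, mul_neg, ← sub_eq_add_neg]
      · rw [hβ, h, mul_neg, sub_neg_eq_add, add_comm]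
    have hvsym : vS x (y₀ + ε * Real.sin ψ) + vS x (y₀ - ε * Real.sin ψ)
        = vS x (y₀ + β) + vS x (y₀ - β) := by
      rcases abs_choice (ε * Real.sin ψ) with h | h
      · rw [hβ, h]
      · rw [hβ, h, sub_neg_eq_add, ← sub_eq_add_neg, add_comm]
    obtain ⟨k1, k2, k3⟩ := hsh β hβ0 (by linarith)
    have k4 := k3 (fun t => U (x + t * I)) (slice_cont hU x) (slice_per hUp x)
    set a := (1 - η) * β with ha
    have ha0 : 0 ≤ a := mul_nonneg (by linarith) hβ0
    have haβ : a ≤ β := by nlinarith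
    have m1 := hmax x (y₀ + a) (by linarith) k2
    have m2 := hmax x (y₀ - a) (by linarith) (by linarith)
    have m3 := hvest x a β (by
      rw [hx, add_sub_cancel_left, abs_mul, abs_of_pos hε]
      exact (mul_le_of_le_one_right hε.le (Real.abs_cos_le_one ψ)).trans_lt hεr) ha0 haβ (by linarith)
    rw [hsum, hvsym]
    refine k4.trans ?_
    simp only [uS] at m1 m2
    have e1 : 4 * L * (β - a) * β = 4 * L * η * (ε ^ 2 * Real.sin ψ ^ 2) := by
      rw [← hβ2, ha]; ring
    have e2 : a ^ 2 = (1 - η) ^ 2 * (ε ^ 2 * Real.sin ψ ^ 2) := by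
      rw [← hβ2, ha]; ring
    rw [e1] at m3
    linear_combination m1 + m2 + m3 - 2 * δ * e2
  have hvc : Continuous fun ψ : ℝ => (vS (x₀ + ε * Real.cos ψ) (y₀ + ε * Real.sin ψ)
        + vS (x₀ + ε * Real.cos ψ) (y₀ - ε * Real.sin ψ)) :=
    (continuous_vS.comp (show Continuous fun ψ : ℝ =>
      (x₀ + ε * Real.cos ψ, y₀ + ε * Real.sin ψ) by fun_prop)).add
    (continuous_vS.comp (show Continuous fun ψ : ℝ =>
      (x₀ + ε * Real.cos ψ, y₀ - ε * Real.sin ψ) by fun_prop))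
  have hI := intervalIntegral.integral_mono_on (show (0 : ℝ) ≤ 2 * π by positivity)
    (hJi.add hJi') (Continuous.intervalIntegrable (by fun_prop) _ _) fun ψ _ => hpt ψ
  rw [intervalIntegral.integral_add hJi hJi', hrefl,
    intervalIntegral.integral_add (Continuous.intervalIntegrable (by fun_prop) _ _)
      (Continuous.intervalIntegrable (by fun_prop) _ _),
    intervalIntegral.integral_add (Continuous.intervalIntegrable (by fun_prop) _ _)
      (Continuous.intervalIntegrable hvc _ _), vS_mean hε hy.le hεπ,
    intervalIntegral.integral_const_mul, integral_sin_sq, intervalIntegral.integral_const] at hI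
  simp only [Real.sin_zero, Real.sin_two_pi, smul_eq_mul, zero_mul, sub_zero, zero_add] at hI
  have hπ := Real.pi_pos
  have : 0 < (2 * δ * (1 - η) ^ 2 - 4 * L * η) * ε ^ 2 * π :=
    mul_pos (mul_pos (by linarith) (by positivity)) hπ
  have hlow2 : 2 * (2 * π * uS U x₀ y₀) ≤ _ := (by linarith : _ ≤ (∫ ψ in (0 : ℝ)..2 * π, J ψ) + ∫ ψ in (0 : ℝ)..2 * π, J ψ).trans hI
  rw [hW₀] at hlow2
  nlinarith
end

/-! ### Comparison of star functions -/

section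
variable {U : ℂ → ℝ}

/-- There is no maximum at `(x₀, π)` if `U` vanishes somewhere on the line `Re s = x₀`: removing a short
interval of length `2h` around the zero decreases `uS U` by `o(h)`, while the `δ`-term gains a
multiple of `h`, as `y (3π - y)` has derivative `π > 0` at `y = π`. -/
lemma no_boundary_max (hU : Continuous U) (hU0 : ∀ s, 0 ≤ U s)
    (hUp : ∀ s, U (s + 2 * π * I) = U s)
    {x₀ t₀ δ : ℝ} (hδ : 0 < δ) (ht₀ : U (x₀ + t₀ * I) = 0)
    (hmax : ∀ x y, 0 ≤ y → y ≤ π → uS U x y - vS x y - δ * (y * (3 * π - y))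
      ≤ uS U x₀ π - vS x₀ π - δ * (π * (3 * π - π))) : False := by
  have hπ := Real.pi_pos
  set φ : ℝ → ℝ := fun t => U (x₀ + t * I) with hφ
  have hc : Continuous φ := slice_cont hU x₀
  have hp : Function.Periodic φ (2 * π) := slice_per hUp x₀
  obtain ⟨r, hr, hr'⟩ := Metric.continuous_iff.1 hc t₀ (δ * π / 4) (by positivity)
  obtain ⟨h, hh, hhr, hhπ⟩ : ∃ h : ℝ, 0 < h ∧ h < r ∧ h < π :=
    ⟨min r π / 2, by positivity, by linarith [min_le_left r π, lt_min hr hπ],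
      by linarith [min_le_right r π, lt_min hr hπ]⟩
  have hm := hmax x₀ (π - h) (by linarith) (by linarith)
  have hv : vS x₀ (π - h) ≤ vS x₀ π := vS_mono (by linarith)
  have hii : ∀ a b, IntervalIntegrable φ volume a b := fun a b => hc.intervalIntegrable a b
  set a := t₀ - h with ha
  have hup : uS U x₀ π ≤ ∫ t in a..a + 2 * π, φ t := by
    have h1 : uS U x₀ π ≤ starD φ π 0 := star_le hπ.le le_rfl
    have h2 : starD φ π 0 = ∫ t in (-π)..π, φ t := by
      simp [starD, hφ, max_eq_right (hU0 _)]
    rw [h2] at h1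
    rw [hp.intervalIntegral_add_eq a (-π), show -π + 2 * π = π by ring]
    exact h1
  have hlow := integral_le_star hc hp (e := (Set.Ioi (t₀ + h)).indicator 1)
    (measurable_one.indicator measurableSet_Ioi)
    (fun t => Set.indicator_nonneg (fun _ _ => zero_le_one) t)
    (fun t => Set.indicator_le_self' (f := 1) (fun _ _ => zero_le_one) t) a
  have hsplit : ∀ g : ℝ → ℝ, Continuous g →
      ∫ t in a..a + 2 * π, (Set.Ioi (t₀ + h)).indicator 1 t * g t
        = ∫ t in (t₀ + h)..a + 2 * π, g t := by
    intro g hg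
    have e0 : ∀ b d, IntervalIntegrable (fun t => (Set.Ioi (t₀ + h)).indicator 1 t * g t) volume b d := by
      intro b d
      refine (hg.abs.intervalIntegrable b d).mono_fun'
        ((measurable_one.indicator measurableSet_Ioi).aestronglyMeasurable.mul
          hg.aestronglyMeasurable) ?_
      filter_upwards with t
      by_cases h : t ∈ Set.Ioi (t₀ + h) <;> simp [Set.indicator, h]
    rw [← intervalIntegral.integral_add_adjacent_intervals (e0 a (t₀ + h)) (e0 (t₀ + h) (a + 2 * π))]
    have e1 : ∫ t in a..(t₀ + h), (Set.Ioi (t₀ + h)).indicator 1 t * g t = 0 := by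
      rw [intervalIntegral.integral_congr_ae (g := fun _ => (0 : ℝ))
        (Filter.Eventually.of_forall fun t ht => ?_)]
      · simp
      · rw [Set.uIoc_of_le (by linarith)] at ht
        simp [ht.2]
    have e2 : ∫ t in (t₀ + h)..a + 2 * π, (Set.Ioi (t₀ + h)).indicator 1 t * g t
        = ∫ t in (t₀ + h)..a + 2 * π, g t := by
      refine intervalIntegral.integral_congr_ae (Filter.Eventually.of_forall fun t ht => ?_)
      rw [Set.uIoc_of_le (by linarith)] at ht
      simp [ht.1]
    rw [e1, e2, zero_add]
  have hone : ∫ t in a..a + 2 * π, (Set.Ioi (t₀ + h)).indicator 1 t = 2 * (π - h) := by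
    have := hsplit (fun _ => 1) continuous_const
    simp only [mul_one] at this
    rw [this]; simp; ring
  rw [hone, hsplit φ hc, mul_div_cancel_left₀ _ two_ne_zero] at hlow
  have hadj := intervalIntegral.integral_add_adjacent_intervals (hii a (t₀ + h)) (hii (t₀ + h) (a + 2 * π))
  have hsmall : ∫ t in a..(t₀ + h), φ t ≤ ∫ t in a..(t₀ + h), δ * π / 4 := by
    refine intervalIntegral.integral_mono_on (by linarith) (hii _ _) (by simp) fun t ht => ?_
    have := hr' t (by
      rw [Real.dist_eq, abs_lt]; constructor <;> linarith [ht.1, ht.2])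
    rw [Real.dist_eq, show φ t₀ = 0 from ht₀, sub_zero] at this
    exact ((le_abs_self _).trans_lt this).le
  rw [intervalIntegral.integral_const, smul_eq_mul] at hsmall
  have hlow' : ∫ t in (t₀ + h)..a + 2 * π, φ t ≤ uS U x₀ (π - h) := hlow
  have : 0 < δ * π * h := by positivity
  have : 0 < δ * h * h := by positivity
  nlinarith

/-- Baernstein's comparison of star functions, by the maximum principle on the strip `0 ≤ y ≤ π`. A
positive value of `uS U - vS`, still positive after subtracting a small multiple of `y (3π - y)`,
would force a positive maximum, because the difference is asymptotically nonpositive for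
`x → ±∞`. The maximum is not at `y = 0`, where both functions vanish, nor at interior points. On
`y = π` there is either a zero of `U`, or else the integral of `U` is `-2πx`, which is at most
`vS x π`. -/
lemma star_ineq (hU : Continuous U) (hU0 : ∀ s, 0 ≤ U s)
    (hUp : ∀ s, U (s + 2 * π * I) = U s)
    (hUs : ∀ s ε, 0 < ε → ε < π → U s ≤ circleAverage U s ε)
    (hUl : ∃ X, ∀ s : ℂ, X ≤ s.re → U s = 0)
    (hUsm : ∀ ε > 0, ∃ X, ∀ s : ℂ, s.re ≤ X → U s ≤ -s.re + ε)
    (hUline : ∀ x : ℝ, (∀ t : ℝ, U (x + t * I) ≠ 0) →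
      ∫ t in (-π)..π, U (x + t * I) = -(2 * π * x))
    {x y : ℝ} (hy0 : 0 ≤ y) (hyπ : y ≤ π) : uS U x y ≤ vS x y := by
  have hπ := Real.pi_pos
  by_contra! hlt
  obtain ⟨δ, hδ, hW⟩ : ∃ δ > 0, 0 < uS U x y - vS x y - δ * (y * (3 * π - y)) := by
    have hb : 0 ≤ y * (3 * π - y) := mul_nonneg hy0 (by linarith)
    refine ⟨(uS U x y - vS x y) / (2 * (y * (3 * π - y) + 1)), div_pos (by linarith) (by linarith), ?_⟩
    have : (uS U x y - vS x y) / (2 * (y * (3 * π - y) + 1)) * (y * (3 * π - y))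
        < uS U x y - vS x y := by
      rw [div_mul_eq_mul_div, div_lt_iff₀ (by linarith)]
      nlinarith
    linarith
  set W : ℝ × ℝ → ℝ := fun p => uS U p.1 p.2 - vS p.1 p.2 - δ * (p.2 * (3 * π - p.2)) with hWd
  set w := W (x, y) with hw
  have hw0 : 0 < w := hW
  -- far away the comparison function is small
  obtain ⟨X₁, hX₁⟩ := hUl
  set ε := w / (8 * π) with hε
  have hε0 : 0 < ε := by positivity
  obtain ⟨X₂, hX₂⟩ := hUsm ε hε0
  obtain ⟨X₃, hX₃⟩ := logGrn_small_lower koebe_analytic koebe_injOn koebe_zero koebe_deriv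
    one_pos hε0
  have hright : ∀ x' y', X₁ ≤ x' → 0 ≤ y' → y' ≤ π → W (x', y') < w := by
    intro x' y' hx hy0 hyπ
    have h1 : uS U x' y' ≤ starD (fun t => U (x' + t * I)) y' 0 := star_le hy0 le_rfl
    have h2 : starD (fun t => U (x' + t * I)) y' 0 = 0 := by
      have : ∀ t : ℝ, U (x' + t * I) = 0 := fun t => hX₁ _ (by simpa using hx)
      simp [starD, this]
    have h3 := vS_nonneg (x := x') hy0
    have h4 : 0 ≤ δ * (y' * (3 * π - y')) := mul_nonneg hδ.le (mul_nonneg hy0 (by linarith))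
    simp only [hWd]
    linarith
  have hleft : ∀ x' y', x' ≤ min (min X₂ X₃) 0 → 0 ≤ y' → y' ≤ π → W (x', y') < w := by
    intro x' y' hx hy0 hyπ
    have hx2 : x' ≤ X₂ := hx.trans ((min_le_left _ _).trans (min_le_left _ _))
    have hx3 : x' ≤ X₃ := hx.trans ((min_le_left _ _).trans (min_le_right _ _))
    have hx0 : x' ≤ 0 := hx.trans (min_le_right _ _)
    have h1 : uS U x' y' ≤ starD (fun t => U (x' + t * I)) y' (-x' + ε) :=
      star_le hy0 (by linarith)
    have h2 : starD (fun t => U (x' + t * I)) y' (-x' + ε) = 2 * y' * (-x' + ε) := by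
      have : ∀ t : ℝ, max 0 (U (x' + t * I) - (-x' + ε)) = 0 := fun t => by
        have := hX₂ (x' + t * I) (by simpa using hx2)
        simp only [add_re, ofReal_re, mul_re, I_re, mul_zero, ofReal_im, I_im, zero_mul, sub_zero, add_zero] at this
        exact max_eq_left (by linarith)
      simp [starD, this]
    have h3 : 2 * y' * (-x' - ε) ≤ vS x' y' := by
      have h5 : ∫ t in (-y')..y', (-x' - ε) ≤ ∫ t in (-y')..y', kV (x' + t * I) := by
        refine intervalIntegral.integral_mono_on (by linarith) (by simp) (kV_line_ii _ _ _) fun t _ => ?_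
        have := hX₃ (x' + t * I) (by simpa using hx3)
        simpa [kV] using this
      rw [intervalIntegral.integral_const, smul_eq_mul] at h5
      rw [vS]; linarith
    have h4 : 0 ≤ δ * (y' * (3 * π - y')) := mul_nonneg hδ.le (mul_nonneg hy0 (by linarith))
    simp only [hWd]
    have h6 : 4 * y' * ε ≤ 4 * π * ε := by nlinarith
    have h7 : 4 * π * ε = w / 2 := by rw [hε]; field_simp; norm_num
    nlinarith
  set X₀ := min (min X₂ X₃) 0 with hX₀
  -- an infimum of continuous functions is upper semicontinuous, which suffices for a maximum
  have husc : UpperSemicontinuousOn W (Set.Icc X₀ X₁ ×ˢ Set.Icc 0 π) := by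
    have h1 : UpperSemicontinuousOn (fun p : ℝ × ℝ => uS U p.1 p.2) (Set.Icc X₀ X₁ ×ˢ Set.Icc 0 π) := by
      refine upperSemicontinuousOn_ciInf (f := fun (c : NNReal) (p : ℝ × ℝ) =>
        starD (fun t => U (p.1 + t * I)) p.2 c) (fun p hp => star_bdd hp.2.1) fun c => ?_
      refine ContinuousOn.upperSemicontinuousOn (Continuous.continuousOn ?_)
      simp only [starD]
      refine Continuous.add (by fun_prop) ?_
      refine intervalIntegral.continuous_parametric_intervalIntegral_of_continuous' (μ := volume)
        (f := fun (p : ℝ × ℝ) (t : ℝ) => max 0 (U (p.1 + t * I) - c)) ?_ (-π) π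
      exact continuous_const.max ((hU.comp (by fun_prop)).sub continuous_const)
    have h2 : Continuous fun p : ℝ × ℝ => - vS p.1 p.2 - δ * (p.2 * (3 * π - p.2)) :=
      continuous_vS.neg.sub (by fun_prop)
    have h3 : W = fun p => uS U p.1 p.2 + (- vS p.1 p.2 - δ * (p.2 * (3 * π - p.2))) := by
      ext p; simp only [hWd]; ring
    rw [h3]
    exact h1.add h2.continuousOn.upperSemicontinuousOn
  have hxr : X₀ ≤ x ∧ x ≤ X₁ := by
    constructor
    · by_contra! h
      exact lt_irrefl _ (hleft x y h.le hy0 hyπ)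
    · by_contra! h
      exact lt_irrefl _ (hright x y h.le hy0 hyπ)
  obtain ⟨⟨x₀, y₀⟩, hmem, hmx⟩ := UpperSemicontinuousOn.exists_isMaxOn
    (s := Set.Icc X₀ X₁ ×ˢ Set.Icc 0 π) (f := W) ⟨(x, y), hxr, hy0, hyπ⟩ (isCompact_Icc.prod isCompact_Icc) husc
  have hww : w ≤ W (x₀, y₀) := hmx (a := (x, y)) ⟨hxr, hy0, hyπ⟩
  have hmax : ∀ x' y', 0 ≤ y' → y' ≤ π → W (x', y') ≤ W (x₀, y₀) := by
    intro x' y' h0 h1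
    rcases lt_or_ge x' X₀ with h | h
    · exact (hleft x' y' h.le h0 h1).le.trans hww
    rcases lt_or_ge X₁ x' with h' | h'
    · exact (hright x' y' h'.le h0 h1).le.trans hww
    · exact hmx (a := (x', y')) ⟨⟨h, h'⟩, h0, h1⟩
  have hypos : 0 < y₀ := by
    rcases hmem.2.1.lt_or_eq with h | h
    · exact h
    · exfalso
      have hy0' : y₀ = 0 := h.symm
      have h1 : uS U x₀ 0 ≤ 0 := by
        obtain ⟨B, hB⟩ := (isCompact_Icc (a := -π) (b := π)).exists_bound_of_continuousOn
          (slice_cont hU x₀).continuousOn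
        have h1 : uS U x₀ 0 ≤ starD (fun t => U (x₀ + t * I)) 0 |B| :=
          star_le le_rfl (abs_nonneg B)
        have h2 : starD (fun t => U (x₀ + t * I)) 0 |B| = 0 := by
          rw [starD, intervalIntegral.integral_congr (g := fun _ => (0 : ℝ))]
          · simp
          · intro t ht
            rw [Set.uIcc_of_le (by linarith)] at ht
            have := (le_abs_self _).trans ((hB t ht).trans (le_abs_self B))
            exact max_eq_left (by linarith)
        linarith
      simp only [hWd, hy0', vS] at hww
      simp at hww
      linarith
  rcases (hmem.2.2 : y₀ ≤ π).lt_or_eq with hlt' | heq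
  · exact no_interior_max hU hU0 hUp hUs hδ hypos hlt' hmax
  · simp only at heq
    subst heq
    by_cases hz : ∃ t₀ : ℝ, U (x₀ + t₀ * I) = 0
    · obtain ⟨t₀, ht₀⟩ := hz
      exact no_boundary_max hU hU0 hUp hδ ht₀ hmax
    · push Not at hz
      have h1 : uS U x₀ π ≤ starD (fun t => U (x₀ + t * I)) π 0 := star_le hπ.le le_rfl
      have h2 : starD (fun t => U (x₀ + t * I)) π 0 = ∫ t in (-π)..π, U (x₀ + t * I) := by
        simp [starD, max_eq_right (hU0 _)]
      have h3 : -(2 * π * x₀) ≤ vS x₀ π := kV_line x₀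
      have h4 := hUline x₀ hz
      have h5 : 0 ≤ δ * (π * (3 * π - π)) := mul_nonneg hδ.le (mul_nonneg hπ.le (by linarith))
      simp only [hWd] at hww
      linarith
end

/-! ### Comparison of integral means -/

/-- Comparison of the means of `max 0 (log ‖F‖ - x)` with those of the Koebe function. By Cartan's
identity both sides are integrals of `max 0 (U - c)` with `c = -log R`, for `U` the Green function.
If `2y` is the measure of the set `{U > c}`, then the left integral is the integral of `U` over this
set minus `2yc`, and `star_ineq` applies. -/
lemma mean_max_le {F : ℂ → ℂ} {ρ R : ℝ} (hF : AnalyticOnNhd ℂ F (ball 0 ρ))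
    (hinj : Set.InjOn F (ball 0 ρ)) (h0 : F 0 = 0) (h1 : deriv F 0 = 1) (hρ : 1 < ρ)
    (hR : 0 < R) (hR1 : R < 1) (x : ℝ) :
    circleAverage (fun ζ => max 0 (Real.log ‖F ζ‖ - x)) 0 R
      ≤ circleAverage (fun ζ => max 0 (Real.log ‖koebe ζ‖ - x)) 0 R := by
  have hπ := Real.pi_pos
  have hππ : -π ≤ π := by linarith
  rw [circleAverage_koebe x hR hR1, ← circleAverage_grn hF hinj h0 hR (hR1.trans hρ),
    circleAverage_exp_eq]
  refine mul_le_mul_of_nonneg_left ?_ (by positivity)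
  set U := logGrn F ρ with hU
  have hUc : Continuous U := continuous_logGrn hF hinj h0 hρ
  have hUp : ∀ s, U (s + 2 * π * I) = U s := fun s => logGrn_periodic s
  set c := -Real.log R with hc
  have hc0 : 0 ≤ c := by linarith [Real.log_nonpos hR.le hR1.le]
  have e1 : ∀ t : ℝ, grn F ρ R (Complex.exp (x + t * I)) = max 0 (U (x + t * I) - c) := by
    intro t
    rw [grn_shift hinj hR1.le hR, hc, sub_neg_eq_add]; rfl
  simp only [e1, show ∀ a, a + Real.log R = a - c from fun a => by rw [hc]; ring]
  have hφ := slice_cont hUc x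
  set φ : ℝ → ℝ := fun t => U (x + t * I) with hφd
  set E : Set ℝ := {t | c < φ t} with hE
  have hEm : MeasurableSet E := measurableSet_lt measurable_const hφ.measurable
  have hem : Measurable (E.indicator (1 : ℝ → ℝ)) := measurable_one.indicator hEm
  have he0 : ∀ t, 0 ≤ E.indicator (1 : ℝ → ℝ) t := fun t =>
    Set.indicator_nonneg (fun _ _ => zero_le_one) t
  have he1 : ∀ t, E.indicator (1 : ℝ → ℝ) t ≤ 1 := fun t =>
    Set.indicator_le_self' (f := 1) (fun _ _ => zero_le_one) t
  have hii : ∀ ψ : ℝ → ℝ, Continuous ψ →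
      IntervalIntegrable (fun t => E.indicator 1 t * ψ t) volume (-π) π := by
    intro ψ hψ
    refine (hψ.abs.intervalIntegrable (-π) π).mono_fun'
      (hem.aestronglyMeasurable.mul hψ.aestronglyMeasurable) ?_
    filter_upwards with t
    rw [norm_mul, Real.norm_of_nonneg (he0 t)]
    exact mul_le_of_le_one_left (norm_nonneg _) (he1 t)
  have hi1 : IntervalIntegrable (E.indicator (1 : ℝ → ℝ)) volume (-π) π := by
    simpa using hii (fun _ => 1) continuous_const
  set y := (∫ t in (-π)..π, E.indicator (1 : ℝ → ℝ) t) / 2 with hy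
  have hy0 : 0 ≤ y := div_nonneg (intervalIntegral.integral_nonneg hππ fun t _ => he0 t) zero_le_two
  have hyπ : y ≤ π := by
    have : ∫ t in (-π)..π, E.indicator (1 : ℝ → ℝ) t ≤ ∫ t in (-π)..π, (1 : ℝ) :=
      intervalIntegral.integral_mono_on hππ hi1 (by simp) fun t _ => he1 t
    rw [intervalIntegral.integral_const, smul_eq_mul] at this
    linarith
  have hs := integral_le_star hφ (slice_per hUp x) hem he0 he1 (-π)
  rw [show -π + 2 * π = π by ring, ← hy] at hs
  have hu : uS U x y ≤ vS x y := star_ineq hUc (fun s => logGrn_nonneg s) hUp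
    (fun s ε h h' => logGrn_submean hF hinj h0 hρ s h h') (logGrn_large hF hinj hρ)
    (fun ε hε => logGrn_small hF hinj h0 h1 hρ hε)
    (fun x hx => logGrn_line hF hinj h0 h1 hρ hx) hy0 hyπ
  have hpt : ∀ t, max 0 (φ t - c) = E.indicator 1 t * φ t - E.indicator 1 t * c := by
    intro t
    by_cases h : t ∈ E
    · have : c ≤ φ t := le_of_lt h
      simp [h, this]
    · have : φ t ≤ c := not_lt.1 h
      simp [h, this]
  have hl : ∫ t in (-π)..π, max 0 (φ t - c) = (∫ t in (-π)..π, E.indicator 1 t * φ t) - 2 * y * c := by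
    simp only [hpt]
    rw [intervalIntegral.integral_sub (hii φ hφ) (hi1.mul_const c),
      intervalIntegral.integral_mul_const, hy]
    ring
  have hkc : Continuous fun t : ℝ => max 0 (kV (x + t * I) - c) :=
    continuous_const.max ((continuous_kV_line x).sub continuous_const)
  have hr1 : vS x y - 2 * y * c ≤ ∫ t in (-y)..y, max 0 (kV (x + t * I) - c) := by
    have : ∫ t in (-y)..y, (kV (x + t * I) - c) ≤ ∫ t in (-y)..y, max 0 (kV (x + t * I) - c) :=
      intervalIntegral.integral_mono_on (by linarith) ((kV_line_ii x _ _).sub (by simp))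
        (hkc.intervalIntegrable _ _) fun t _ => le_max_right _ _
    rw [intervalIntegral.integral_sub (kV_line_ii x _ _) (by simp), intervalIntegral.integral_const,
      smul_eq_mul] at this
    rw [vS]; linarith
  have hr2 : ∫ t in (-y)..y, max 0 (kV (x + t * I) - c)
      ≤ ∫ t in (-π)..π, max 0 (kV (x + t * I) - c) :=
    intervalIntegral.integral_mono_interval (by linarith) (by linarith) hyπ
      (Filter.Eventually.of_forall fun t => le_max_left _ _) (hkc.intervalIntegrable _ _)
  have hs' : ∫ t in (-π)..π, E.indicator 1 t * φ t ≤ uS U x y := hs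
  show ∫ t in (-π)..π, max 0 (φ t - c) ≤ _
  linarith

/-! ### Convex means and Parseval's identity -/

/-- If the means of `max 0 (a - x)` are dominated by those of `max 0 (b - x)` for every `x`, the
same holds for the means of any convex function `Φ`, written through its second derivative `w`. -/
lemma mean_convex {a b : ℝ → ℝ} (ha : Continuous a) (hb : Continuous b) {M : ℝ}
    (haM : ∀ t, |a t| ≤ M) (hbM : ∀ t, |b t| ≤ M)
    (h : ∀ x, ∫ t in (0 : ℝ)..2 * π, max 0 (a t - x) ≤ ∫ t in (0 : ℝ)..2 * π, max 0 (b t - x))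
    {w Φ : ℝ → ℝ} (hw : Continuous w) (hw0 : ∀ x, 0 ≤ w x) {Φ₀ d : ℝ} (hd : 0 ≤ d)
    (hΦ : ∀ s, |s| ≤ M → Φ s = Φ₀ + d * (s + M) + ∫ x in (-M)..M, w x * max 0 (s - x)) :
    ∫ t in (0 : ℝ)..2 * π, Φ (a t) ≤ ∫ t in (0 : ℝ)..2 * π, Φ (b t) := by
  have hM : 0 ≤ M := (abs_nonneg _).trans (haM 0)
  have key : ∀ c : ℝ → ℝ, Continuous c → (∀ t, |c t| ≤ M) → ∫ t in (0 : ℝ)..2 * π, Φ (c t)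
      = (2 * π) * Φ₀ + d * (∫ t in (0 : ℝ)..2 * π, max 0 (c t - (-M)))
        + ∫ x in (-M)..M, w x * ∫ t in (0 : ℝ)..2 * π, max 0 (c t - x) := by
    intro c hc hcM
    have hcont : Continuous (Function.uncurry fun t x : ℝ => w x * max 0 (c t - x)) := by
      simp only [Function.uncurry_def]; fun_prop
    have e1 : ∀ t, Φ (c t) = (Φ₀ + d * max 0 (c t - (-M)))
        + ∫ x in (-M)..M, w x * max 0 (c t - x) := by
      intro t
      rw [hΦ _ (hcM t), max_eq_right (by linarith [(abs_le.1 (hcM t)).1])]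
      ring
    have hpc : Continuous fun t => ∫ x in (-M)..M, w x * max 0 (c t - x) :=
      intervalIntegral.continuous_parametric_intervalIntegral_of_continuous' (μ := volume)
        (f := fun t x : ℝ => w x * max 0 (c t - x)) hcont _ _
    have i1 : Continuous fun t => d * max 0 (c t - (-M)) := by fun_prop
    have i2 : Continuous fun t => Φ₀ + d * max 0 (c t - (-M)) := by fun_prop
    have i0 : Continuous fun _ : ℝ => Φ₀ := continuous_const
    simp only [e1]
    rw [intervalIntegral.integral_add (i2.intervalIntegrable _ _)
      (hpc.intervalIntegrable _ _), intervalIntegral.integral_add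
      (i0.intervalIntegrable _ _) (i1.intervalIntegrable _ _)]
    congr 1
    · simp
    · rw [intervalIntegral_intervalIntegral_swap]
      · simp
      · exact (hcont.continuousOn.integrableOn_compact
          (isCompact_uIcc.prod isCompact_uIcc)).mono_set
          (Set.prod_mono Set.uIoc_subset_uIcc Set.uIoc_subset_uIcc)
  have hpc : ∀ c : ℝ → ℝ, Continuous c →
      Continuous fun x => w x * ∫ t in (0 : ℝ)..2 * π, max 0 (c t - x) := fun c hc =>
    hw.mul (intervalIntegral.continuous_parametric_intervalIntegral_of_continuous' (μ := volume)
        (f := fun x t : ℝ => max 0 (c t - x)) (by simp only [Function.uncurry_def]; fun_prop) _ _)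
  rw [key a ha haM, key b hb hbM]
  refine add_le_add (add_le_add le_rfl (mul_le_mul_of_nonneg_left (h _) hd)) ?_
  exact intervalIntegral.integral_mono_on (by linarith) ((hpc a ha).intervalIntegrable _ _)
    ((hpc b hb).intervalIntegrable _ _) fun x _ => mul_le_mul_of_nonneg_left (h x) (hw0 x)

/-- The kernel `max 0 (s - x)` of the integral remainder vanishes for `x ≥ s`. -/
lemma kernel_restrict {w : ℝ → ℝ} (hw : Continuous w) {s M : ℝ} (hs : |s| ≤ M) :
    ∫ x in (-M)..M, w x * max 0 (s - x) = ∫ x in (-M)..s, w x * (s - x) := by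
  obtain ⟨h1, h2⟩ := abs_le.1 hs
  have hc : Continuous fun x => w x * max 0 (s - x) := by fun_prop
  rw [← intervalIntegral.integral_add_adjacent_intervals (hc.intervalIntegrable (-M) s)
    (hc.intervalIntegrable s M)]
  have e2 : ∫ x in s..M, w x * max 0 (s - x) = 0 := by
    rw [intervalIntegral.integral_congr (g := fun _ => (0 : ℝ)), intervalIntegral.integral_zero]
    intro x hx
    rw [Set.uIcc_of_le h2] at hx
    simp [max_eq_left (sub_nonpos.2 hx.1)]
  rw [e2, add_zero]
  apply intervalIntegral.integral_congr
  intro x hx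
  rw [Set.uIcc_of_le h1] at hx
  simp [max_eq_right (sub_nonneg.2 hx.2)]

/-- Taylor's formula at `-M` with integral remainder, for the square of `s + M`. -/
lemma kernel_sq {s M : ℝ} (hs : |s| ≤ M) :
    (s + M) ^ 2 = 0 + 0 * (s + M) + ∫ x in (-M)..M, 2 * max 0 (s - x) := by
  rw [kernel_restrict (w := fun _ => 2) continuous_const hs,
    intervalIntegral.integral_eq_sub_of_hasDerivAt (f := fun x => -(s - x) ^ 2)]
  · ring
  · intro x _
    refine ((((hasDerivAt_id x).const_sub s).pow 2).neg).congr_deriv ?_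
    simp
  · exact (by fun_prop : Continuous fun x => 2 * (s - x)).intervalIntegrable _ _

/-- Taylor's formula at `-M` with integral remainder, for the exponential function. -/
lemma kernel_exp {s M : ℝ} (hs : |s| ≤ M) :
    Real.exp s = Real.exp (-M) + Real.exp (-M) * (s + M)
      + ∫ x in (-M)..M, Real.exp x * max 0 (s - x) := by
  rw [kernel_restrict Real.continuous_exp hs,
    intervalIntegral.integral_eq_sub_of_hasDerivAt (f := fun x => Real.exp x * (s - x + 1))]
  · ring
  · intro x _
    refine ((Real.hasDerivAt_exp x).mul
      (((hasDerivAt_id x).const_sub s).add_const 1)).congr_deriv ?_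
    simp; ring
  · exact (by fun_prop : Continuous fun x => Real.exp x * (s - x)).intervalIntegrable _ _

/-- Parseval's identity for a power series on the circle `|z| = R`. -/
lemma parseval {a : ℕ → ℂ} {p : ℂ → ℂ} {R : ℝ} (hR : 0 ≤ R)
    (h : ∀ z : ℂ, ‖z‖ = R → HasSum (fun n => a n * z ^ n) (p z)) :
    HasSum (fun n => ‖a n‖ ^ 2 * R ^ (2 * n)) (circleAverage (fun ζ => ‖p ζ‖ ^ 2) 0 R) := by
  have hs : Summable fun n => ‖a n‖ * R ^ n := by
    have := (h R (by simp [abs_of_nonneg hR])).summable.norm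
    simpa [abs_of_nonneg hR] using this
  have hpoly : ∀ N : ℕ, circleAverage (fun ζ => ‖∑ i ∈ Finset.range N, a i * ζ ^ i‖ ^ 2) 0 R
      = ∑ n ∈ Finset.range N, ‖a n‖ ^ 2 * R ^ (2 * n) := by
    intro N
    set P : Polynomial ℂ := ∑ i ∈ Finset.range N, Polynomial.monomial i (a i * (R : ℂ) ^ i) with hP
    have hc : ∀ i, P.coeff i = if i < N then a i * (R : ℂ) ^ i else 0 := by
      intro i
      simp [hP, Polynomial.finsetSum_coeff, Polynomial.coeff_monomial]
    have := P.sum_sq_norm_coeff_eq_circleAverage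
    rw [circleAverage_eq_circleAverage_zero_one]
    have e : (fun z : ℂ => ‖P.eval z‖ ^ 2) =
        fun z => ‖∑ i ∈ Finset.range N, a i * (R * z + 0) ^ i‖ ^ 2 := by
      ext z
      rw [hP, Polynomial.eval_finsetSum]
      simp only [Polynomial.eval_monomial, add_zero, mul_pow, mul_assoc]
    rw [← e, ← this, Finset.sum_subset (s₂ := Finset.range N)]
    · refine Finset.sum_congr rfl fun i hi => ?_
      rw [hc, if_pos (Finset.mem_range.1 hi), norm_mul, norm_pow, Complex.norm_real,
        Real.norm_of_nonneg hR]
      ring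
    · intro i hi
      by_contra hh
      rw [Polynomial.mem_support_iff, hc, if_neg (by simpa using hh)] at hi
      exact hi rfl
    · intro i _ hi
      rw [Polynomial.notMem_support_iff.1 hi]; simp
  rw [hasSum_iff_tendsto_nat_of_nonneg (fun n => by positivity)]
  simp only [← hpoly, circleAverage_def]
  refine Filter.Tendsto.const_smul ?_ _
  refine intervalIntegral.tendsto_integral_filter_of_dominated_convergence
    (fun _ => (∑' n, ‖a n‖ * R ^ n) ^ 2) (.of_forall fun N => ?_) (.of_forall fun N => ?_)
    (by simp) ?_
  · exact (by fun_prop : Continuous fun t => ‖∑ i ∈ Finset.range N, a i * circleMap 0 R t ^ i‖ ^ 2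
      ).aestronglyMeasurable
  · refine .of_forall fun t _ => ?_
    rw [Real.norm_of_nonneg (by positivity)]
    refine pow_le_pow_left₀ (norm_nonneg _) ?_ 2
    refine (norm_sum_le _ _).trans (le_trans (le_of_eq ?_)
      (hs.sum_le_tsum (Finset.range N) fun i _ => by positivity))
    refine Finset.sum_congr rfl fun i _ => ?_
    simp [abs_of_nonneg hR]
  · refine .of_forall fun t _ => ?_
    exact ((h _ (by simp [abs_of_nonneg hR])).tendsto_sum_nat.norm).pow 2

/-! ### Comparison of logarithmic coefficients on circles -/

lemma circle_le_iff {u v : ℂ → ℝ} {R R' : ℝ} :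
    circleAverage u 0 R ≤ circleAverage v 0 R' ↔
    ∫ t in (0 : ℝ)..2 * π, u (circleMap 0 R t) ≤ ∫ t in (0 : ℝ)..2 * π, v (circleMap 0 R' t) := by
  simp only [circleAverage_def, smul_eq_mul]
  exact mul_le_mul_iff_right₀ (by positivity)

lemma circle_cont {u : ℂ → ℝ} {R : ℝ} (hR : 0 < R) (hu : ContinuousOn u (sphere 0 R)) :
    Continuous fun t => u (circleMap 0 R t) :=
  hu.comp_continuous (continuous_circleMap 0 R) fun t => circleMap_mem_sphere 0 hR.le t

lemma circle_bound {u : ℂ → ℝ} {R : ℝ} (hR : 0 < R) (hu : ContinuousOn u (sphere 0 R)) :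
    ∃ M, ∀ t, |u (circleMap 0 R t)| ≤ M := by
  obtain ⟨C, hC⟩ := (isCompact_sphere (0 : ℂ) R).exists_bound_of_continuousOn hu
  exact ⟨C, fun t => hC _ (circleMap_mem_sphere 0 hR.le t)⟩

/-- A real function `L + Re p` with `p` analytic and `p 0 = 0` has mean square
`L² + ½ · mean |p|²`. -/
lemma mean_sq_re {p : ℂ → ℂ} {u : ℂ → ℝ} {r R L : ℝ} (hp : DifferentiableOn ℂ p (ball 0 r))
    (hR : 0 < R) (hRr : R < r) (hp0 : p 0 = 0)
    (hu : ∀ ζ : ℂ, ‖ζ‖ = R → u ζ = L + (p ζ).re) :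
    circleAverage (fun ζ => u ζ ^ 2) 0 R
      = L ^ 2 + 1 / 2 * circleAverage (fun ζ => ‖p ζ‖ ^ 2) 0 R := by
  have hsub : closedBall (0 : ℂ) |R| ⊆ ball 0 r := by
    rw [abs_of_pos hR]; exact closedBall_subset_ball hRr
  have hsub' : sphere (0 : ℂ) |R| ⊆ ball 0 r := sphere_subset_closedBall.trans hsub
  set q : ℂ → ℂ := fun ζ => 2 * L * p ζ + 1 / 2 * p ζ ^ 2 with hq
  have hqd : DifferentiableOn ℂ q (ball 0 r) := by
    simp only [hq]; exact ((hp.const_mul _)).add ((hp.pow 2).const_mul _)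
  have hqi : CircleIntegrable q 0 R := (hqd.continuousOn.mono hsub').circleIntegrable'
  have havg : circleAverage (fun ζ => (q ζ).re) 0 R = 0 := by
    have h1 := Complex.reCLM.circleAverage_comp_comm hqi
    have h2 : circleAverage q 0 R = q 0 :=
      DiffContOnCl.circleAverage ((hqd.mono hsub).diffContOnCl_ball subset_rfl)
    rw [h2] at h1
    have : q 0 = 0 := by simp [hq, hp0]
    rw [this] at h1
    simpa [Function.comp_def] using h1
  have hn : CircleIntegrable (fun ζ => 1 / 2 * ‖p ζ‖ ^ 2) 0 R :=
    (((hp.continuousOn.mono hsub').norm.pow 2).const_mul (1 / 2)).circleIntegrable'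
  have hqr : CircleIntegrable (fun ζ => (q ζ).re) 0 R :=
    (Complex.continuous_re.comp_continuousOn (hqd.continuousOn.mono hsub')).circleIntegrable'
  have e : Set.EqOn (fun ζ => u ζ ^ 2) (fun ζ => (L ^ 2 + 1 / 2 * ‖p ζ‖ ^ 2) + (q ζ).re)
      (sphere 0 |R|) := by
    intro ζ hζ
    have : ‖ζ‖ = R := by simpa [abs_of_pos hR] using hζ
    have hn2 : ‖p ζ‖ ^ 2 = (p ζ).re * (p ζ).re + (p ζ).im * (p ζ).im := by
      rw [← Complex.normSq_eq_norm_sq, Complex.normSq_apply]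
    simp only [hu ζ this, hq, hn2, pow_two]
    simp
    ring
  have hn' : CircleIntegrable (fun ζ => L ^ 2 + 1 / 2 * ‖p ζ‖ ^ 2) 0 R :=
    (circleIntegrable_const _ _ _).add hn
  rw [circleAverage_congr_sphere e, circleAverage_fun_add hn' hqr, havg, circleAverage_fun_add (circleIntegrable_const _ _ _) hn, circleAverage_const,
    add_zero]
  have := circleAverage_fun_smul (f := fun ζ => ‖p ζ‖ ^ 2) (a := (1 / 2 : ℝ)) (c := 0) (R := R)
  simp only [smul_eq_mul] at this
  rw [this]

/-- The comparison of means for the convex function `(s + M)²`. As `u + M` and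
`v + M` are both of the form `L + M` plus a real part, `mean_sq_re` computes the two means. -/
lemma compare_sq {p q : ℂ → ℂ} {u v : ℂ → ℝ} {r R L : ℝ} (hp : DifferentiableOn ℂ p (ball 0 r))
    (hq : DifferentiableOn ℂ q (ball 0 r)) (hR : 0 < R) (hRr : R < r) (hp0 : p 0 = 0)
    (hq0 : q 0 = 0) (hu : ∀ ζ : ℂ, ‖ζ‖ = R → u ζ = L + (p ζ).re)
    (hv : ∀ ζ : ℂ, ‖ζ‖ = R → v ζ = L + (q ζ).re)
    (h : ∀ x, circleAverage (fun ζ => max 0 (u ζ - x)) 0 R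
      ≤ circleAverage (fun ζ => max 0 (v ζ - x)) 0 R) :
    circleAverage (fun ζ => ‖p ζ‖ ^ 2) 0 R ≤ circleAverage (fun ζ => ‖q ζ‖ ^ 2) 0 R := by
  have hsub : sphere (0 : ℂ) R ⊆ ball 0 r :=
    sphere_subset_closedBall.trans (closedBall_subset_ball hRr)
  have hc : ∀ {p : ℂ → ℂ} {u : ℂ → ℝ}, DifferentiableOn ℂ p (ball 0 r) →
      (∀ ζ : ℂ, ‖ζ‖ = R → u ζ = L + (p ζ).re) → ContinuousOn u (sphere 0 R) := by
    intro p u hp hu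
    refine (continuousOn_const.add (Complex.continuous_re.comp_continuousOn
      (hp.continuousOn.mono hsub))).congr fun ζ hζ => hu ζ (by simpa using hζ)
  obtain ⟨M₁, hM₁⟩ := circle_bound hR (hc hp hu)
  obtain ⟨M₂, hM₂⟩ := circle_bound hR (hc hq hv)
  set M := max M₁ M₂
  have key : circleAverage (fun ζ => (u ζ + M) ^ 2) 0 R
      ≤ circleAverage (fun ζ => (v ζ + M) ^ 2) 0 R := by
    rw [circle_le_iff]
    refine mean_convex (Φ := fun s => (s + M) ^ 2) (circle_cont hR (hc hp hu))
      (circle_cont hR (hc hq hv))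
      (fun t => (hM₁ t).trans (le_max_left _ _)) (fun t => (hM₂ t).trans (le_max_right _ _))
      (fun x => circle_le_iff.1 (h x)) (continuous_const (y := (2 : ℝ))) (fun _ => by norm_num)
      le_rfl fun s hs => kernel_sq hs
  rw [mean_sq_re hp hR hRr hp0 (L := L + M) (u := fun ζ => u ζ + M) (fun ζ hζ => by rw [hu ζ hζ]; ring),
    mean_sq_re hq hR hRr hq0 (L := L + M) (u := fun ζ => v ζ + M) (fun ζ hζ => by rw [hv ζ hζ]; ring)] at key
  linarith

/-- The expansion of `log (koebe z / z)`; the coefficient at `n = 0` is `2 / 0 = 0`. -/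
lemma koebe_series {z : ℂ} (hz : ‖z‖ < 1) :
    HasSum (fun n : ℕ => (2 / n : ℂ) * z ^ n) (-2 * Complex.log (1 - z)) := by
  have := (Complex.hasSum_taylorSeries_neg_log hz).mul_left 2
  rw [show -2 * Complex.log (1 - z) = 2 * -Complex.log (1 - z) by ring]
  refine this.congr_fun fun n => ?_
  ring

lemma log_norm_of_exp {f g : ℂ → ℂ} {z : ℂ} (hz0 : z ≠ 0) (h : Complex.exp (g z) = f z / z) :
    Real.log ‖f z‖ = Real.log ‖z‖ + (g z).re := by
  have : f z = z * Complex.exp (g z) := by rw [h]; field_simp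
  rw [this, norm_mul, Complex.norm_exp, Real.log_mul (norm_ne_zero_iff.2 hz0)
    (Real.exp_pos _).ne', Real.log_exp]

/-- Weighted `ℓ²` comparison of the Taylor coefficients of `log (f z / z)` with those of the Koebe
function, on every circle of radius `R < 1`. As `mean_max_le` asks for injectivity on a disc of
radius greater than `1`, it is applied to the dilations `f (s z) / s`, and then `s → 1`. -/
lemma coeff_sum_le {f g : ℂ → ℂ} {c : ℕ → ℂ} (hf : AnalyticOnNhd ℂ f (ball 0 1))
    (hinj : Set.InjOn f (ball 0 1)) (h0 : f 0 = 0) (h1 : deriv f 0 = 1)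
    (hg : AnalyticOnNhd ℂ g (ball 0 1)) (hg0 : g 0 = 0)
    (hexp : ∀ z ∈ ball (0 : ℂ) 1, z ≠ 0 → Complex.exp (g z) = f z / z)
    (hc : ∀ z ∈ ball (0 : ℂ) 1, HasSum (fun n => c n * z ^ n) (g z))
    {R : ℝ} (hR : 0 < R) (hR1 : R < 1) (N : ℕ) :
    ∑ n ∈ Finset.range N, ‖c n‖ ^ 2 * R ^ (2 * n)
      ≤ ∑' n : ℕ, ‖(2 / n : ℂ)‖ ^ 2 * R ^ (2 * n) := by
  have hk := parseval hR.le (a := fun n : ℕ => (2 / n : ℂ)) (p := fun z => -2 * Complex.log (1 - z))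
    (fun z hz => koebe_series (by rw [hz]; exact hR1))
  rw [hk.tsum_eq]
  have hq : DifferentiableOn ℂ (fun z => -2 * Complex.log (1 - z)) (ball 0 1) := by
    intro z hz
    have : (1 - z) ∈ Complex.slitPlane := by
      left
      have := (Complex.re_le_norm z).trans_lt (by simpa using hz : ‖z‖ < 1)
      simp; linarith
    exact ((((differentiableAt_id).const_sub 1).clog this).const_mul _).differentiableWithinAt
  have main : ∀ s : ℝ, 0 < s → s < 1 → ∑ n ∈ Finset.range N, ‖c n * s ^ n‖ ^ 2 * R ^ (2 * n)
      ≤ circleAverage (fun ζ => ‖-2 * Complex.log (1 - ζ)‖ ^ 2) 0 R := by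
    intro s hs hs1
    have hsC : (s : ℂ) ≠ 0 := by exact_mod_cast hs.ne'
    have hmap : ∀ z ∈ ball (0 : ℂ) (1 / s), (s : ℂ) * z ∈ ball (0 : ℂ) 1 := by
      intro z hz
      rw [mem_ball_zero_iff] at hz ⊢
      rw [norm_mul, Complex.norm_real, Real.norm_of_nonneg hs.le]
      rw [lt_div_iff₀ hs] at hz; linarith
    have hρ : 1 < 1 / s := by rw [lt_div_iff₀ hs]; linarith
    have hsub : ball (0 : ℂ) 1 ⊆ ball 0 (1 / s) := ball_subset_ball hρ.le
    have hF : AnalyticOnNhd ℂ (fun z => f (s * z) / s) (ball 0 (1 / s)) := fun z hz =>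
      ((hf _ (hmap z hz)).fun_comp (by fun_prop)).div analyticAt_const hsC
    have hFi : Set.InjOn (fun z => f (s * z) / s) (ball 0 (1 / s)) := by
      intro x hx y hy hxy
      have := hinj (hmap x hx) (hmap y hy) (by simpa [div_left_inj' hsC] using hxy)
      exact mul_left_cancel₀ hsC this
    have hF1 : deriv (fun z => f (s * z) / s) 0 = 1 := by
      have hd : HasDerivAt f 1 (s * 0) := by
        rw [mul_zero, ← h1]; exact (hf 0 (by simp)).differentiableAt.hasDerivAt
      have := ((hd.comp 0 ((hasDerivAt_id (0 : ℂ)).const_mul (s : ℂ))).div_const (s : ℂ)).deriv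
      rw [Function.comp_def] at this
      simpa [hsC] using this
    have hp : DifferentiableOn ℂ (fun z => g (s * z)) (ball 0 1) := fun z hz =>
      ((hg _ (hmap z (hsub hz))).differentiableAt.comp z (by fun_prop)).differentiableWithinAt
    have hball : ∀ ζ : ℂ, ‖ζ‖ = R → ζ ∈ ball (0 : ℂ) 1 ∧ ζ ≠ 0 := fun ζ hζ =>
      ⟨by simpa [hζ] using hR1, norm_ne_zero_iff.1 (by rw [hζ]; exact hR.ne')⟩
    have hpar := parseval hR.le (a := fun n : ℕ => c n * s ^ n) (p := fun z => g (s * z))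
      (fun z hz => by
        convert hc _ (hmap z (hsub (hball z hz).1)) using 2
        ring)
    refine (sum_le_hasSum _ (fun n _ => by positivity) hpar).trans ?_
    refine compare_sq (r := 1) (L := Real.log R) hp hq hR hR1 (by simp [hg0]) (by simp)
      (u := fun ζ => Real.log ‖f (s * ζ) / s‖) (v := fun ζ => Real.log ‖koebe ζ‖) ?_ ?_
      fun x => mean_max_le hF hFi (by simp [h0]) hF1 hρ hR hR1 x
    · intro ζ hζ
      obtain ⟨hb, hz⟩ := hball ζ hζ
      have := log_norm_of_exp (f := fun z => f (s * z) / s) (g := fun z => g (s * z)) hz (by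
        rw [hexp _ (hmap ζ (hsub hb)) (mul_ne_zero hsC hz)]; field_simp)
      rw [this, hζ]
    · intro ζ hζ
      obtain ⟨hb, hz⟩ := hball ζ hζ
      have h1z := one_sub_ne_zero hb
      have := log_norm_of_exp (f := koebe) (g := fun z => -2 * Complex.log (1 - z)) hz (by
        simp only [neg_mul, Complex.exp_neg, two_mul, Complex.exp_add, Complex.exp_log h1z, koebe]
        field_simp)
      rw [this, hζ]
  have hlim : Filter.Tendsto (fun s : ℝ => ∑ n ∈ Finset.range N, ‖c n * (s : ℂ) ^ n‖ ^ 2 * R ^ (2 * n))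
      (nhdsWithin 1 (Set.Iio 1)) (nhds (∑ n ∈ Finset.range N, ‖c n‖ ^ 2 * R ^ (2 * n))) := by
    have : Continuous fun s : ℝ => ∑ n ∈ Finset.range N, ‖c n * (s : ℂ) ^ n‖ ^ 2 * R ^ (2 * n) := by
      fun_prop
    have := (this.tendsto 1).mono_left (nhdsWithin_le_nhds (s := Set.Iio 1))
    simpa using this
  refine le_of_tendsto hlim ?_
  filter_upwards [Ioo_mem_nhdsLT (show (0 : ℝ) < 1 by norm_num)] with s hs
  exact main s hs.1 hs.2

/-! ### Monotone means of 1/|f| and the case |γ₁| = 1 -/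

/-- The comparison of means for the convex function `exp`; the two circles may have different radii. -/
lemma compare_exp {u v : ℂ → ℝ} {R R' : ℝ} (hR : 0 < R) (hR' : 0 < R')
    (hu : ContinuousOn u (sphere 0 R)) (hv : ContinuousOn v (sphere 0 R'))
    (h : ∀ x, circleAverage (fun ζ => max 0 (u ζ - x)) 0 R
      ≤ circleAverage (fun ζ => max 0 (v ζ - x)) 0 R') :
    circleAverage (fun ζ => Real.exp (u ζ)) 0 R ≤ circleAverage (fun ζ => Real.exp (v ζ)) 0 R' := by
  obtain ⟨M₁, hM₁⟩ := circle_bound hR hu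
  obtain ⟨M₂, hM₂⟩ := circle_bound hR' hv
  rw [circle_le_iff]
  exact mean_convex (Φ := Real.exp) (M := max M₁ M₂) (circle_cont hR hu) (circle_cont hR' hv)
      (fun t => (hM₁ t).trans (le_max_left _ _)) (fun t => (hM₂ t).trans (le_max_right _ _))
      (fun x => circle_le_iff.1 (h x)) Real.continuous_exp (fun _ => (Real.exp_pos _).le)
      (Real.exp_pos _).le fun s hs => kernel_exp hs

/-- The means of `max 0 (-log ‖f‖ - x)` over circles decrease with the radius. For `u = log ‖f‖`,
`max 0 (-u - x) = max 0 (u + x) - (u + x)`, so by Cartan's identity and `circleAverage_log_eq` this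
mean is `-x` plus the mean of `grn f 1 R - log R` over a fixed circle, and `grn_sub_log_anti`
applies. -/
lemma mean_neg_log_anti {f : ℂ → ℂ} (hf : AnalyticOnNhd ℂ f (ball 0 1))
    (hinj : Set.InjOn f (ball 0 1)) (h0 : f 0 = 0) (h1 : deriv f 0 = 1) {R₀ R : ℝ}
    (hR₀ : 0 < R₀) (hRR : R₀ ≤ R) (hR1 : R < 1) (x : ℝ) :
    circleAverage (fun ζ => max 0 (-Real.log ‖f ζ‖ - x)) 0 R
      ≤ circleAverage (fun ζ => max 0 (-Real.log ‖f ζ‖ - x)) 0 R₀ := by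
  have hcont : ∀ r : ℝ, 0 < r → r < 1 → ContinuousOn (fun ζ => Real.log ‖f ζ‖) (sphere 0 |r|) := by
    intro r hr hr1
    have hsub : ∀ z ∈ sphere (0 : ℂ) |r|, z ∈ ball (0 : ℂ) 1 ∧ z ≠ 0 := by
      intro z hz
      have : ‖z‖ = r := by simpa [abs_of_pos hr] using hz
      exact ⟨by simpa [this] using hr1, norm_ne_zero_iff.1 (by rw [this]; exact hr.ne')⟩
    refine ContinuousOn.log ?_ fun z hz => norm_ne_zero_iff.2
      (ne_zero_of_mem hinj h0 (hsub z hz).1 (hsub z hz).2)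
    exact (hf.continuousOn.mono fun z hz => (hsub z hz).1).norm
  have key : ∀ r : ℝ, 0 < r → r < 1 → circleAverage (fun ζ => max 0 (-Real.log ‖f ζ‖ - x)) 0 r
      = circleAverage (fun w => grn f 1 r w - Real.log r) 0 (Real.exp (-x)) - x := by
    intro r hr hr1
    have hl := hcont r hr hr1
    have hm : CircleIntegrable (fun ζ => max 0 (Real.log ‖f ζ‖ - -x)) 0 r :=
      (continuousOn_const.sup (hl.sub continuousOn_const)).circleIntegrable'
    have hl2 : CircleIntegrable (fun ζ => Real.log ‖f ζ‖ + x) 0 r :=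
      (hl.add continuousOn_const).circleIntegrable'
    have hg : CircleIntegrable (grn f 1 r) 0 (Real.exp (-x)) := by
      refine ((continuousOn_grn hf hinj h0 hr hr1).mono ?_).circleIntegrable'
      intro w hw hw0
      rw [Set.mem_singleton_iff] at hw0
      rw [hw0] at hw
      simp at hw
      exact (Real.exp_pos _).ne hw
    have e : (fun ζ => max 0 (-Real.log ‖f ζ‖ - x)) =
        fun ζ => max 0 (Real.log ‖f ζ‖ - -x) - (Real.log ‖f ζ‖ + x) := by
      ext ζ
      rcases le_total (Real.log ‖f ζ‖ + x) 0 with h | h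
      · rw [max_eq_right (by linarith), max_eq_left (by linarith)]; ring
      · rw [max_eq_left (by linarith), max_eq_right (by linarith)]; ring
    rw [e, circleAverage_fun_sub hm hl2, ← circleAverage_grn hf hinj h0 hr hr1,
      circleAverage_fun_add hl.circleIntegrable' (circleIntegrable_const _ _ _),
      circleAverage_log_eq hf hinj h0 h1 hr hr1, circleAverage_const,
      circleAverage_fun_sub hg (circleIntegrable_const _ _ _), circleAverage_const]
    ring
  rw [key R (hR₀.trans_le hRR) hR1, key R₀ hR₀ (hRR.trans_lt hR1)]
  have hi : ∀ r : ℝ, 0 < r → r < 1 →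
      CircleIntegrable (fun w => grn f 1 r w - Real.log r) 0 (Real.exp (-x)) := by
    intro r hr hr1
    refine (((continuousOn_grn hf hinj h0 hr hr1).mono ?_).sub continuousOn_const).circleIntegrable'
    intro w hw hw0
    rw [Set.mem_singleton_iff] at hw0
    rw [hw0] at hw
    simp at hw
    exact (Real.exp_pos _).ne hw
  refine sub_le_sub_right (circleAverage_mono (hi R (hR₀.trans_le hRR) hR1)
    (hi R₀ hR₀ (hRR.trans_lt hR1)) fun w _ => grn_sub_log_anti hinj hR₀ hRR w) x

/-- The `c n` are the Taylor coefficients of `(f z / z) ^ (-1/2)`. The mean of `1 / ‖f‖` over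
`‖z‖ = R` equals `R⁻¹ ∑ ‖c m‖² R ^ (2m)` and is nonincreasing in `R`. Comparing two radii and
letting both tend to `1` gives `∑ (2m - 1) ‖c m‖² ≤ 0`, of which only three terms are kept. -/
lemma area_coeff {f g : ℂ → ℂ} {c : ℕ → ℂ} (hf : AnalyticOnNhd ℂ f (ball 0 1))
    (hinj : Set.InjOn f (ball 0 1)) (h0 : f 0 = 0) (h1 : deriv f 0 = 1)
    (hexp : ∀ z ∈ ball (0 : ℂ) 1, z ≠ 0 → Complex.exp (g z) = f z / z)
    (hc : ∀ z ∈ ball (0 : ℂ) 1, HasSum (fun n => c n * z ^ n) (Complex.exp (-g z / 2)))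
    (hc0 : c 0 = 1) {n : ℕ} (hn : 2 ≤ n) : ‖c 1‖ ^ 2 + ‖c n‖ ^ 2 ≤ 1 := by
  have hball : ∀ {R : ℝ}, 0 < R → R < 1 → ∀ ζ : ℂ, ‖ζ‖ = R → ζ ∈ ball (0 : ℂ) 1 ∧ ζ ≠ 0 :=
    fun hR hR1 ζ hζ =>
      ⟨by simpa [hζ] using hR1, norm_ne_zero_iff.1 (by rw [hζ]; exact hR.ne')⟩
  have hpar : ∀ R : ℝ, 0 < R → R < 1 → HasSum (fun n => ‖c n‖ ^ 2 * R ^ (2 * n))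
      (R * circleAverage (fun ζ => Real.exp (-Real.log ‖f ζ‖)) 0 R) := by
    intro R hR hR1
    have := parseval hR.le (a := c) fun z hz => hc z (hball hR hR1 z hz).1
    convert this using 1
    have e := circleAverage_fun_smul (f := fun ζ => Real.exp (-Real.log ‖f ζ‖)) (a := R)
      (c := 0) (R := R)
    simp only [smul_eq_mul] at e
    rw [← e]
    refine circleAverage_congr_sphere fun z hz => ?_
    have hz' : ‖z‖ = R := by simpa [abs_of_pos hR] using hz
    obtain ⟨hb, hz0⟩ := hball hR hR1 z hz'
    rw [log_norm_of_exp hz0 (hexp z hb hz0), hz', neg_add, Real.exp_add, Real.exp_neg,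
      Real.exp_log hR, mul_inv_cancel_left₀ hR.ne', Complex.norm_exp, ← Real.exp_nat_mul]
    congr 1
    simp
    ring
  have hfin : ∀ r : ℝ, 0 < r → r < 1 → ‖c 1‖ ^ 2 * r ^ 2 + ‖c n‖ ^ 2 * r ^ (2 * n) ≤ 1 := by
    intro r hr hr1
    obtain ⟨R, hrR, hR1⟩ := exists_between hr1
    have hR := hr.trans hrR
    have hcs : ∀ s : ℝ, 0 < s → s < 1 → ContinuousOn (fun ζ => -Real.log ‖f ζ‖) (sphere 0 s) := by
      intro s hs hs1
      refine (ContinuousOn.log ?_ fun z hz => ?_).neg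
      · exact (hf.continuousOn.mono fun z hz => (hball hs hs1 z (by simpa using hz)).1).norm
      · have := hball hs hs1 z (by simpa using hz)
        exact norm_ne_zero_iff.2 (ne_zero_of_mem hinj h0 this.1 this.2)
    have hG := compare_exp hR hr (hcs R hR hR1) (hcs r hr hr1)
      fun x => mean_neg_log_anti hf hinj h0 h1 hr hrR.le hR1 x
    have hS := ((hpar R hR hR1).mul_left r).sub ((hpar r hr hr1).mul_left R)
    have hle : ∑ m ∈ ({0, 1, n} : Finset ℕ),
        (r * (‖c m‖ ^ 2 * R ^ (2 * m)) - R * (‖c m‖ ^ 2 * r ^ (2 * m))) ≤ 0 := by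
      refine (sum_le_hasSum _ (fun m hm => ?_) hS).trans ?_
      · obtain ⟨k, rfl⟩ : ∃ k, m = k + 1 := Nat.exists_eq_succ_of_ne_zero (by
          rintro rfl; simp at hm)
        have h2 : r ^ (2 * k + 1) ≤ R ^ (2 * k + 1) := pow_le_pow_left₀ hr.le hrR.le _
        have : r * (‖c (k + 1)‖ ^ 2 * R ^ (2 * (k + 1))) - R * (‖c (k + 1)‖ ^ 2 * r ^ (2 * (k + 1)))
            = ‖c (k + 1)‖ ^ 2 * (r * R) * (R ^ (2 * k + 1) - r ^ (2 * k + 1)) := by ring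
        rw [this]
        exact mul_nonneg (by positivity) (sub_nonneg.2 h2)
      · have : 0 < r * R := by positivity
        nlinarith
    rw [Finset.sum_insert (by simp; omega), Finset.sum_insert (by simp; omega),
      Finset.sum_singleton, hc0] at hle
    obtain ⟨k, rfl⟩ : ∃ k, n = k + 1 := Nat.exists_eq_succ_of_ne_zero (by omega)
    have h2 : r ^ (2 * k) ≤ R ^ (2 * k) := pow_le_pow_left₀ hr.le hrR.le _
    have hd : 0 < R - r := by linarith
    set A := ‖c 1‖ ^ 2
    set B := ‖c (k + 1)‖ ^ 2 with hB
    have hB0 : 0 ≤ B := by positivity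
    have hA0 : 0 ≤ A := by positivity
    have e3 : B * (r * R * R) * r ^ (2 * k) ≤ B * (r * R * R) * R ^ (2 * k) :=
      mul_le_mul_of_nonneg_left h2 (by positivity)
    have hle' : (R - r) * (A * (r * R) + B * (r * R) * r ^ (2 * k) - 1) ≤ 0 := by
      simp only [norm_one, mul_zero, pow_zero, mul_one, one_pow] at hle
      ring_nf at hle e3 ⊢
      linarith
    have h4 : A * (r * R) + B * (r * R) * r ^ (2 * k) ≤ 1 := by
      by_contra hh
      push Not at hh
      nlinarith
    have e5 : A * (r * r) ≤ A * (r * R) := by gcongr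
    have e6 : B * (r * r) * r ^ (2 * k) ≤ B * (r * R) * r ^ (2 * k) := by gcongr
    have e7 : B * r ^ (2 * (k + 1)) = B * (r * r) * r ^ (2 * k) := by ring
    rw [e7]
    nlinarith
  have hlim : Filter.Tendsto (fun r : ℝ => ‖c 1‖ ^ 2 * r ^ 2 + ‖c n‖ ^ 2 * r ^ (2 * n))
      (nhdsWithin 1 (Set.Iio 1)) (nhds (‖c 1‖ ^ 2 + ‖c n‖ ^ 2)) := by
    have : Continuous fun r : ℝ => ‖c 1‖ ^ 2 * r ^ 2 + ‖c n‖ ^ 2 * r ^ (2 * n) := by fun_prop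
    have := (this.tendsto 1).mono_left (nhdsWithin_le_nhds (s := Set.Iio 1))
    simpa using this
  refine le_of_tendsto hlim ?_
  filter_upwards [Ioo_mem_nhdsLT (show (0 : ℝ) < 1 by norm_num)] with s hs
  exact hfin s hs.1 hs.2

lemma hasSum_taylor {h : ℂ → ℂ} (hh : AnalyticOnNhd ℂ h (ball 0 1)) {z : ℂ}
    (hz : z ∈ ball (0 : ℂ) 1) :
    HasSum (fun n : ℕ => ((n.factorial : ℂ)⁻¹ * iteratedDeriv n h 0) * z ^ n) (h z) := by
  have := Complex.hasSum_taylorSeries_on_ball (f := h) (c := 0) (r := 1)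
    (fun x hx => (hh x (by simpa using hx)).differentiableAt.differentiableWithinAt)
    (z := z) (by simpa using hz)
  refine this.congr_fun fun n => ?_
  simp
  ring

/-- Only rotations of the Koebe function have `|γ₁| = 1`: by `area_coeff` all higher coefficients of
`(f z / z) ^ (-1/2)` vanish, so that this function is `1 - γ₁ z`. -/
lemma eqOn_koebe_of_norm {f g : ℂ → ℂ} (hf : AnalyticOnNhd ℂ f (ball 0 1))
    (hinj : Set.InjOn f (ball 0 1)) (h0 : f 0 = 0) (h1 : deriv f 0 = 1)
    (hg : AnalyticOnNhd ℂ g (ball 0 1)) (hg0 : g 0 = 0)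
    (hexp : ∀ z ∈ ball (0 : ℂ) 1, z ≠ 0 → Complex.exp (g z) = f z / z)
    {γ : ℂ} (hγ : deriv g 0 = 2 * γ) (hn : ‖γ‖ = 1) :
    ∃ θ : ℝ, Set.EqOn f (fun z => z / (1 - Complex.exp (θ * Complex.I) * z) ^ 2) (ball 0 1) := by
  have hh : AnalyticOnNhd ℂ (fun z => Complex.exp (-g z / 2)) (ball 0 1) := fun z hz =>
    ((hg z hz).neg.div_const).cexp
  set c : ℕ → ℂ := fun n => (n.factorial : ℂ)⁻¹ *
    iteratedDeriv n (fun z => Complex.exp (-g z / 2)) 0 with hcd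
  have hc : ∀ z ∈ ball (0 : ℂ) 1, HasSum (fun n => c n * z ^ n) (Complex.exp (-g z / 2)) :=
    fun z hz => hasSum_taylor hh hz
  have hc0 : c 0 = 1 := by simp [hcd, hg0]
  have hc1 : c 1 = -γ := by
    have hd := (((hg 0 (by simp)).differentiableAt.hasDerivAt.neg.div_const 2).cexp).deriv
    simp only [Pi.neg_apply, hg0, hγ] at hd
    simp only [hcd, Nat.factorial_one, Nat.cast_one, inv_one, one_mul, iteratedDeriv_one]
    rw [hd]; simp; ring
  have hcn : ∀ n, 2 ≤ n → c n = 0 := by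
    intro n hn2
    have := area_coeff hf hinj h0 h1 hexp hc hc0 hn2
    rw [hc1, norm_neg, hn] at this
    have h2 : ‖c n‖ ^ 2 = 0 := le_antisymm (by linarith) (by positivity)
    simpa using h2
  refine ⟨γ.arg, fun z hz => ?_⟩
  have hγe : Complex.exp (γ.arg * Complex.I) = γ := by
    have := Complex.norm_mul_exp_arg_mul_I γ
    rwa [hn, Complex.ofReal_one, one_mul] at this
  rcases eq_or_ne z 0 with rfl | hz0
  · simp [h0]
  have hlin : Complex.exp (-g z / 2) = 1 - γ * z := by
    rw [← (hc z hz).tsum_eq, tsum_eq_sum (s := Finset.range 2)]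
    · simp [Finset.sum_range_succ, hc0, hc1]; ring
    · intro n hn2
      rw [hcn n (not_lt.1 fun h => hn2 (Finset.mem_range.2 h)), zero_mul]
  simp only [hγe]
  rw [← hlin, ← Complex.exp_nat_mul]
  have e : ((2 : ℕ) : ℂ) * (-g z / 2) = -g z := by push_cast; ring
  rw [e, Complex.exp_neg, hexp z hz hz0]
  have := ne_zero_of_mem hinj h0 hz hz0
  field_simp

/-! ### The weighted sum -/

/-- The terms are `1 / (n (2n - 1))` with `n` shifted by one, so that the partial sums are
`2 (H_{2N} - H_N)` in terms of harmonic numbers. -/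
lemma hasSum_log_two :
    HasSum (fun n : ℕ => (((n : ℝ) + 1) / (2 * ((n : ℝ) + 1) - 1)) * (1 / ((n : ℝ) + 1) ^ 2))
      (2 * Real.log 2) := by
  rw [hasSum_iff_tendsto_nat_of_nonneg]
  · have e : ∀ N : ℕ, ∑ n ∈ Finset.range N,
        (((n : ℝ) + 1) / (2 * ((n : ℝ) + 1) - 1)) * (1 / ((n : ℝ) + 1) ^ 2)
        = 2 * ((harmonic (2 * N) : ℝ) - harmonic N) := by
      intro N
      induction N with
      | zero => simp
      | succ N ih =>
        rw [Finset.sum_range_succ, ih, show 2 * (N + 1) = (2 * N + 1) + 1 by ring,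
          harmonic_succ, harmonic_succ, harmonic_succ]
        push_cast
        have h1 : (2 * ((N : ℝ) + 1) - 1) ≠ 0 := by
          have : (0 : ℝ) ≤ N := N.cast_nonneg
          linarith
        have h2 : (2 * (N : ℝ) + 1) ≠ 0 := by positivity
        have h3 : (2 * (N : ℝ) + 1 + 1) ≠ 0 := by positivity
        have h4 : ((N : ℝ) + 1) ≠ 0 := by positivity
        rw [show 2 * ((N : ℝ) + 1) - 1 = 2 * N + 1 by ring,
          show 2 * (N : ℝ) + 1 + 1 = 2 * (N + 1) by ring]
        field_simp
        ring
    simp only [e]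
    have h1 := Real.tendsto_harmonic_sub_log
    have h2 := h1.comp (Filter.tendsto_id.const_mul_atTop' (show 0 < 2 by norm_num))
    have h3 := ((h2.sub h1).add_const (Real.log 2)).const_mul 2
    rw [sub_self, zero_add] at h3
    refine h3.congr' ?_
    filter_upwards [Filter.eventually_gt_atTop 0] with N hN
    have hN' : (N : ℝ) ≠ 0 := by positivity
    simp only [Function.comp, id]
    push_cast
    rw [Real.log_mul (by norm_num) hN']
    ring
  · intro n
    have h : (0 : ℝ) < 2 * ((n : ℝ) + 1) - 1 := by
      have : (0 : ℝ) ≤ n := n.cast_nonneg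
      linarith
    positivity

/-- Termwise integration of an even power series that converges on `[0, 1]`. -/
lemma hasSum_integral_even {A : ℕ → ℝ} (hA0 : ∀ n, 0 ≤ A n) (hA : Summable A) :
    ContinuousOn (fun x : ℝ => ∑' n, A n * x ^ (2 * n)) (Set.Icc 0 1) ∧
    HasSum (fun n : ℕ => A n / (2 * n + 1)) (∫ x in (0 : ℝ)..1, ∑' n, A n * x ^ (2 * n)) := by
  have hb : ∀ n, ∀ x ∈ Set.Icc (0 : ℝ) 1, ‖A n * x ^ (2 * n)‖ ≤ A n := by
    intro n x hx
    rw [Real.norm_of_nonneg (mul_nonneg (hA0 n) (pow_nonneg hx.1 _))]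
    exact mul_le_of_le_one_right (hA0 n) (pow_le_one₀ hx.1 hx.2)
  refine ⟨continuousOn_tsum (fun n => by fun_prop) hA hb, ?_⟩
  have hsub : Set.uIoc (0 : ℝ) 1 ⊆ Set.Icc 0 1 := by
    rw [Set.uIoc_of_le zero_le_one]; exact Set.Ioc_subset_Icc_self
  have := intervalIntegral.hasSum_integral_of_dominated_convergence (μ := volume) (a := 0) (b := 1)
    (F := fun n x => A n * x ^ (2 * n)) (f := fun x => ∑' n, A n * x ^ (2 * n))
    (fun n _ => A n) (fun n => by fun_prop)
    (fun n => .of_forall fun x hx => hb n x (hsub hx)) (.of_forall fun _ _ => hA)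
    (by simp) (.of_forall fun x hx => (Summable.of_norm_bounded hA
      fun n => hb n x (hsub hx)).hasSum)
  refine this.congr_fun fun n => ?_
  rw [intervalIntegral.integral_const_mul, integral_pow]
  simp
  ring

/-- The passage from the comparison on every circle to the weighted sum: the weight
`n / (2n - 1) = ½ + ½ / (2n - 1)` is the boundary value plus an integral over the radius. -/
lemma weighted_sum {A : ℕ → ℝ} (hA0 : ∀ n, 0 ≤ A n)
    (h : ∀ R : ℝ, 0 < R → R < 1 → ∀ N : ℕ, ∑ n ∈ Finset.range N, A n * R ^ (2 * n)
      ≤ ∑' n : ℕ, (1 / ((n : ℝ) + 1) ^ 2) * R ^ (2 * n)) :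
    (∑' n : ℕ, (((n : ℝ) + 1) / (2 * ((n : ℝ) + 1) - 1)) * A n ≤ 2 * Real.log 2) ∧
    (∑' n : ℕ, (((n : ℝ) + 1) / (2 * ((n : ℝ) + 1) - 1)) * A n = 2 * Real.log 2 → A 0 = 1) := by
  set B : ℕ → ℝ := fun n => 1 / ((n : ℝ) + 1) ^ 2 with hBd
  have hB0 : ∀ n, 0 ≤ B n := fun n => by positivity
  have hB : Summable B := by
    have := (summable_nat_add_iff 1).2 (Real.summable_one_div_nat_pow.2 (show 1 < 2 by norm_num))
    simpa [hBd] using this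
  have hpart : ∀ N, ∑ n ∈ Finset.range N, A n ≤ ∑' n, B n := by
    intro N
    have hlim : Filter.Tendsto (fun s : ℝ => ∑ n ∈ Finset.range N, A n * s ^ (2 * n))
        (nhdsWithin 1 (Set.Iio 1)) (nhds (∑ n ∈ Finset.range N, A n)) := by
      have : Continuous fun s : ℝ => ∑ n ∈ Finset.range N, A n * s ^ (2 * n) := by fun_prop
      have := (this.tendsto 1).mono_left (nhdsWithin_le_nhds (s := Set.Iio 1))
      simpa using this
    refine le_of_tendsto hlim ?_
    filter_upwards [Ioo_mem_nhdsLT (show (0 : ℝ) < 1 by norm_num)] with s hs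
    refine (h s hs.1 hs.2 N).trans ?_
    have hle : ∀ n, B n * s ^ (2 * n) ≤ B n := fun n =>
      mul_le_of_le_one_right (hB0 n) (pow_le_one₀ hs.1.le hs.2.le)
    exact (Summable.of_nonneg_of_le (fun n => mul_nonneg (hB0 n) (pow_nonneg hs.1.le _)) hle
      hB).tsum_le_tsum hle hB
  have hA : Summable A := summable_of_sum_range_le hA0 hpart
  have hAB : ∑' n, A n ≤ ∑' n, B n := Real.tsum_le_of_sum_range_le hA0 hpart
  obtain ⟨ca, ia⟩ := hasSum_integral_even hA0 hA
  obtain ⟨cb, ib⟩ := hasSum_integral_even hB0 hB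
  set a : ℝ → ℝ := fun x => ∑' n, A n * x ^ (2 * n) with ha
  set b : ℝ → ℝ := fun x => ∑' n, B n * x ^ (2 * n) with hb
  have hsplit : ∀ C : ℕ → ℝ, Summable C → ∀ I : ℝ, HasSum (fun n : ℕ => C n / (2 * n + 1)) I →
      HasSum (fun n : ℕ => (((n : ℝ) + 1) / (2 * ((n : ℝ) + 1) - 1)) * C n)
        (1 / 2 * ((∑' n, C n) + I)) := by
    intro C hC I hI
    refine ((hC.hasSum.add hI).mul_left (1 / 2)).congr_fun fun n => ?_
    have h2 : (2 * (n : ℝ) + 1) ≠ 0 := by positivity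
    rw [show 2 * ((n : ℝ) + 1) - 1 = 2 * n + 1 by ring]
    field_simp
    ring
  have hle : ∀ x ∈ Set.Ioc (0 : ℝ) 1, a x ≤ b x := by
    intro x hx
    rcases hx.2.lt_or_eq with hx1 | rfl
    · exact Real.tsum_le_of_sum_range_le (fun n => mul_nonneg (hA0 n) (pow_nonneg hx.1.le _))
        (h x hx.1 hx1)
    · simpa [ha, hb] using hAB
  have hI : ∫ x in (0 : ℝ)..1, a x ≤ ∫ x in (0 : ℝ)..1, b x := by
    refine intervalIntegral.integral_mono_on_of_le_Ioo zero_le_one ?_ ?_ fun x hx =>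
      hle x ⟨hx.1, hx.2.le⟩
    · exact (ca.mono (by rw [Set.uIcc_of_le zero_le_one])).intervalIntegrable
    · exact (cb.mono (by rw [Set.uIcc_of_le zero_le_one])).intervalIntegrable
  have eA := (hsplit A hA _ ia).tsum_eq
  have eB : 1 / 2 * ((∑' n, B n) + ∫ x in (0 : ℝ)..1, b x) = 2 * Real.log 2 :=
    (hsplit B hB _ ib).unique hasSum_log_two
  rw [eA]
  refine ⟨by linarith, fun heq => ?_⟩
  have ha0 : a 0 = A 0 := by
    simp only [ha]
    rw [tsum_eq_single 0 fun n hn => by simp [hn]]; simp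
  have hb0 : b 0 = 1 := by
    simp only [hb]
    rw [tsum_eq_single 0 fun n hn => by simp [hn]]; simp [hBd]
  have h00 : a 0 ≤ b 0 := by
    have hm : ∀ {u : ℝ → ℝ}, ContinuousOn u (Set.Icc 0 1) →
        Filter.Tendsto u (nhdsWithin 0 (Set.Ioc 0 1)) (nhds (u 0)) := fun hu =>
      (hu 0 (by simp)).mono Set.Ioc_subset_Icc_self
    have : (nhdsWithin (0 : ℝ) (Set.Ioc 0 1)).NeBot := by
      rw [nhdsWithin_Ioc_eq_nhdsGT zero_lt_one]; infer_instance
    exact le_of_tendsto_of_tendsto (hm ca) (hm cb) (eventually_mem_nhdsWithin.mono hle)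
  by_contra hne
  have hlt : a 0 < b 0 := lt_of_le_of_ne h00 (by rw [ha0, hb0]; exact hne)
  have := intervalIntegral.integral_lt_integral_of_continuousOn_of_le_of_exists_lt zero_lt_one
    ca cb hle ⟨0, by simp, hlt⟩
  linarith

end

theorem logcoeff_n_over_two_n_sub_one
    (f : ℂ → ℂ) (γ : ℕ → ℂ) (hf : InClassS f) (hγ : IsLogCoeffs f γ) :
    (∑' n : ℕ, (((n : ℝ) + 1) / (2 * ((n : ℝ) + 1) - 1)) * ‖γ (n + 1)‖ ^ 2 ≤ 2 * Real.log 2) ∧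
    (∑' n : ℕ, (((n : ℝ) + 1) / (2 * ((n : ℝ) + 1) - 1)) * ‖γ (n + 1)‖ ^ 2 = 2 * Real.log 2 → IsKoebeRotation f) := by
  obtain ⟨hfa, hinj, h0, h1⟩ := hf
  obtain ⟨g, hg, hg0, hexp, hcoef⟩ := hγ
  set c : ℕ → ℂ := fun n => (n.factorial : ℂ)⁻¹ * iteratedDeriv n g 0 with hcd
  have hc0 : c 0 = 0 := by simp [hcd, hg0]
  have hcn : ∀ n, c (n + 1) = 2 * γ (n + 1) := by
    intro n
    simp only [hcd]
    rw [hcoef (n + 1) (by omega), inv_mul_cancel_left₀]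
    exact_mod_cast (n + 1).factorial_ne_zero
  have hW := weighted_sum (A := fun n => ‖γ (n + 1)‖ ^ 2) (fun n => by positivity) ?_
  · refine ⟨hW.1, fun heq => ?_⟩
    have h1' := hW.2 heq
    refine eqOn_koebe_of_norm (γ := γ 1) hfa hinj h0 h1 hg hg0 hexp ?_ ?_
    · have := hcoef 1 le_rfl
      simpa using this
    · exact (pow_eq_one_iff_of_nonneg (norm_nonneg _) two_ne_zero).1 h1'
  · intro R hR hR1 N
    have key := coeff_sum_le hfa hinj h0 h1 hg hg0 hexp (c := c)
      (fun z hz => hasSum_taylor hg hz) hR hR1 (N + 1)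
    have hsum : Summable fun n : ℕ => ‖(2 / n : ℂ)‖ ^ 2 * R ^ (2 * n) :=
      (parseval hR.le (a := fun n : ℕ => (2 / n : ℂ)) (p := fun z => -2 * Complex.log (1 - z))
        (fun z hz => koebe_series (by rw [hz]; exact hR1))).summable
    rw [hsum.tsum_eq_zero_add, Finset.sum_range_succ', hc0] at key
    have e1 : ∀ n : ℕ, ‖(2 / ((n + 1 : ℕ) : ℂ))‖ ^ 2 * R ^ (2 * (n + 1))
        = (4 * R ^ 2) * ((1 / ((n : ℝ) + 1) ^ 2) * R ^ (2 * n)) := by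
      intro n
      rw [norm_div, Complex.norm_natCast]
      have h4 : ((n : ℝ) + 1) ≠ 0 := by positivity
      push_cast
      simp only [Complex.norm_ofNat]
      field_simp
      ring
    have e2 : ∀ n : ℕ, ‖c (n + 1)‖ ^ 2 * R ^ (2 * (n + 1))
        = (4 * R ^ 2) * (‖γ (n + 1)‖ ^ 2 * R ^ (2 * n)) := by
      intro n
      rw [hcn, norm_mul, Complex.norm_ofNat]
      ring
    simp only [e1, e2, tsum_mul_left, ← Finset.mul_sum] at key
    simp only [norm_zero, Nat.cast_zero, div_zero, ne_eq, OfNat.ofNat_ne_zero, not_false_eq_true,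
      zero_pow, zero_mul, zero_add, add_zero] at key
    exact le_of_mul_le_mul_left key (by positivity)
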